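/- There is an absolute constant C > 0 such that for all n ≥ 3, sup_{x∈ℝ} | P_n( ( log O_n(σ) − M_n log O_n(σ) ) / ( (1/√3) log^{3/2} n ) < x ) − Φ(x) − (3^{3/2}/(24√(2π))) (1 − x²) e^{−x²/2} / √(log n) | ≤ C ( (log log n)/(log n) )^{2/3}. -/

import Mathlib

/-!
The order of a permutation is the least common multiple of its cycle lengths. Build a random set
`A ⊆ {0, …, n-1}` by marking each `m < n` independently with probability `1/(m+1)` (so that `0`
is always marked). The gaps `parts n A` between consecutive elements of `A ∪ {n}` have the law
of the cycle lengths of a uniform random permutation: both follow Cauchy's formula. Hence averages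
over `S_n` of functions of the order are expectations of functions of `(parts n A).lcm`
(`perm_average`). The gain is independence: all estimates are about independent marks.

Write `log lcm(parts) = markSum + disc - excess`, where `markSum = ∑ log m` over the marks.

* `markSum` is a sum of independent variables with variance about `(log n)³ / 3` and third cumulant
  about `(log n)⁴ / 4`. Its characteristic function is a product, which is compared with
  `exp(-s²/2) (1 - iρs³)`, `ρ = √3 / (8 √(log n))`, for small `s` (`psi_small`) and shown to
  decay in the intermediate range (`psi_mid`). A smoothing inequality with a Gaussian kernel of width
  `(log n)^{-2/3}` (`smoothing`) turns this into the Edgeworth expansion with error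
  `O((log n)^{-2/3})` (`markSum_expansion`). The correction `ρ (1 - x²) φ(x)` is the second term in
  the theorem, since `3^{3/2} / 24 = √3 / 8`.

* `disc` collects the replacement of the gaps by the marks and the loss of the repeated prime powers
  up to `Q ≈ (log n)³`. One mark changes only the two gaps next to it, so the Efron–Stein
  inequality, together with a weak form of Mertens' theorem for the prime powers, bounds its
  variance by `O(log n (log log n)²)` (`variance_disc_le`).

* `excess` is the loss of the repeated prime powers above `Q`. It is nonnegative, and its mean is
  bounded, because `q` divides two different gaps with probability `O((log n)² / q²)`
  (`EE_excess_le`).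

With `η = (log log n / log n)^{2/3}` and `B = (log n)^{3/2} / √3`, the errors `disc` (centred) and
`excess` exceed `η B` with probability `O(η)`, by the inequalities of Chebyshev and Markov. The
exponent `2/3` is the one that balances `Var(disc) / (η B)²` against `η`. As the approximating function is
Lipschitz, the expansion passes from `markSum` to the order (`compare_dist`,
`order_expansion_large`). For bounded `n` the claim holds once the constant is large enough,
because `log log 3 > 0`.
-/

open scoped BigOperators

/-- The standard normal distribution function `Φ`. -/
noncomputable def stdNormalCDF (x : ℝ) : ℝ :=
  (Real.sqrt (2 * Real.pi))⁻¹ * ∫ u in Set.Iic x, Real.exp (-u ^ 2 / 2)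

namespace ErdosTuran

open Finset

/-! ### Independent marks -/

/-- The probability of the set `A ⊆ {0, …, n-1}` when each `m < n` is put into the set
independently with probability `1 / (m + 1)`; in particular `0` always belongs to it. -/
noncomputable def wt (n : ℕ) (A : Finset ℕ) : ℝ :=
  ∏ m ∈ range n, if m ∈ A then 1 / ((m : ℝ) + 1) else (m : ℝ) / ((m : ℝ) + 1)

/-- The expectation of `f A` for the random set `A` with law `wt n`. -/
noncomputable def EE (n : ℕ) (f : Finset ℕ → ℝ) : ℝ :=
  ∑ A ∈ (range n).powerset, wt n A * f A

lemma wt_nonneg (n : ℕ) (A : Finset ℕ) : 0 ≤ wt n A := by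
  unfold wt
  refine prod_nonneg fun m _ => ?_
  split_ifs <;> positivity

/-- Disclosing the topmost mark, for functions with values in any real vector space. -/
lemma sum_wt_succ {E : Type*} [AddCommGroup E] [Module ℝ E] (n : ℕ) (f : Finset ℕ → E) :
    ∑ A ∈ (range (n + 1)).powerset, wt (n + 1) A • f A =
      ((n : ℝ) / (n + 1)) • ∑ A ∈ (range n).powerset, wt n A • f A +
      (1 / ((n : ℝ) + 1)) • ∑ A ∈ (range n).powerset, wt n A • f (insert n A) := by
  have hn : n ∉ range n := by simp
  rw [range_add_one, sum_powerset_insert hn, smul_sum, smul_sum]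
  congr 1
  · refine sum_congr rfl fun A hA => ?_
    have hA' : n ∉ A := fun h => hn (mem_powerset.1 hA h)
    rw [smul_smul]
    congr 1
    unfold wt
    rw [range_add_one, prod_insert hn, if_neg hA']
  · refine sum_congr rfl fun A hA => ?_
    rw [smul_smul]
    congr 1
    unfold wt
    rw [range_add_one, prod_insert hn, if_pos (mem_insert_self _ _)]
    congr 1
    refine prod_congr rfl fun m hm => ?_
    have : m ≠ n := by rintro rfl; exact hn hm
    simp [this]

lemma EE_zero (f : Finset ℕ → ℝ) : EE 0 f = f ∅ := by simp [EE, wt]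

lemma EE_succ (n : ℕ) (f : Finset ℕ → ℝ) :
    EE (n + 1) f = (n : ℝ) / (n + 1) * EE n f +
      1 / ((n : ℝ) + 1) * EE n (fun A => f (insert n A)) := by
  simpa [EE] using sum_wt_succ n f

lemma EE_congr {n : ℕ} {f g : Finset ℕ → ℝ} (h : ∀ A ⊆ range n, f A = g A) :
    EE n f = EE n g :=
  sum_congr rfl fun A hA => by rw [h A (mem_powerset.1 hA)]

lemma EE_mono {n : ℕ} {f g : Finset ℕ → ℝ} (h : ∀ A ⊆ range n, f A ≤ g A) :
    EE n f ≤ EE n g :=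
  sum_le_sum fun A hA => mul_le_mul_of_nonneg_left (h A (mem_powerset.1 hA)) (wt_nonneg _ _)

lemma EE_add (n : ℕ) (f g : Finset ℕ → ℝ) :
    EE n (fun A => f A + g A) = EE n f + EE n g := by
  simp [EE, mul_add, sum_add_distrib]

lemma EE_sub (n : ℕ) (f g : Finset ℕ → ℝ) :
    EE n (fun A => f A - g A) = EE n f - EE n g := by
  simp [EE, mul_sub, sum_sub_distrib]

lemma EE_const_mul (n : ℕ) (c : ℝ) (f : Finset ℕ → ℝ) :
    EE n (fun A => c * f A) = c * EE n f := by
  simp only [EE, mul_sum]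
  exact sum_congr rfl fun A _ => by ring

lemma EE_sum {ι : Type*} (n : ℕ) (s : Finset ι) (f : ι → Finset ℕ → ℝ) :
    EE n (fun A => ∑ i ∈ s, f i A) = ∑ i ∈ s, EE n (f i) := by
  simp only [EE, mul_sum]
  exact sum_comm

lemma EE_const (n : ℕ) (c : ℝ) : EE n (fun _ => c) = c := by
  induction n with
  | zero => simp [EE_zero]
  | succ n ih =>
    rw [EE_succ, ih]
    field_simp

lemma sum_wt (n : ℕ) : ∑ A ∈ (range n).powerset, wt n A = 1 := by
  simpa [EE] using EE_const n 1

lemma EE_nonneg {n : ℕ} {f : Finset ℕ → ℝ} (h : ∀ A ⊆ range n, 0 ≤ f A) : 0 ≤ EE n f := by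
  have := EE_mono (n := n) (f := fun _ => 0) h
  rwa [EE_const] at this

/-- Conditioning on the largest mark, which is uniform on `{0, …, n-1}`. -/
lemma mul_EE_eq_sum (n : ℕ) (f : Finset ℕ → ℝ) :
    (n : ℝ) * EE n f = ∑ a ∈ range n, EE a (fun A => f (insert a A)) := by
  induction n with
  | zero => simp
  | succ n ih =>
    rw [sum_range_succ, ← ih, EE_succ]
    push_cast
    field_simp

lemma sq_EE_le (n : ℕ) (f : Finset ℕ → ℝ) : EE n f ^ 2 ≤ EE n (fun A => f A ^ 2) := by
  have h := EE_nonneg (n := n) (f := fun A => (f A - EE n f) ^ 2) fun _ _ => sq_nonneg _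
  have h2 : EE n (fun A => (f A - EE n f) ^ 2) = EE n (fun A => f A ^ 2) - EE n f ^ 2 := by
    have : (fun A => (f A - EE n f) ^ 2) =
        fun A => f A ^ 2 - (2 * EE n f * f A - EE n f ^ 2) := by
      funext A; ring
    rw [this, EE_sub, EE_sub, EE_const_mul, EE_const]
    ring
  linarith

/-- The Efron–Stein inequality for independent marks. -/
lemma efron_stein (n : ℕ) (f : Finset ℕ → ℝ) :
    EE n (fun A => f A ^ 2) - EE n f ^ 2 ≤
      ∑ m ∈ range n, (m : ℝ) / ((m : ℝ) + 1) ^ 2 *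
        EE n (fun A => (f (insert m A) - f (A.erase m)) ^ 2) := by
  induction n generalizing f with
  | zero => simp [EE_zero]
  | succ n ih =>
    have h0 := ih f
    have h1 := ih (fun A => f (insert n A))
    have hn : (0 : ℝ) < (n : ℝ) + 1 := by positivity
    rw [sum_range_succ]
    have hlast : EE (n + 1) (fun A => (f (insert n A) - f (A.erase n)) ^ 2) =
        EE n (fun A => (f (insert n A) - f A) ^ 2) := by
      rw [EE_succ]
      have e1 : EE n (fun A => (f (insert n A) - f (A.erase n)) ^ 2) =
          EE n (fun A => (f (insert n A) - f A) ^ 2) := by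
        refine EE_congr fun A hA => ?_
        have : n ∉ A := fun h => by simpa using hA h
        rw [erase_eq_of_notMem this]
      have e2 : EE n (fun A => (f (insert n (insert n A)) - f ((insert n A).erase n)) ^ 2) =
          EE n (fun A => (f (insert n A) - f A) ^ 2) := by
        refine EE_congr fun A hA => ?_
        have : n ∉ A := fun h => by simpa using hA h
        rw [erase_insert this, insert_idem]
      rw [e1, e2]
      field_simp
    have hterm : ∀ m ∈ range n,
        (m : ℝ) / ((m : ℝ) + 1) ^ 2 *
          EE (n + 1) (fun A => (f (insert m A) - f (A.erase m)) ^ 2) =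
        (n : ℝ) / (n + 1) * ((m : ℝ) / ((m : ℝ) + 1) ^ 2 *
          EE n (fun A => (f (insert m A) - f (A.erase m)) ^ 2)) +
        1 / ((n : ℝ) + 1) * ((m : ℝ) / ((m : ℝ) + 1) ^ 2 *
          EE n (fun A => (f (insert n (insert m A)) - f (insert n (A.erase m))) ^ 2)) := by
      intro m hm
      have hmn : n ≠ m := by rintro rfl; simp at hm
      rw [EE_succ]
      have : (fun A => (f (insert m (insert n A)) - f ((insert n A).erase m)) ^ 2) =
          fun A => (f (insert n (insert m A)) - f (insert n (A.erase m))) ^ 2 := by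
        funext A
        rw [Finset.insert_comm, erase_insert_of_ne hmn]
      rw [this]
      ring
    rw [hlast, sum_congr rfl hterm, sum_add_distrib, ← mul_sum, ← mul_sum]
    have hj := sq_EE_le n (fun A => f (insert n A) - f A)
    rw [EE_sub] at hj
    rw [EE_succ, EE_succ]
    set a := EE n f
    set b := EE n (fun A => f (insert n A))
    have key : (n : ℝ) / (n + 1) * EE n (fun A => f A ^ 2) +
          1 / ((n : ℝ) + 1) * EE n (fun A => f (insert n A) ^ 2) -
          ((n : ℝ) / (n + 1) * a + 1 / ((n : ℝ) + 1) * b) ^ 2 =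
        (n : ℝ) / (n + 1) * (EE n (fun A => f A ^ 2) - a ^ 2) +
        1 / ((n : ℝ) + 1) * (EE n (fun A => f (insert n A) ^ 2) - b ^ 2) +
        (n : ℝ) / ((n : ℝ) + 1) ^ 2 * (b - a) ^ 2 := by
      field_simp
      ring
    rw [key]
    gcongr

end ErdosTuran

namespace ErdosTuran
open Finset

/-! ### Gaps between marks -/

/-- The largest element of `A` below `m`; it is `0` if there is none. -/
def prev (A : Finset ℕ) (m : ℕ) : ℕ := (A.filter (· < m)).sup id

/-- The smallest element above `m` of `A ∪ {n}`. -/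
noncomputable def nxt (n : ℕ) (A : Finset ℕ) (m : ℕ) : ℕ := sInf {b | m < b ∧ (b ∈ A ∨ b = n)}

lemma prev_lt {A : Finset ℕ} {m : ℕ} (hm : 0 < m) : prev A m < m := by
  unfold prev
  rw [Finset.sup_lt_iff hm]
  intro b hb
  exact (mem_filter.1 hb).2

lemma le_prev {A : Finset ℕ} {m x : ℕ} (hx : x ∈ A) (hxm : x < m) : x ≤ prev A m :=
  le_sup (f := id) (mem_filter.2 ⟨hx, hxm⟩)

lemma prev_mem (A : Finset ℕ) (m : ℕ) : prev A m ∈ A ∨ prev A m = 0 := by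
  unfold prev
  rcases (A.filter (· < m)).eq_empty_or_nonempty with h | h
  · right; simp [h]
  · left
    obtain ⟨x, hx, hx2⟩ := exists_mem_eq_sup _ h id
    rw [hx2]
    exact (mem_filter.1 hx).1

lemma prev_eq {A : Finset ℕ} {m a : ℕ} (ha : a ∈ A ∨ a = 0) (ham : a < m)
    (h : ∀ x ∈ A, x < m → x ≤ a) : prev A m = a := by
  apply le_antisymm
  · refine Finset.sup_le fun x hx => ?_
    exact h x (mem_filter.1 hx).1 (mem_filter.1 hx).2
  · rcases ha with ha | rfl
    · exact le_prev ha ham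
    · exact Nat.zero_le _

lemma prev_insert_of_subset {A : Finset ℕ} {a m : ℕ} (hA : A ⊆ range a) (ham : a < m) :
    prev (insert a A) m = a := by
  refine prev_eq (Or.inl (mem_insert_self _ _)) ham fun x hx _ => ?_
  rcases mem_insert.1 hx with rfl | hx
  · exact le_rfl
  · exact (mem_range.1 (hA hx)).le

/-- `prev A m` depends only on the elements of `A` below `m`. -/
lemma prev_insert_of_le {A : Finset ℕ} {c m : ℕ} (h : m ≤ c) : prev (insert c A) m = prev A m := by
  unfold prev
  rw [filter_insert, if_neg (by omega)]

lemma nxt_mem {n : ℕ} {A : Finset ℕ} {m : ℕ} (hmn : m < n) :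
    m < nxt n A m ∧ (nxt n A m ∈ A ∨ nxt n A m = n) :=
  Nat.sInf_mem (s := {b | m < b ∧ (b ∈ A ∨ b = n)}) ⟨n, hmn, Or.inr rfl⟩

lemma nxt_le {n : ℕ} {A : Finset ℕ} {m b : ℕ} (h : m < b) (hb : b ∈ A ∨ b = n) :
    nxt n A m ≤ b := Nat.sInf_le ⟨h, hb⟩

lemma nxt_eq {n : ℕ} {A : Finset ℕ} {m b : ℕ} (h : m < b) (hb : b ∈ A ∨ b = n)
    (h' : ∀ x, m < x → (x ∈ A ∨ x = n) → b ≤ x) : nxt n A m = b := by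
  apply le_antisymm (nxt_le h hb)
  have hmem := Nat.sInf_mem (s := {b | m < b ∧ (b ∈ A ∨ b = n)}) ⟨b, h, hb⟩
  exact h' _ hmem.1 hmem.2

lemma nxt_succ_insert {n : ℕ} {A : Finset ℕ} {m : ℕ} (hmn : m < n) :
    nxt (n + 1) (insert n A) m = nxt n A m := by
  obtain ⟨h1, h2⟩ := nxt_mem (A := A) hmn
  have h3 : nxt n A m ≤ n := nxt_le hmn (Or.inr rfl)
  refine nxt_eq h1 (Or.inl (mem_insert.2 h2.symm)) ?_
  intro x hx hx2
  rcases hx2 with hx2 | hx2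
  · exact nxt_le hx (mem_insert.1 hx2).symm
  · omega

lemma nxt_succ {n : ℕ} {A : Finset ℕ} {m : ℕ} (hA : A ⊆ range n) (hmn : m < n) :
    nxt (n + 1) A m = if nxt n A m = n then n + 1 else nxt n A m := by
  obtain ⟨h1, h2⟩ := nxt_mem (A := A) hmn
  have h3 : nxt n A m ≤ n := nxt_le hmn (Or.inr rfl)
  split_ifs with h
  · refine nxt_eq (by omega) (Or.inr rfl) ?_
    intro x hx hx2
    rcases hx2 with hx2 | hx2
    · have := nxt_le (n := n) hx (Or.inl hx2)
      have := mem_range.1 (hA hx2)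
      omega
    · omega
  · refine nxt_eq h1 (Or.inl (h2.resolve_right h)) ?_
    intro x hx hx2
    rcases hx2 with hx2 | hx2
    · exact nxt_le hx (Or.inl hx2)
    · omega

lemma EE_prev {m : ℕ} (hm : 0 < m) (φ : ℕ → ℝ) :
    EE m (fun A => φ (prev A m)) = (1 / (m : ℝ)) * ∑ a ∈ range m, φ a := by
  have hm' : (m : ℝ) ≠ 0 := by positivity
  have h := mul_EE_eq_sum m (fun A => φ (prev A m))
  have h2 : ∑ a ∈ range m, EE a (fun A => φ (prev (insert a A) m)) = ∑ a ∈ range m, φ a := by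
    refine sum_congr rfl fun a ha => ?_
    rw [EE_congr (g := fun _ => φ a), EE_const]
    intro A hA
    rw [prev_insert_of_subset hA (mem_range.1 ha)]
  rw [h2] at h
  rw [← h]
  field_simp

/-- The joint law of the marks next to the position `m`, on its two sides. -/
lemma EE_prev_nxt {m n : ℕ} (hm : 0 < m) (hmn : m < n) (φ : ℕ → ℕ → ℝ) :
    EE n (fun A => φ (prev A m) (nxt n A m)) =
      (1 / (m : ℝ)) * ∑ a ∈ range m,
        (∑ b ∈ Ioo m n, ((m : ℝ) + 1) / ((b : ℝ) * ((b : ℝ) + 1)) * φ a b +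
          ((m : ℝ) + 1) / n * φ a n) := by
  induction n, (Nat.succ_le_of_lt hmn) using Nat.le_induction generalizing φ with
  | base =>
    have hI : Ioo m (m + 1) = ∅ := by ext x; simp
    simp only [Nat.succ_eq_add_one, hI, sum_empty, zero_add, Nat.cast_add, Nat.cast_one]
    have hm1 : ((m : ℝ) + 1) ≠ 0 := by positivity
    simp only [div_self hm1, one_mul]
    rw [← EE_prev hm (fun a => φ a (m + 1)), EE_succ]
    have e1 : EE m (fun A => φ (prev A m) (nxt (m + 1) A m)) =
        EE m (fun A => φ (prev A m) (m + 1)) := by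
      refine EE_congr fun A hA => ?_
      rw [nxt_eq (by omega) (Or.inr rfl)]
      intro x hx hx2
      omega
    have e2 : EE m (fun A => φ (prev (insert m A) m) (nxt (m + 1) (insert m A) m)) =
        EE m (fun A => φ (prev A m) (m + 1)) := by
      refine EE_congr fun A hA => ?_
      rw [nxt_eq (by omega) (Or.inr rfl), prev_insert_of_le le_rfl]
      intro x hx hx2
      omega
    rw [e1, e2]
    field_simp
  | succ n hn ih =>
    have hmn' : m < n := hn
    have hn0 : (0 : ℝ) < n := by exact_mod_cast (by omega : 0 < n)
    have hI : Ioo m (n + 1) = insert n (Ioo m n) := by ext x; simp; omega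
    rw [EE_succ]
    have e1 : EE n (fun A => φ (prev A m) (nxt (n + 1) A m)) =
        EE n (fun A => (fun a b => φ a (if b = n then n + 1 else b)) (prev A m) (nxt n A m)) := by
      refine EE_congr fun A hA => ?_
      rw [nxt_succ hA hmn']
    have e2 : EE n (fun A => φ (prev (insert n A) m) (nxt (n + 1) (insert n A) m)) =
        EE n (fun A => φ (prev A m) (nxt n A m)) := by
      refine EE_congr fun A hA => ?_
      rw [nxt_succ_insert hmn', prev_insert_of_le hmn'.le]
    rw [e1, e2, ih hmn' (fun a b => φ a (if b = n then n + 1 else b)), ih hmn' φ]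
    simp only [if_true]
    rw [← mul_assoc, ← mul_assoc, mul_comm _ (1 / (m : ℝ)), mul_comm _ (1 / (m : ℝ)), mul_assoc,
      mul_assoc, ← mul_add, mul_sum, mul_sum, ← sum_add_distrib]
    congr 1
    refine sum_congr rfl fun a _ => ?_
    have e3 : ∑ b ∈ Ioo m n, ((m : ℝ) + 1) / ((b : ℝ) * ((b : ℝ) + 1)) *
          φ a (if b = n then n + 1 else b) =
        ∑ b ∈ Ioo m n, ((m : ℝ) + 1) / ((b : ℝ) * ((b : ℝ) + 1)) * φ a b := by
      refine sum_congr rfl fun b hb => ?_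
      rw [if_neg (by have := mem_Ioo.1 hb; omega)]
    rw [e3, hI, sum_insert (by simp)]
    push_cast
    field_simp
    ring

/-- The multiset of gaps between consecutive elements of `A ∪ {0, n}`, for `A ⊆ {0, …, n-1}`. -/
def parts (n : ℕ) (A : Finset ℕ) : Multiset ℕ :=
  if n = 0 then 0 else (insert n (A.erase 0)).val.map (fun b => b - prev A b)

lemma parts_insert {n a : ℕ} {A : Finset ℕ} (ha : a < n) (hA : A ⊆ range a) :
    parts n (insert a A) = (n - a) ::ₘ parts a A := by
  have hn : n ≠ 0 := by omega
  have hnA : n ∉ (insert a A).erase 0 := by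
    intro h
    rcases mem_insert.1 (mem_of_mem_erase h) with h | h
    · omega
    · have := mem_range.1 (hA h); omega
  unfold parts
  rw [if_neg hn, insert_val_of_notMem hnA, Multiset.map_cons, prev_insert_of_subset hA ha]
  congr 1
  split_ifs with h0
  · subst h0
    have : A = ∅ := by simpa using hA
    subst this
    simp
  · rw [erase_insert_of_ne h0]
    refine Multiset.map_congr rfl fun b hb => ?_
    have : b ≤ a := by
      rcases mem_insert.1 hb with h | h
      · omega
      · exact (mem_range.1 (hA (mem_of_mem_erase h))).le
    rw [prev_insert_of_le this]

/-- The law of the gaps, by conditioning on the largest mark. -/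
lemma mul_EE_parts (n : ℕ) (G : Multiset ℕ → ℝ) :
    (n : ℝ) * EE n (fun A => G (parts n A)) =
      ∑ a ∈ range n, EE a (fun A => G ((n - a) ::ₘ parts a A)) := by
  rw [mul_EE_eq_sum]
  refine sum_congr rfl fun a ha => EE_congr fun A hA => ?_
  rw [parts_insert (mem_range.1 ha) hA]

lemma parts_bounds {n : ℕ} {A : Finset ℕ} (hA : A ⊆ range n) {d : ℕ} (hd : d ∈ parts n A) :
    0 < d ∧ d ≤ n := by
  unfold parts at hd
  split_ifs at hd with h
  · simp at hd
  · obtain ⟨b, hb, rfl⟩ := Multiset.mem_map.1 hd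
    have hb' : 0 < b ∧ b ≤ n := by
      rcases mem_insert.1 hb with rfl | hb
      · omega
      · obtain ⟨h1, h2⟩ := mem_erase.1 hb
        have := mem_range.1 (hA h2)
        omega
    have := prev_lt (A := A) hb'.1
    omega

/-- A new mark at `m` splits the gap around `m` into two. -/
lemma parts_split {n m : ℕ} {A : Finset ℕ} (hA : A ⊆ range n) (hm : 0 < m) (hmn : m < n)
    (hmA : m ∉ A) :
    ∃ rest : Multiset ℕ, parts n A = (nxt n A m - prev A m) ::ₘ rest ∧
      parts n (insert m A) = (m - prev A m) ::ₘ (nxt n A m - m) ::ₘ rest := by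
  obtain ⟨h1, h2⟩ := nxt_mem (A := A) hmn
  have h3 : nxt n A m ≤ n := nxt_le hmn (Or.inr rfl)
  have hmin : ∀ x ∈ A, m < x → nxt n A m ≤ x := fun x hx hmx => nxt_le hmx (Or.inl hx)
  set b := nxt n A m with hb
  set a := prev A m with ha
  have ham : a < m := prev_lt hm
  have hbB : b ∈ insert n (A.erase 0) := by
    rcases h2 with h | h
    · exact mem_insert_of_mem (mem_erase.2 ⟨by omega, h⟩)
    · rw [h]; exact mem_insert_self _ _
  have hmB : m ∉ insert n (A.erase 0) := by
    intro h
    rcases mem_insert.1 h with h | h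
    · omega
    · exact hmA (mem_of_mem_erase h)
  have hn : n ≠ 0 := by omega
  have hpb : prev A b = a := by
    refine prev_eq (prev_mem A m) (by omega) fun x hx hxb => ?_
    rcases lt_trichotomy x m with h | h | h
    · exact le_prev hx h
    · exact absurd (h ▸ hx) hmA
    · have := hmin x hx h; omega
  have hpb' : prev (insert m A) b = m := by
    refine prev_eq (Or.inl (mem_insert_self _ _)) h1 fun x hx hxb => ?_
    rcases mem_insert.1 hx with h | h
    · omega
    · by_contra hc
      have := hmin x h (by omega); omega
  refine ⟨((insert n (A.erase 0)).erase b).val.map (fun c => c - prev A c), ?_, ?_⟩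
  · unfold parts
    rw [if_neg hn]
    conv_lhs => rw [← insert_erase hbB]
    rw [insert_val_of_notMem (notMem_erase _ _), Multiset.map_cons, hpb]
  · unfold parts
    rw [if_neg hn, erase_insert_of_ne (by omega), Finset.insert_comm, insert_val_of_notMem hmB,
      Multiset.map_cons, prev_insert_of_le le_rfl]
    congr 1
    conv_lhs => rw [← insert_erase hbB]
    rw [insert_val_of_notMem (notMem_erase _ _), Multiset.map_cons, hpb']
    congr 1
    refine Multiset.map_congr rfl fun c hc => ?_
    have hc1 : c ≠ b := ne_of_mem_erase hc
    have hc2 := mem_of_mem_erase hc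
    have hcm : c ≠ m := by rintro rfl; exact hmB hc2
    rcases lt_or_gt_of_ne hcm with h | h
    · rw [prev_insert_of_le h.le]
    · have hbc : b < c := by
        rcases mem_insert.1 hc2 with h' | h'
        · omega
        · have := hmin c (mem_of_mem_erase h') h; omega
      have hbA : b ∈ A := by
        rcases h2 with h' | h'
        · exact h'
        · rcases mem_insert.1 hc2 with h'' | h''
          · omega
          · have := mem_range.1 (hA (mem_of_mem_erase h'')); omega
      have hle := le_prev hbA hbc
      have hpm : prev (insert m A) c = prev A c := by
        refine prev_eq ?_ (prev_lt (by omega)) fun x hx hxc => ?_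
        · rcases prev_mem A c with h' | h'
          · exact Or.inl (mem_insert_of_mem h')
          · exact Or.inr h'
        · rcases mem_insert.1 hx with h' | h'
          · omega
          · exact le_prev h' hxc
      rw [hpm]

end ErdosTuran

namespace ErdosTuran
open Finset

/-! ### Gaps between marks are distributed like cycle lengths -/

/-- The order of the centralizer of a permutation with the multiset `μ` of cycle lengths
(fixed points included). -/
def zee (μ : Multiset ℕ) : ℕ := μ.prod * ∏ k ∈ μ.toFinset, (μ.count k).factorial

lemma zee_cons (k : ℕ) (ν : Multiset ℕ) : zee (k ::ₘ ν) = k * (ν.count k + 1) * zee ν := by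
  have h1 : ∏ j ∈ ν.toFinset, (ν.count j).factorial =
      ∏ j ∈ (k ::ₘ ν).toFinset, (ν.count j).factorial := by
    refine prod_subset (by simp) fun j _ hj => ?_
    have : ν.count j = 0 := Multiset.count_eq_zero.2 (by simpa using hj)
    simp [this]
  have h2 : ∏ j ∈ (k ::ₘ ν).toFinset, ((k ::ₘ ν).count j).factorial =
      ∏ j ∈ (k ::ₘ ν).toFinset,
        ((ν.count j).factorial * if j = k then ν.count k + 1 else 1) := by
    refine prod_congr rfl fun j _ => ?_
    rw [Multiset.count_cons]
    split_ifs with h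
    · subst h; rw [Nat.factorial_succ]; ring
    · simp
  unfold zee
  rw [h2, prod_mul_distrib, ← h1, prod_ite_eq', if_pos (by simp), Multiset.prod_cons]
  ring

lemma zee_pos {μ : Multiset ℕ} (h : ∀ k ∈ μ, 0 < k) : 0 < zee μ := by
  unfold zee
  exact Nat.mul_pos (Multiset.prod_pos h) (prod_pos fun k _ => Nat.factorial_pos _)

lemma zee_add_replicate {m : Multiset ℕ} (h1 : 1 ∉ m) (j : ℕ) :
    zee (m + Multiset.replicate j 1) = j.factorial * zee m := by
  induction j with
  | zero => simp
  | succ j ih =>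
    rw [Multiset.replicate_succ, Multiset.add_cons, zee_cons, ih, Nat.factorial_succ]
    simp [Multiset.count_eq_zero.2 h1]
    ring

/-- The probability that the gaps form a given partition. -/
lemma EE_parts_eq (n : ℕ) : ∀ μ : Multiset ℕ, (∀ k ∈ μ, 0 < k) → μ.sum = n →
    EE n (fun A => if parts n A = μ then 1 else 0) = 1 / (zee μ : ℝ) := by
  induction n using Nat.strong_induction_on with
  | _ n ih =>
    intro μ hμ hs
    rcases Nat.eq_zero_or_pos n with rfl | hn
    · have : μ = 0 := by
        by_contra h
        obtain ⟨k, hk⟩ := Multiset.exists_mem_of_ne_zero h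
        have := Multiset.single_le_sum (fun x _ => Nat.zero_le x) k hk
        have := hμ k hk
        omega
      subst this
      simp [EE_zero, parts, zee]
    · have hz : (0 : ℝ) < zee μ := by exact_mod_cast zee_pos hμ
      have hn' : (0 : ℝ) < n := by exact_mod_cast hn
      have key := mul_EE_parts n (fun P => if P = μ then 1 else 0)
      have hterm : ∀ a ∈ range n, EE a (fun A => if (n - a) ::ₘ parts a A = μ then (1 : ℝ) else 0)
          = if (n - a) ∈ μ then ((n - a : ℕ) : ℝ) * μ.count (n - a) / zee μ else 0 := by
        intro a ha
        have ha' := mem_range.1 ha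
        split_ifs with hk
        · have hμe := Multiset.cons_erase hk
          have hpos : ∀ k ∈ μ.erase (n - a), 0 < k := fun k hk' => hμ k (Multiset.mem_of_mem_erase hk')
          have hsum : (μ.erase (n - a)).sum = a := by
            have := congrArg Multiset.sum hμe
            rw [Multiset.sum_cons] at this
            omega
          have h1 := ih a ha' _ hpos hsum
          have h2 : (fun A => if (n - a) ::ₘ parts a A = μ then (1 : ℝ) else 0) =
              fun A => if parts a A = μ.erase (n - a) then 1 else 0 := by
            funext A
            have : (n - a) ::ₘ parts a A = μ ↔ parts a A = μ.erase (n - a) := by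
              rw [← Multiset.cons_inj_right (n - a) (s := parts a A), hμe]
            simp [this]
          rw [h2, h1]
          have h3 : zee μ = (n - a) * μ.count (n - a) * zee (μ.erase (n - a)) := by
            conv_lhs => rw [← hμe]
            rw [zee_cons, Multiset.count_erase_self]
            have := Multiset.count_pos.2 hk
            rw [Nat.sub_add_cancel this]
          have h4 : (0 : ℝ) < zee (μ.erase (n - a)) := by exact_mod_cast zee_pos hpos
          have h5 : (0 : ℝ) < ((n - a : ℕ) : ℝ) := by exact_mod_cast (by omega : 0 < n - a)
          have h6 : (0 : ℝ) < (μ.count (n - a) : ℝ) := by exact_mod_cast Multiset.count_pos.2 hk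
          rw [h3]
          push_cast
          field_simp
        · rw [EE_congr (g := fun _ => 0), EE_const]
          intro A _
          rw [if_neg]
          rintro h
          exact hk (h ▸ Multiset.mem_cons_self _ _)
      rw [sum_congr rfl hterm] at key
      have hsum : ∑ a ∈ range n, (if (n - a) ∈ μ then ((n - a : ℕ) : ℝ) * μ.count (n - a) / zee μ
          else 0) = n / zee μ := by
        rw [← sum_range_reflect]
        have e1 : ∀ j ∈ range n, (if (n - (n - 1 - j)) ∈ μ then
            ((n - (n - 1 - j) : ℕ) : ℝ) * μ.count (n - (n - 1 - j)) / zee μ else 0) =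
            (if (j + 1) ∈ μ then ((j + 1 : ℕ) : ℝ) * μ.count (j + 1) / zee μ else 0) := by
          intro j hj
          have : n - (n - 1 - j) = j + 1 := by have := mem_range.1 hj; omega
          rw [this]
        rw [sum_congr rfl e1,
          Finset.sum_bij_ne_zero (t := μ.toFinset) (g := fun k => (k : ℝ) * μ.count k / zee μ)
            (fun j _ _ => j + 1)]
        · rw [← sum_div, ← hs, Finset.sum_multiset_count]
          push_cast
          congr 1
          refine sum_congr rfl fun k _ => ?_
          simp [mul_comm]
        · intro j hj hne
          by_contra hc
          rw [Multiset.mem_toFinset] at hc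
          simp [hc] at hne
        · intro a _ _ b _ _ h; omega
        · intro k hk _
          have hk' := Multiset.mem_toFinset.1 hk
          have h1 := hμ k hk'
          have h2 := Multiset.single_le_sum (fun x _ => Nat.zero_le x) k hk'
          refine ⟨k - 1, mem_range.2 (by omega), ?_, by omega⟩
          have hk1 : k - 1 + 1 = k := by omega
          rw [hk1, if_pos hk']
          have : 0 < μ.count k := Multiset.count_pos.2 hk'
          positivity
        · intro j hj hne
          have : (j + 1) ∈ μ := by by_contra hc; simp [hc] at hne
          rw [if_pos this]
      rw [hsum] at key
      field_simp at key ⊢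
      linarith

lemma parts_sum {n : ℕ} : ∀ {A : Finset ℕ}, A ⊆ range n → (parts n A).sum = n := by
  induction n using Nat.strong_induction_on with
  | _ n ih =>
    intro A hA
    rcases A.eq_empty_or_nonempty with rfl | hne
    · unfold parts
      split_ifs with h
      · simp [h]
      · simp [prev]
    · have hmem := A.max'_mem hne
      set a := A.max' hne
      have han : a < n := mem_range.1 (hA hmem)
      have hA' : A.erase a ⊆ range a := by
        intro x hx
        have h1 := A.le_max' x (mem_of_mem_erase hx)
        have h2 := ne_of_mem_erase hx
        exact mem_range.2 (lt_of_le_of_ne h1 h2)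
      rw [← insert_erase hmem, parts_insert han hA', Multiset.sum_cons, ih a han hA']
      omega

/-- The cycle lengths of a permutation, fixed points included. -/
def fullType {n : ℕ} (σ : Equiv.Perm (Fin n)) : Multiset ℕ :=
  σ.cycleType + Multiset.replicate (n - σ.cycleType.sum) 1

lemma fullType_spec {n : ℕ} (σ : Equiv.Perm (Fin n)) :
    (∀ k ∈ fullType σ, 0 < k) ∧ (fullType σ).sum = n ∧ (fullType σ).lcm = orderOf σ := by
  have hle : σ.cycleType.sum ≤ n := by
    have := σ.sum_cycleType_le
    simpa using this
  refine ⟨?_, ?_, ?_⟩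
  · intro k hk
    rcases Multiset.mem_add.1 hk with h | h
    · have := Equiv.Perm.two_le_of_mem_cycleType h; omega
    · rw [Multiset.eq_of_mem_replicate h]; exact one_pos
  · simp [fullType, hle]
  · rw [fullType, Multiset.lcm_add, Equiv.Perm.lcm_cycleType]
    have : (Multiset.replicate (n - σ.cycleType.sum) 1).lcm = 1 := by
      have h : (Multiset.replicate (n - σ.cycleType.sum) 1).lcm ∣ 1 :=
        Multiset.lcm_dvd.2 fun b hb => by rw [Multiset.eq_of_mem_replicate hb]
      exact Nat.dvd_one.1 h
    rw [this]
    simp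

lemma card_fullType {n : ℕ} {μ : Multiset ℕ} (hμ : ∀ k ∈ μ, 0 < k) (hs : μ.sum = n) :
    #{σ : Equiv.Perm (Fin n) | fullType σ = μ} * zee μ = n.factorial := by
  set m := μ.filter (2 ≤ ·) with hm
  have hdecomp : μ = m + Multiset.replicate (n - m.sum) 1 := by
    have h1 : μ = m + μ.filter (fun k => ¬ 2 ≤ k) := (Multiset.filter_add_not _ _).symm
    have h2 : μ.filter (fun k => ¬ 2 ≤ k) =
        Multiset.replicate (Multiset.card (μ.filter (fun k => ¬ 2 ≤ k))) 1 := by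
      refine Multiset.eq_replicate_card.2 fun b hb => ?_
      have := hμ b (Multiset.mem_of_mem_filter hb)
      have := Multiset.of_mem_filter hb
      omega
    have h3 : n = m.sum + Multiset.card (μ.filter (fun k => ¬ 2 ≤ k)) := by
      have := congrArg Multiset.sum h1
      rw [Multiset.sum_add, h2, Multiset.sum_replicate, hs] at this
      simpa using this
    have h4 : n - m.sum = Multiset.card (μ.filter (fun k => ¬ 2 ≤ k)) := by omega
    rw [h4, ← h2]
    exact h1
  have h2m : ∀ a ∈ m, 2 ≤ a := fun a ha => Multiset.of_mem_filter ha
  have h1m : 1 ∉ m := fun h => by have := h2m 1 h; omega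
  have hsm : m.sum ≤ n := by
    have := congrArg Multiset.sum hdecomp
    rw [Multiset.sum_add] at this
    omega
  have hset : ({σ : Equiv.Perm (Fin n) | fullType σ = μ} : Finset _) =
      ({σ : Equiv.Perm (Fin n) | σ.cycleType = m} : Finset _) := by
    ext σ
    simp only [mem_filter, mem_univ, true_and]
    constructor
    · intro h
      rw [hm, ← h, fullType, Multiset.filter_add,
        Multiset.filter_eq_self.2 fun _ => Equiv.Perm.two_le_of_mem_cycleType,
        Multiset.filter_eq_nil.2 fun a h => ?_, add_zero]
      rw [Multiset.eq_of_mem_replicate h]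
      decide
    · intro h
      rw [fullType, h, ← hdecomp]
  have hc := Equiv.Perm.card_of_cycleType_mul_eq (Fin n) m
  rw [Fintype.card_fin, if_pos ⟨hsm, h2m⟩] at hc
  rw [hset, ← hc]
  congr 1
  conv_lhs => rw [hdecomp]
  rw [zee_add_replicate h1m, zee]
  ring

/-- The order of a uniformly random permutation is distributed as the least common multiple
of the gaps. -/
lemma perm_average (n : ℕ) (G : ℕ → ℝ) :
    (∑ σ : Equiv.Perm (Fin n), G (orderOf σ)) / (n.factorial : ℝ) =
      EE n (fun A => G (parts n A).lcm) := by
  classical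
  set T : Finset (Multiset ℕ) := (univ : Finset (Nat.Partition n)).image Nat.Partition.parts
  have hT : ∀ μ, μ ∈ T ↔ (∀ k ∈ μ, 0 < k) ∧ μ.sum = n := by
    intro μ
    constructor
    · intro h
      obtain ⟨P, _, rfl⟩ := mem_image.1 h
      exact ⟨fun k hk => P.parts_pos hk, P.parts_sum⟩
    · rintro ⟨h1, h2⟩
      exact mem_image.2 ⟨⟨μ, fun {k} hk => h1 k hk, h2⟩, mem_univ _, rfl⟩
  have hL : ∑ σ : Equiv.Perm (Fin n), G (orderOf σ) =
      ∑ μ ∈ T, (#{σ : Equiv.Perm (Fin n) | fullType σ = μ} : ℝ) * G μ.lcm := by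
    rw [← sum_fiberwise_of_maps_to (s := univ) (t := T) (g := fullType)
      fun σ _ => (hT _).2 ⟨(fullType_spec σ).1, (fullType_spec σ).2.1⟩]
    refine sum_congr rfl fun μ _ => ?_
    rw [← nsmul_eq_mul, ← sum_const]
    refine sum_congr rfl fun σ hσ => ?_
    rw [← (fullType_spec σ).2.2, (mem_filter.1 hσ).2]
  have hR : EE n (fun A => G (parts n A).lcm) =
      ∑ μ ∈ T, EE n (fun A => if parts n A = μ then 1 else 0) * G μ.lcm := by
    have : EE n (fun A => G (parts n A).lcm) =
        EE n (fun A => ∑ μ ∈ T, G μ.lcm * if parts n A = μ then 1 else 0) := by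
      refine EE_congr fun A hA => ?_
      have hmem : parts n A ∈ T := (hT _).2 ⟨fun k hk => (parts_bounds hA hk).1, parts_sum hA⟩
      simp [hmem]
    rw [this, EE_sum]
    refine sum_congr rfl fun μ _ => ?_
    rw [EE_const_mul, mul_comm]
  rw [hL, hR, sum_div]
  refine sum_congr rfl fun μ hμ => ?_
  obtain ⟨h1, h2⟩ := (hT μ).1 hμ
  rw [EE_parts_eq n μ h1 h2]
  have hc := card_fullType h1 h2
  have hz : (0 : ℝ) < zee μ := by exact_mod_cast zee_pos h1
  have hf : (0 : ℝ) < n.factorial := by positivity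
  have hc' : (#{σ : Equiv.Perm (Fin n) | fullType σ = μ} : ℝ) * zee μ = n.factorial := by
    exact_mod_cast hc
  rw [← hc']
  have : (#{σ : Equiv.Perm (Fin n) | fullType σ = μ} : ℝ) ≠ 0 := by
    intro h; rw [h, zero_mul] at hc'; linarith
  field_simp

end ErdosTuran

namespace ErdosTuran
open Finset
open scoped ArithmeticFunction.vonMangoldt

/-! ### Truncated logarithms of integers -/

/-- The part `∑ Λ(q)`, over the divisors `q` of `d` satisfying `P`, of `log d = ∑_{q ∣ d} Λ(q)`. -/
noncomputable def hP (P : ℕ → Prop) [DecidablePred P] (d : ℕ) : ℝ :=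
  ∑ q ∈ d.divisors with P q, Λ q

lemma hP_nonneg (P : ℕ → Prop) [DecidablePred P] (d : ℕ) : 0 ≤ hP P d :=
  sum_nonneg fun _ _ => ArithmeticFunction.vonMangoldt_nonneg

lemma hP_add_not (P : ℕ → Prop) [DecidablePred P] (d : ℕ) :
    hP P d + hP (fun q => ¬ P q) d = Real.log d := by
  rw [← ArithmeticFunction.vonMangoldt_sum, hP, hP, sum_filter_add_sum_filter_not]

lemma hP_le_of_dvd (P : ℕ → Prop) [DecidablePred P] {a b : ℕ} (hb : b ≠ 0) (h : a ∣ b) :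
    hP P a ≤ hP P b :=
  sum_le_sum_of_subset_of_nonneg (filter_subset_filter _ (Nat.divisors_subset_of_dvd hb h))
    fun _ _ _ => ArithmeticFunction.vonMangoldt_nonneg

lemma primePow_dvd_lcm {q a b : ℕ} (hq : IsPrimePow q) (ha : a ≠ 0) (hb : b ≠ 0)
    (h : q ∣ Nat.lcm a b) : q ∣ a ∨ q ∣ b := by
  obtain ⟨p, k, hp, _, rfl⟩ := (isPrimePow_nat_iff _).1 hq
  rw [hp.pow_dvd_iff_le_factorization (Nat.lcm_ne_zero ha hb), Nat.factorization_lcm ha hb] at h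
  rw [hp.pow_dvd_iff_le_factorization ha, hp.pow_dvd_iff_le_factorization hb]
  simpa using h

lemma hP_lcm_le (P : ℕ → Prop) [DecidablePred P] {a b : ℕ} (ha : a ≠ 0) (hb : b ≠ 0) :
    hP P (Nat.lcm a b) ≤ hP P a + hP P b := by
  have h1 : hP P (Nat.lcm a b) ≤ ∑ q ∈ (a.divisors.filter P) ∪ (b.divisors.filter P), Λ q := by
    unfold hP
    rw [← sum_filter_ne_zero]
    refine sum_le_sum_of_subset_of_nonneg (fun q hq' => ?_)
      fun _ _ _ => ArithmeticFunction.vonMangoldt_nonneg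
    obtain ⟨hq, hne⟩ := mem_filter.1 hq'
    obtain ⟨hq1, hq2⟩ := mem_filter.1 hq
    have hpp := ArithmeticFunction.vonMangoldt_ne_zero_iff.1 hne
    rcases primePow_dvd_lcm hpp ha hb (Nat.dvd_of_mem_divisors hq1) with h | h
    · exact mem_union_left _ (mem_filter.2 ⟨Nat.mem_divisors.2 ⟨h, ha⟩, hq2⟩)
    · exact mem_union_right _ (mem_filter.2 ⟨Nat.mem_divisors.2 ⟨h, hb⟩, hq2⟩)
  refine h1.trans ?_
  have := sum_union_inter (s₁ := a.divisors.filter P) (s₂ := b.divisors.filter P)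
    (f := fun q => Λ q)
  have h2 : 0 ≤ ∑ q ∈ (a.divisors.filter P) ∩ (b.divisors.filter P), Λ q :=
    sum_nonneg fun _ _ => ArithmeticFunction.vonMangoldt_nonneg
  unfold hP
  linarith

/-- The contribution to `log d` of the prime powers up to `Q`. -/
noncomputable abbrev h (Q d : ℕ) : ℝ := hP (· ≤ Q) d

lemma h_mul_le (Q : ℕ) {q e : ℕ} (hq : q ≠ 0) (he : e ≠ 0) :
    h Q (q * e) ≤ h Q e + Real.log q := by
  have h1 := hP_add_not (· ≤ Q) (q * e)
  have h2 := hP_add_not (· ≤ Q) e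
  have h3 := hP_le_of_dvd (fun r => ¬ r ≤ Q) (mul_ne_zero hq he) (Dvd.intro_left q rfl : e ∣ q * e)
  rw [Nat.cast_mul, Real.log_mul (by exact_mod_cast hq) (by exact_mod_cast he)] at h1
  unfold h
  linarith

lemma sum_mul_h (Q x : ℕ) (F : ℕ → ℝ) :
    ∑ d ∈ Ioc 0 x, F d * h Q d = ∑ q ∈ Ioc 0 Q, Λ q * ∑ e ∈ Ioc 0 (x / q), F (q * e) := by
  have h1 : ∀ d ∈ Ioc 0 x, F d * h Q d = ∑ q ∈ Ioc 0 Q, Λ q * if q ∣ d then F d else 0 := by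
    intro d hd
    have hd0 : d ≠ 0 := by have := mem_Ioc.1 hd; omega
    have : h Q d = ∑ q ∈ Ioc 0 Q with q ∣ d, Λ q := by
      unfold h hP
      congr 1
      ext q
      simp only [mem_filter, Nat.mem_divisors, mem_Ioc]
      constructor
      · rintro ⟨⟨h1, h2⟩, h3⟩
        exact ⟨⟨Nat.pos_of_dvd_of_pos h1 (Nat.pos_of_ne_zero hd0), h3⟩, h1⟩
      · rintro ⟨⟨h1, h2⟩, h3⟩
        exact ⟨⟨h3, hd0⟩, h2⟩
    rw [this, sum_filter, mul_sum]
    refine sum_congr rfl fun q _ => ?_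
    split_ifs <;> ring
  rw [sum_congr rfl h1, sum_comm]
  refine sum_congr rfl fun q hq => ?_
  have hq0 : 0 < q := (mem_Ioc.1 hq).1
  rw [← mul_sum, ← sum_filter]
  congr 1
  symm
  refine sum_bij (fun e _ => q * e) ?_ ?_ ?_ ?_
  · intro e he
    obtain ⟨h1, h2⟩ := mem_Ioc.1 he
    refine mem_filter.2 ⟨mem_Ioc.2 ⟨Nat.mul_pos hq0 h1, ?_⟩, Dvd.intro _ rfl⟩
    calc q * e ≤ q * (x / q) := Nat.mul_le_mul_left _ h2
      _ ≤ x := Nat.mul_div_le _ _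
  · intro a _ b _ hab
    exact Nat.eq_of_mul_eq_mul_left hq0 hab
  · intro d hd
    obtain ⟨h1, e, rfl⟩ := mem_filter.1 hd
    obtain ⟨h2, h3⟩ := mem_Ioc.1 h1
    refine ⟨e, mem_Ioc.2 ⟨Nat.pos_of_mul_pos_left h2, ?_⟩, rfl⟩
    exact (Nat.le_div_iff_mul_le hq0).2 (by rwa [mul_comm])
  · intro _ _; rfl

/-- A weak form of Mertens' first theorem. -/
lemma mertens (Q : ℕ) (hQ : 1 ≤ Q) : ∑ q ∈ Ioc 0 Q, Λ q / q ≤ 2 * Real.log Q := by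
  have h1 := sum_mul_h Q Q (fun _ => 1)
  have h2 : ∑ d ∈ Ioc 0 Q, 1 * h Q d ≤ Q * Real.log Q := by
    calc ∑ d ∈ Ioc 0 Q, 1 * h Q d ≤ ∑ d ∈ Ioc 0 Q, Real.log Q := by
          refine sum_le_sum fun d hd => ?_
          obtain ⟨hd1, hd2⟩ := mem_Ioc.1 hd
          have := hP_add_not (· ≤ Q) d
          have := hP_nonneg (fun q => ¬ q ≤ Q) d
          have : Real.log d ≤ Real.log Q :=
            Real.log_le_log (by exact_mod_cast hd1) (by exact_mod_cast hd2)
          rw [one_mul]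
          linarith
      _ = Q * Real.log Q := by simp
  have hQ' : (0 : ℝ) < Q := by exact_mod_cast hQ
  have h3 : Q / 2 * ∑ q ∈ Ioc 0 Q, Λ q / q ≤
      ∑ q ∈ Ioc 0 Q, Λ q * ∑ e ∈ Ioc 0 (Q / q), (1 : ℝ) := by
    rw [mul_sum]
    refine sum_le_sum fun q hq => ?_
    obtain ⟨hq1, hq2⟩ := mem_Ioc.1 hq
    have hq' : (0 : ℝ) < q := by exact_mod_cast hq1
    have h4 : (Q : ℝ) / (2 * q) ≤ ((Q / q : ℕ) : ℝ) := by
      rw [div_le_iff₀ (by positivity)]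
      have h5 : Q < q * (Q / q + 1) := Nat.lt_mul_div_succ Q hq1
      have h6 : 1 ≤ Q / q := (Nat.one_le_div_iff hq1).2 hq2
      have h7 : Q ≤ (Q / q) * (2 * q) := by nlinarith
      exact_mod_cast h7
    have h8 : (0 : ℝ) ≤ Λ q := ArithmeticFunction.vonMangoldt_nonneg
    simp only [sum_const, Nat.card_Ioc, tsub_zero, nsmul_eq_mul, mul_one]
    calc (Q : ℝ) / 2 * (Λ q / q) = Λ q * (Q / (2 * q)) := by field_simp
      _ ≤ _ := mul_le_mul_of_nonneg_left h4 h8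
  have h9 : Q / 2 * ∑ q ∈ Ioc 0 Q, Λ q / q ≤ Q * Real.log Q := by linarith
  have : (Q : ℝ) / 2 * ∑ q ∈ Ioc 0 Q, Λ q / q ≤ Q / 2 * (2 * Real.log Q) := by linarith
  exact le_of_mul_le_mul_left this (by positivity)

/-- The mean square of the truncated logarithm. -/
lemma sum_h_sq_le (Q : ℕ) (hQ : 1 ≤ Q) (x : ℕ) :
    ∑ d ∈ Ioc 0 x, h Q d ^ 2 ≤ 6 * Real.log Q ^ 2 * x := by
  have hM := mertens Q hQ
  have hlog : 0 ≤ Real.log Q := Real.log_nonneg (by exact_mod_cast hQ)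
  have hdiv : ∀ q y : ℕ, ((y / q : ℕ) : ℝ) ≤ y / q := fun q y => Nat.cast_div_le
  have hL : ∀ q : ℕ, (0 : ℝ) ≤ Λ q := fun q => ArithmeticFunction.vonMangoldt_nonneg
  have first : ∀ y : ℕ, ∑ d ∈ Ioc 0 y, h Q d ≤ y * (2 * Real.log Q) := by
    intro y
    have h1 := sum_mul_h Q y (fun _ => 1)
    simp only [one_mul, sum_const, Nat.card_Ioc, tsub_zero, nsmul_eq_mul, mul_one] at h1
    rw [h1]
    calc ∑ q ∈ Ioc 0 Q, Λ q * ((y / q : ℕ) : ℝ) ≤ ∑ q ∈ Ioc 0 Q, y * (Λ q / q) := by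
          refine sum_le_sum fun q _ => ?_
          calc Λ q * ((y / q : ℕ) : ℝ) ≤ Λ q * (y / q) :=
                mul_le_mul_of_nonneg_left (hdiv _ _) (hL q)
            _ = _ := by ring
      _ ≤ _ := by rw [← mul_sum]; gcongr
  have h1 := sum_mul_h Q x (fun d => h Q d)
  have h2 : ∑ d ∈ Ioc 0 x, h Q d ^ 2 = ∑ d ∈ Ioc 0 x, h Q d * h Q d :=
    sum_congr rfl fun _ _ => sq _
  rw [h2, h1]
  calc ∑ q ∈ Ioc 0 Q, Λ q * ∑ e ∈ Ioc 0 (x / q), h Q (q * e)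
      ≤ ∑ q ∈ Ioc 0 Q, (3 * Real.log Q * x) * (Λ q / q) := by
        refine sum_le_sum fun q hq => ?_
        obtain ⟨hq1, hq2⟩ := mem_Ioc.1 hq
        have hq' : (0 : ℝ) < q := by exact_mod_cast hq1
        have h3 : ∑ e ∈ Ioc 0 (x / q), h Q (q * e) ≤ ((x / q : ℕ) : ℝ) * (3 * Real.log Q) := by
          calc ∑ e ∈ Ioc 0 (x / q), h Q (q * e)
              ≤ ∑ e ∈ Ioc 0 (x / q), (h Q e + Real.log Q) := by
                refine sum_le_sum fun e he => ?_
                have he0 : e ≠ 0 := by have := mem_Ioc.1 he; omega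
                have := h_mul_le Q (by omega : q ≠ 0) he0
                have : Real.log q ≤ Real.log Q :=
                  Real.log_le_log hq' (by exact_mod_cast hq2)
                linarith
            _ = ∑ e ∈ Ioc 0 (x / q), h Q e + ((x / q : ℕ) : ℝ) * Real.log Q := by
                rw [sum_add_distrib]; simp
            _ ≤ _ := by have := first (x / q); linarith
        calc Λ q * ∑ e ∈ Ioc 0 (x / q), h Q (q * e)
            ≤ Λ q * ((x / q) * (3 * Real.log Q)) := by
              refine mul_le_mul_of_nonneg_left (h3.trans ?_) (hL q)
              gcongr
              exact hdiv _ _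
          _ = _ := by ring
    _ = (3 * Real.log Q * x) * ∑ q ∈ Ioc 0 Q, Λ q / q := by rw [mul_sum]
    _ ≤ (3 * Real.log Q * x) * (2 * Real.log Q) := by gcongr
    _ = _ := by ring

lemma sum_log_sq_le (m : ℕ) :
    ∑ d ∈ Ioc 0 m, Real.log ((m : ℝ) / d) ^ 2 ≤ 32 * m := by
  have hsq : ∀ k : ℕ, ∑ d ∈ Ioc 0 k, 1 / Real.sqrt d ≤ 2 * Real.sqrt k := by
    intro k
    induction k with
    | zero => simp
    | succ k ih =>
      have hI : Ioc 0 (k + 1) = insert (k + 1) (Ioc 0 k) := by ext x; simp; omega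
      rw [hI, sum_insert (by simp)]
      have h1 : 0 < Real.sqrt ((k + 1 : ℕ) : ℝ) := Real.sqrt_pos.2 (by positivity)
      have h2 : 0 ≤ Real.sqrt (k : ℝ) := Real.sqrt_nonneg _
      have h3 : Real.sqrt ((k + 1 : ℕ) : ℝ) ^ 2 = k + 1 := by
        rw [Real.sq_sqrt (by positivity)]; push_cast; ring
      have h4 : Real.sqrt (k : ℝ) ^ 2 = k := Real.sq_sqrt (by positivity)
      have h5 : 1 / Real.sqrt ((k + 1 : ℕ) : ℝ) ≤
          2 * (Real.sqrt ((k + 1 : ℕ) : ℝ) - Real.sqrt (k : ℝ)) := by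
        rw [div_le_iff₀ h1]
        nlinarith [sq_nonneg (Real.sqrt ((k + 1 : ℕ) : ℝ) - Real.sqrt (k : ℝ))]
      linarith
  have hlog : ∀ y : ℝ, 1 ≤ y → Real.log y ^ 2 ≤ 16 * Real.sqrt y := by
    intro y hy
    set z := Real.sqrt (Real.sqrt y) with hz
    have hz0 : 0 < z := Real.sqrt_pos.2 (Real.sqrt_pos.2 (by linarith))
    have hz2 : z ^ 2 = Real.sqrt y := Real.sq_sqrt (Real.sqrt_nonneg _)
    have hz4 : y = z ^ 4 := by
      have : z ^ 4 = (z ^ 2) ^ 2 := by ring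
      rw [this, hz2, Real.sq_sqrt (by linarith)]
    have h1 : Real.log y = 4 * Real.log z := by
      rw [hz4, Real.log_pow]; norm_num
    have h2 : Real.log z ≤ z := (Real.log_le_sub_one_of_pos hz0).trans (by linarith)
    have h3 : 0 ≤ Real.log y := Real.log_nonneg hy
    rw [← hz2]
    nlinarith
  have hm : Real.sqrt (m : ℝ) ^ 2 = m := Real.sq_sqrt (by positivity)
  calc ∑ d ∈ Ioc 0 m, Real.log ((m : ℝ) / d) ^ 2
      ≤ ∑ d ∈ Ioc 0 m, 16 * Real.sqrt m * (1 / Real.sqrt d) := by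
        refine sum_le_sum fun d hd => ?_
        obtain ⟨h1, h2⟩ := mem_Ioc.1 hd
        have hd' : (0 : ℝ) < d := by exact_mod_cast h1
        have := hlog ((m : ℝ) / d) ((one_le_div hd').2 (by exact_mod_cast h2))
        rw [Real.sqrt_div (by positivity)] at this
        calc _ ≤ _ := this
          _ = _ := by ring
    _ = 16 * Real.sqrt m * ∑ d ∈ Ioc 0 m, 1 / Real.sqrt d := by rw [mul_sum]
    _ ≤ 16 * Real.sqrt m * (2 * Real.sqrt m) := by gcongr; exact hsq m
    _ = 32 * Real.sqrt m ^ 2 := by ring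
    _ = 32 * m := by rw [hm]

end ErdosTuran

namespace ErdosTuran
open Finset

/-! ### The variance of the difference between the truncated order and the sum of marks -/

/-- The sum of the logarithms of the parts of `μ`, in which only the prime powers up to `Q` are
counted without the repetitions among the parts. -/
noncomputable def trunc (Q : ℕ) (μ : Multiset ℕ) : ℝ :=
  (μ.map fun d : ℕ => Real.log d - h Q d).sum + h Q μ.lcm

/-- The sum of the logarithms of the marks. The mark `0` contributes `Real.log 0 = 0`. -/
noncomputable def markSum (A : Finset ℕ) : ℝ := ∑ m ∈ A, Real.log m

/-- The difference between `trunc` of the parts and the sum of the logarithms of the marks. -/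
noncomputable def disc (Q n : ℕ) (A : Finset ℕ) : ℝ := trunc Q (parts n A) - markSum A

lemma prev_erase (A : Finset ℕ) (m : ℕ) : prev (A.erase m) m = prev A m := by
  unfold prev
  congr 1
  ext x
  simp only [mem_filter, mem_erase]
  constructor
  · rintro ⟨⟨_, h⟩, h2⟩; exact ⟨h, h2⟩
  · rintro ⟨h, h2⟩; exact ⟨⟨by omega, h⟩, h2⟩

lemma nxt_erase (n : ℕ) (A : Finset ℕ) (m : ℕ) : nxt n (A.erase m) m = nxt n A m := by
  unfold nxt
  congr 1
  ext x
  simp only [Set.mem_ofPred_eq, mem_erase]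
  constructor
  · rintro ⟨h, h2⟩; exact ⟨h, h2.imp_left And.right⟩
  · rintro ⟨h, h2⟩; exact ⟨h, h2.imp_left fun h3 => ⟨by omega, h3⟩⟩

/-- The square of the contribution of a part `d` cut off at position `m` to the discrepancy. -/
noncomputable def cost (Q m d : ℕ) : ℝ := Real.log ((m : ℝ) / d) ^ 2 + h Q d ^ 2

lemma cost_nonneg (Q m d : ℕ) : 0 ≤ cost Q m d := by unfold cost; positivity

lemma lcm_parts_ne_zero {n : ℕ} {A : Finset ℕ} (hA : A ⊆ range n) {μ : Multiset ℕ}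
    (hμ : μ ≤ parts n A) : μ.lcm ≠ 0 := by
  rw [Ne, Multiset.lcm_eq_zero_iff]
  intro h0
  have := parts_bounds hA (Multiset.mem_of_le hμ h0)
  omega

/-- The effect of one mark on the discrepancy. -/
lemma disc_diff_sq_le {Q n m : ℕ} {A : Finset ℕ} (hA : A ⊆ range n) (hm : 0 < m) (hmn : m < n) :
    (disc Q n (insert m A) - disc Q n (A.erase m)) ^ 2 ≤
      5 * (cost Q m (m - prev A m) + cost Q (nxt n A m) (nxt n A m - m) +
        h Q (nxt n A m - prev A m) ^ 2) := by
  have hA0 : A.erase m ⊆ range n := (erase_subset _ _).trans hA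
  have hmA : m ∉ A.erase m := notMem_erase m A
  have hins : insert m A = insert m (A.erase m) := by
    ext x; simp only [mem_insert, mem_erase]; tauto
  obtain ⟨rest, e1, e2⟩ := parts_split hA0 hm hmn hmA
  have hrest : rest.lcm ≠ 0 := lcm_parts_ne_zero hA0 (by rw [e1]; exact Multiset.le_cons_self _ _)
  rw [prev_erase, nxt_erase] at e1 e2
  have ha : prev A m < m := prev_lt hm
  obtain ⟨hb, -⟩ := nxt_mem (A := A) hmn
  rw [hins]
  unfold disc
  rw [e1, e2]
  unfold markSum
  rw [sum_insert hmA]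
  unfold trunc
  simp only [Multiset.map_cons, Multiset.sum_cons, Multiset.lcm_cons]
  set a := prev A m
  set b := nxt n A m
  have hd1 : m - a ≠ 0 := by omega
  have hd2 : b - m ≠ 0 := by omega
  have hd3 : b - a ≠ 0 := by omega
  have k1 := hP_lcm_le (· ≤ Q) hd1 (Nat.lcm_ne_zero hd2 hrest)
  have k2 := hP_lcm_le (· ≤ Q) hd2 hrest
  have k3 := hP_lcm_le (· ≤ Q) hd3 hrest
  have k4 := hP_le_of_dvd (· ≤ Q) (Nat.lcm_ne_zero hd3 hrest) (Nat.dvd_lcm_right (b - a) rest.lcm)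
  have k5 := hP_le_of_dvd (· ≤ Q) (Nat.lcm_ne_zero hd1 (Nat.lcm_ne_zero hd2 hrest))
    ((Nat.dvd_lcm_right (b - m) rest.lcm).trans (Nat.dvd_lcm_right (m - a) _))
  have n1 := hP_nonneg (· ≤ Q) (m - a)
  have n2 := hP_nonneg (· ≤ Q) (b - m)
  have n3 := hP_nonneg (· ≤ Q) (b - a)
  have p1 : (0 : ℝ) < (m - a : ℕ) := by exact_mod_cast Nat.pos_of_ne_zero hd1
  have p2 : (0 : ℝ) < (b - m : ℕ) := by exact_mod_cast Nat.pos_of_ne_zero hd2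
  have p3 : (0 : ℝ) < (b - a : ℕ) := by exact_mod_cast Nat.pos_of_ne_zero hd3
  have p4 : (0 : ℝ) < m := by exact_mod_cast hm
  have p5 : (0 : ℝ) < b := by exact_mod_cast (by omega : 0 < b)
  have l1 : Real.log ((m - a : ℕ) : ℝ) ≤ Real.log m :=
    Real.log_le_log p1 (by exact_mod_cast Nat.sub_le _ _)
  have l2 : Real.log ((b - m : ℕ) : ℝ) ≤ Real.log (b - a : ℕ) :=
    Real.log_le_log p2 (by exact_mod_cast (by omega))
  have l3 : Real.log ((b - a : ℕ) : ℝ) ≤ Real.log b :=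
    Real.log_le_log p3 (by exact_mod_cast Nat.sub_le _ _)
  unfold cost
  rw [Real.log_div p4.ne' p1.ne', Real.log_div p5.ne' p2.ne']
  simp only [lcm_eq_nat_lcm] at *
  generalize Real.log ((m - a : ℕ) : ℝ) = lda at *
  generalize Real.log ((b - m : ℕ) : ℝ) = ldb at *
  generalize Real.log ((b - a : ℕ) : ℝ) = ldd at *
  generalize Real.log (m : ℝ) = lm at *
  generalize Real.log (b : ℝ) = lb at *
  have habs : |lda - h Q (m - a) + (ldb - h Q (b - m) +
      (Multiset.map (fun d : ℕ => Real.log d - h Q d) rest).sum) +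
      h Q ((m - a).lcm ((b - m).lcm rest.lcm)) - (lm + ∑ m ∈ A.erase m, Real.log m) -
      (ldd - h Q (b - a) + (Multiset.map (fun d : ℕ => Real.log d - h Q d) rest).sum +
        h Q ((b - a).lcm rest.lcm) - ∑ m ∈ A.erase m, Real.log m)| ≤
      (lm - lda) + (lb - ldb) + h Q (m - a) + h Q (b - m) + h Q (b - a) := by
    rw [abs_le]
    unfold h
    constructor <;> linarith
  refine (sq_le_sq' (abs_le.1 habs).1 (abs_le.1 habs).2).trans ?_
  generalize h Q (m - a) = x at *
  generalize h Q (b - m) = y at *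
  generalize h Q (b - a) = z at *
  generalize lm - lda = u at *
  generalize lb - ldb = v at *
  nlinarith [sq_nonneg (u - v), sq_nonneg (u - x), sq_nonneg (u - y), sq_nonneg (u - z),
    sq_nonneg (v - x), sq_nonneg (v - y), sq_nonneg (v - z), sq_nonneg (x - y),
    sq_nonneg (x - z), sq_nonneg (y - z)]

lemma sum_cost_le (Q : ℕ) (hQ : 1 ≤ Q) (m : ℕ) :
    ∑ d ∈ Ioc 0 m, cost Q m d ≤ (32 + 6 * Real.log Q ^ 2) * m := by
  unfold cost
  rw [sum_add_distrib]
  have := sum_log_sq_le m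
  have := sum_h_sq_le Q hQ m
  linarith

lemma Ioo_succ_eq {m N : ℕ} (h : m < N) : Ioo m (N + 1) = insert N (Ioo m N) := by
  ext x; simp only [mem_Ioo, mem_insert]; omega

lemma sum_weights {m n : ℕ} (hmn : m < n) :
    ∑ b ∈ Ioo m n, 1 / ((b : ℝ) * ((b : ℝ) + 1)) + 1 / (n : ℝ) = 1 / ((m : ℝ) + 1) := by
  induction n, (Nat.succ_le_of_lt hmn) using Nat.le_induction with
  | base =>
    have : Ioo m m.succ = ∅ := by ext x; simp only [mem_Ioo, notMem_empty, iff_false]; omega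
    rw [this]; simp
  | succ N hN ih =>
    have hN' : m < N := hN
    have : (0 : ℝ) < N := by exact_mod_cast (by omega : 0 < N)
    rw [Ioo_succ_eq hN', sum_insert (by simp), ← ih hN']
    push_cast
    field_simp
    ring

/-- Summation by parts: a sequence with bounded averages, summed against `1 / (b (b + 1))`. -/
lemma sum_tail_le {K : ℝ} {g : ℕ → ℝ} {m : ℕ}
    (hG : ∀ N, ∑ b ∈ Ioo m N, g b ≤ K * N) (hK : 0 ≤ K) {n : ℕ} (hmn : m < n) :
    ∑ b ∈ Ioo m n, 1 / ((b : ℝ) * ((b : ℝ) + 1)) * g b ≤ 2 * K / ((m : ℝ) + 1) := by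
  have key : ∑ b ∈ Ioo m n, 1 / ((b : ℝ) * ((b : ℝ) + 1)) * g b ≤
      (∑ b ∈ Ioo m n, g b) / ((n : ℝ) * (n + 1)) +
        2 * K * (1 / ((m : ℝ) + 1) - 1 / n) := by
    induction n, (Nat.succ_le_of_lt hmn) using Nat.le_induction with
    | base =>
      have : Ioo m m.succ = ∅ := by ext x; simp only [mem_Ioo, notMem_empty, iff_false]; omega
      rw [this]; simp
    | succ N hN ih =>
      have hN' : m < N := hN
      have hN0 : (0 : ℝ) < N := by exact_mod_cast (by omega : 0 < N)
      have ih' := ih hN'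
      have hG' := hG (N + 1)
      rw [Ioo_succ_eq hN', sum_insert (by simp), sum_insert (by simp)]
      rw [Ioo_succ_eq hN', sum_insert (by simp)] at hG'
      generalize ∑ b ∈ Ioo m N, g b = G at *
      push_cast at *
      have e : (g N + G) / ((N : ℝ) * (N + 1)) - (g N + G) / (((N : ℝ) + 1) * (N + 1 + 1)) ≤
          2 * K * (1 / N - 1 / ((N : ℝ) + 1)) := by
        have e1 : (g N + G) / ((N : ℝ) * (N + 1)) - (g N + G) / (((N : ℝ) + 1) * (N + 1 + 1)) =
          (g N + G) * (2 / (N * (N + 1) * (N + 2))) := by field_simp; ring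
        rw [e1]
        calc (g N + G) * (2 / ((N : ℝ) * (N + 1) * (N + 2)))
            ≤ (K * (N + 1)) * (2 / ((N : ℝ) * (N + 1) * (N + 2))) := by gcongr
          _ = 2 * K * ((1 / N - 1 / ((N : ℝ) + 1)) * ((N + 1) / (N + 2))) := by
              field_simp; ring
          _ ≤ 2 * K * ((1 / N - 1 / ((N : ℝ) + 1)) * 1) := by
              have : 0 ≤ 1 / (N : ℝ) - 1 / ((N : ℝ) + 1) := by
                rw [sub_nonneg]; gcongr; linarith
              gcongr
              rw [div_le_one (by positivity)]; linarith
          _ = _ := by ring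
      have e2 : 1 / ((N : ℝ) * (N + 1)) * g N + G / ((N : ℝ) * (N + 1)) =
        (g N + G) / ((N : ℝ) * (N + 1)) := by field_simp
      linarith
  have hn0 : (0 : ℝ) < n := by exact_mod_cast (by omega : 0 < n)
  have h1 : (∑ b ∈ Ioo m n, g b) / ((n : ℝ) * (n + 1)) ≤ 2 * K * (1 / n) := by
    calc (∑ b ∈ Ioo m n, g b) / ((n : ℝ) * (n + 1)) ≤ (K * n) / (n * (n + 1)) := by
          gcongr; exact hG n
      _ = K * (1 / (n + 1)) := by field_simp
      _ ≤ K * (1 / n) := by gcongr; linarith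
      _ ≤ 2 * K * (1 / n) := by gcongr; linarith
  calc _ ≤ _ := key
    _ ≤ 2 * K * (1 / n) + 2 * K * (1 / ((m : ℝ) + 1) - 1 / n) := by linarith
    _ = _ := by ring

lemma sum_range_sub (m : ℕ) (F : ℕ → ℝ) :
    ∑ a ∈ range m, F (m - a) = ∑ d ∈ Ioc 0 m, F d := by
  refine sum_bij (fun a _ => m - a) ?_ ?_ ?_ ?_
  · intro a ha; have := mem_range.1 ha; simp; omega
  · intro a ha b hb hab; have := mem_range.1 ha; have := mem_range.1 hb; omega
  · intro d hd; have := mem_Ioc.1 hd; exact ⟨m - d, by simp; omega, by omega⟩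
  · intros; rfl

lemma sum_Ioo_sub_le {g : ℕ → ℝ} {K : ℝ} (hg : ∀ d, 0 ≤ g d)
    (hK : ∀ x : ℕ, ∑ d ∈ Ioc 0 x, g d ≤ K * x) {a m : ℕ} (ham : a < m) (N : ℕ) :
    ∑ b ∈ Ioo m N, g (b - a) ≤ K * N := by
  refine le_trans ?_ (hK N)
  have : ∑ b ∈ Ioo m N, g (b - a) = ∑ d ∈ (Ioo m N).image (fun b => b - a), g d := by
    rw [sum_image]
    intro x hx y hy hxy
    have := mem_Ioo.1 hx; have := mem_Ioo.1 hy
    simp only at hxy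
    omega
  rw [this]
  refine sum_le_sum_of_subset_of_nonneg ?_ fun _ _ _ => hg _
  intro d hd
  obtain ⟨b, hb, rfl⟩ := mem_image.1 hd
  have := mem_Ioo.1 hb
  simp; omega

/-- The harmonic number. -/
noncomputable def HH (n : ℕ) : ℝ := ∑ m ∈ range n, 1 / ((m : ℝ) + 1)

lemma HH_nonneg (n : ℕ) : 0 ≤ HH n := sum_nonneg fun _ _ => by positivity

lemma HH_le (n : ℕ) : HH n ≤ 1 + Real.log n := by
  have := harmonic_le_one_add_log n
  simpa [HH, harmonic] using this

lemma variance_disc_le (Q : ℕ) (hQ : 1 ≤ Q) (n : ℕ) :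
    EE n (fun A => disc Q n A ^ 2) - EE n (disc Q n) ^ 2 ≤
      25 * (32 + 6 * Real.log Q ^ 2) * (HH n + 1) := by
  refine (efron_stein n (disc Q n)).trans ?_
  set K := 6 * Real.log Q ^ 2 with hKdef
  have hK0 : 0 ≤ K := by positivity
  have hKsum : ∀ x : ℕ, ∑ d ∈ Ioc 0 x, h Q d ^ 2 ≤ K * x := sum_h_sq_le Q hQ
  have hCsum : ∀ x : ℕ, ∑ d ∈ Ioc 0 x, cost Q x d ≤ (32 + K) * x := sum_cost_le Q hQ
  -- the bound for a single mark
  have hterm : ∀ m ∈ range n, (m : ℝ) / ((m : ℝ) + 1) ^ 2 *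
      EE n (fun A => (disc Q n (insert m A) - disc Q n (A.erase m)) ^ 2) ≤
      5 * ((32 + K) * (1 / ((m : ℝ) + 1)) +
        (∑ b ∈ range n, (if m < b then 1 / ((b : ℝ) * ((b : ℝ) + 1)) * cost Q b (b - m) else 0) +
          1 / n * cost Q n (n - m)) + 3 * K * (1 / ((m : ℝ) + 1))) := by
    intro m hm
    have hmn := mem_range.1 hm
    have hmid0 : 0 ≤ ∑ b ∈ range n,
        (if m < b then 1 / ((b : ℝ) * ((b : ℝ) + 1)) * cost Q b (b - m) else 0) +
          1 / n * cost Q n (n - m) := by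
      refine add_nonneg (sum_nonneg fun b _ => ?_) (mul_nonneg (by positivity) (cost_nonneg _ _ _))
      split_ifs
      · exact mul_nonneg (by positivity) (cost_nonneg _ _ _)
      · exact le_rfl
    rcases Nat.eq_zero_or_pos m with rfl | hm0
    · simp only [Nat.cast_zero, zero_div, zero_mul]
      positivity
    have hmr : (0 : ℝ) < m := by exact_mod_cast hm0
    have hn0 : (0 : ℝ) < n := by exact_mod_cast (by omega : 0 < n)
    have h1 : EE n (fun A => (disc Q n (insert m A) - disc Q n (A.erase m)) ^ 2) ≤
        EE n (fun A => (fun a b => 5 * (cost Q m (m - a) + cost Q b (b - m) + h Q (b - a) ^ 2))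
          (prev A m) (nxt n A m)) :=
      EE_mono fun A hA => disc_diff_sq_le hA hm0 hmn
    rw [EE_prev_nxt hm0 hmn
      (fun a b => 5 * (cost Q m (m - a) + cost Q b (b - m) + h Q (b - a) ^ 2))] at h1
    have hsw := sum_weights hmn
    have hfil : ∑ b ∈ range n, (if m < b then 1 / ((b : ℝ) * ((b : ℝ) + 1)) * cost Q b (b - m)
        else 0) = ∑ b ∈ Ioo m n, 1 / ((b : ℝ) * ((b : ℝ) + 1)) * cost Q b (b - m) := by
      rw [← sum_filter]
      congr 1
      ext x; simp only [mem_filter, mem_range, mem_Ioo]; omega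
    rw [hfil] at hmid0 ⊢
    set U := ∑ b ∈ Ioo m n, 1 / ((b : ℝ) * ((b : ℝ) + 1)) * cost Q b (b - m) +
          1 / n * cost Q n (n - m) with hU
    have h2 : ∀ a ∈ range m, (∑ b ∈ Ioo m n, ((m : ℝ) + 1) / ((b : ℝ) * ((b : ℝ) + 1)) *
        (5 * (cost Q m (m - a) + cost Q b (b - m) + h Q (b - a) ^ 2)) +
          ((m : ℝ) + 1) / n * (5 * (cost Q m (m - a) + cost Q n (n - m) + h Q (n - a) ^ 2))) ≤
        5 * (m + 1) * (1 / ((m : ℝ) + 1) * cost Q m (m - a) + U +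
          (2 * K / ((m : ℝ) + 1) + 1 / n * h Q (n - a) ^ 2)) := by
      intro a ha
      have ham := mem_range.1 ha
      have h3 := sum_tail_le (K := K) (g := fun b => h Q (b - a) ^ 2) (m := m)
        (sum_Ioo_sub_le (fun d => sq_nonneg (h Q d)) hKsum ham) hK0 hmn
      have h4 : ∑ b ∈ Ioo m n, ((m : ℝ) + 1) / ((b : ℝ) * ((b : ℝ) + 1)) *
        (5 * (cost Q m (m - a) + cost Q b (b - m) + h Q (b - a) ^ 2)) =
        5 * (m + 1) * ((∑ b ∈ Ioo m n, 1 / ((b : ℝ) * ((b : ℝ) + 1))) * cost Q m (m - a) +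
          ∑ b ∈ Ioo m n, 1 / ((b : ℝ) * ((b : ℝ) + 1)) * cost Q b (b - m) +
          ∑ b ∈ Ioo m n, 1 / ((b : ℝ) * ((b : ℝ) + 1)) * h Q (b - a) ^ 2) := by
        rw [sum_mul, ← sum_add_distrib, ← sum_add_distrib, mul_sum]
        exact sum_congr rfl fun b _ => by ring
      rw [h4, ← hsw, hU]
      have h5 : 5 * ((m : ℝ) + 1) *
          (∑ b ∈ Ioo m n, 1 / ((b : ℝ) * ((b : ℝ) + 1)) * h Q (b - a) ^ 2) ≤
          5 * ((m : ℝ) + 1) * (2 * K / ((m : ℝ) + 1)) := by gcongr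
      have h6 : ((m : ℝ) + 1) / n * (5 * (cost Q m (m - a) + cost Q n (n - m) + h Q (n - a) ^ 2)) =
        5 * (m + 1) * (1 / n * cost Q m (m - a) + 1 / n * cost Q n (n - m) +
          1 / n * h Q (n - a) ^ 2) := by ring
      rw [h6]
      nlinarith [h5]
    clear_value U
    have h7 := h1.trans (mul_le_mul_of_nonneg_left (sum_le_sum h2)
      (by positivity : (0 : ℝ) ≤ 1 / m))
    have h8 : ∑ a ∈ range m, cost Q m (m - a) ≤ (32 + K) * m := by
      rw [sum_range_sub m (cost Q m)]; exact hCsum m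
    have h9 : ∑ a ∈ range m, h Q (n - a) ^ 2 ≤ K * n := by
      calc ∑ a ∈ range m, h Q (n - a) ^ 2 ≤ ∑ a ∈ range n, h Q (n - a) ^ 2 :=
            sum_le_sum_of_subset_of_nonneg (range_mono hmn.le) fun _ _ _ => sq_nonneg _
        _ = ∑ d ∈ Ioc 0 n, h Q d ^ 2 := sum_range_sub n (fun d => h Q d ^ 2)
        _ ≤ _ := hKsum n
    rw [← mul_sum, sum_add_distrib, sum_add_distrib, sum_add_distrib, ← mul_sum, ← mul_sum,
      sum_const, sum_const, card_range, nsmul_eq_mul, nsmul_eq_mul] at h7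
    have h10 : (m : ℝ) / ((m : ℝ) + 1) ^ 2 *
      EE n (fun A => (disc Q n (insert m A) - disc Q n (A.erase m)) ^ 2) ≤
      (m : ℝ) / ((m : ℝ) + 1) ^ 2 * (1 / (m : ℝ) * (5 * (m + 1) *
        (1 / ((m : ℝ) + 1) * ((32 + K) * m) + m * U +
          (m * (2 * K / ((m : ℝ) + 1)) + 1 / n * (K * n))))) := by
      refine mul_le_mul_of_nonneg_left (h7.trans ?_) (by positivity)
      gcongr
    refine h10.trans ?_
    have h11 : (m : ℝ) / ((m : ℝ) + 1) ^ 2 * (1 / (m : ℝ) * (5 * (m + 1) *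
        (1 / ((m : ℝ) + 1) * ((32 + K) * m) + m * U +
          (m * (2 * K / ((m : ℝ) + 1)) + 1 / n * (K * n))))) =
        5 * ((32 + K) * (1 / ((m : ℝ) + 1)) * (m / (m + 1)) + U * (m / (m + 1)) +
          (2 * K * (1 / ((m : ℝ) + 1)) * (m / (m + 1)) + K * (1 / ((m : ℝ) + 1)))) := by
      field_simp
    rw [h11]
    have hr : (m : ℝ) / (m + 1) ≤ 1 := by rw [div_le_one (by positivity)]; linarith
    have t1 : (32 + K) * (1 / ((m : ℝ) + 1)) * (m / (m + 1)) ≤ (32 + K) * (1 / ((m : ℝ) + 1)) :=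
      mul_le_of_le_one_right (by positivity) hr
    have t2 : U * (m / (m + 1)) ≤ U := mul_le_of_le_one_right hmid0 hr
    have t3 : 2 * K * (1 / ((m : ℝ) + 1)) * (m / (m + 1)) ≤ 2 * K * (1 / ((m : ℝ) + 1)) :=
      mul_le_of_le_one_right (by positivity) hr
    linarith
  refine (sum_le_sum hterm).trans ?_
  rw [← mul_sum, sum_add_distrib, sum_add_distrib, sum_add_distrib, ← mul_sum, ← mul_sum,
    ← mul_sum, sum_comm]
  have hmid1 : ∑ b ∈ range n, ∑ m ∈ range n,
      (if m < b then 1 / ((b : ℝ) * ((b : ℝ) + 1)) * cost Q b (b - m) else 0) ≤ (32 + K) * HH n := by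
    unfold HH
    rw [mul_sum]
    refine sum_le_sum fun b hb => ?_
    have hbn := mem_range.1 hb
    rw [← sum_filter]
    have : (range n).filter (fun m => m < b) = range b := by
      ext x; simp only [mem_filter, mem_range]; omega
    rw [this, ← mul_sum, sum_range_sub b (cost Q b)]
    rcases Nat.eq_zero_or_pos b with rfl | hb0
    · simp; positivity
    have hb' : (0 : ℝ) < b := by exact_mod_cast hb0
    calc 1 / ((b : ℝ) * ((b : ℝ) + 1)) * ∑ d ∈ Ioc 0 b, cost Q b d
        ≤ 1 / ((b : ℝ) * ((b : ℝ) + 1)) * ((32 + K) * b) := by gcongr; exact hCsum b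
      _ = _ := by field_simp
  have hmid2 : 1 / (n : ℝ) * ∑ m ∈ range n, cost Q n (n - m) ≤ 32 + K := by
    rw [sum_range_sub n (cost Q n)]
    rcases Nat.eq_zero_or_pos n with rfl | hn0
    · simp; positivity
    have hn' : (0 : ℝ) < n := by exact_mod_cast hn0
    calc _ ≤ 1 / (n : ℝ) * ((32 + K) * n) := by gcongr; exact hCsum n
      _ = _ := by field_simp
  have hH := HH_nonneg n
  have : ∑ m ∈ range n, 1 / ((m : ℝ) + 1) = HH n := rfl
  rw [this]
  nlinarith [mul_nonneg hK0 hH]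

end ErdosTuran

namespace ErdosTuran
open Finset
open scoped ArithmeticFunction.vonMangoldt

/-! ### The contribution of large prime powers -/

/-- The excess of `trunc` over the logarithm of the least common multiple. -/
noncomputable def excess (Q : ℕ) (μ : Multiset ℕ) : ℝ := trunc Q μ - Real.log (μ.lcm : ℕ)

/-- The number of parts divisible by `q`. -/
noncomputable def numDvd (q : ℕ) (μ : Multiset ℕ) : ℝ := (μ.countP (q ∣ ·) : ℝ)

lemma numDvd_cons (q d : ℕ) (μ : Multiset ℕ) :
    numDvd q (d ::ₘ μ) = (if q ∣ d then 1 else 0) + numDvd q μ := by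
  unfold numDvd
  rw [Multiset.countP_cons]
  split_ifs <;> push_cast <;> ring

lemma numDvd_nonneg (q : ℕ) (μ : Multiset ℕ) : 0 ≤ numDvd q μ := by unfold numDvd; positivity

lemma excess_eq (Q : ℕ) (μ : Multiset ℕ) :
    excess Q μ = (μ.map (hP (fun q => ¬ q ≤ Q))).sum - hP (fun q => ¬ q ≤ Q) μ.lcm := by
  unfold excess trunc
  have h1 := hP_add_not (· ≤ Q) μ.lcm
  have h2 : (μ.map fun d : ℕ => Real.log d - h Q d) = μ.map (hP (fun q => ¬ q ≤ Q)) := by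
    refine Multiset.map_congr rfl fun d _ => ?_
    have := hP_add_not (· ≤ Q) d
    unfold h
    linarith
  rw [h2]
  unfold h
  linarith

lemma hP_lcm_le_sum (P : ℕ → Prop) [DecidablePred P] (μ : Multiset ℕ) (hμ : ∀ d ∈ μ, 0 < d) :
    hP P μ.lcm ≤ (μ.map (hP P)).sum ∧ μ.lcm ≠ 0 := by
  induction μ using Multiset.induction with
  | empty =>
    refine ⟨?_, by simp⟩
    have := hP_add_not P 1
    have := hP_nonneg (fun q => ¬ P q) 1
    have h0 : hP P (Multiset.lcm (0 : Multiset ℕ)) = hP P 1 := by simp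
    rw [h0]
    simp at *
    linarith
  | cons d μ ih =>
    obtain ⟨h1, h2⟩ := ih fun e he => hμ e (Multiset.mem_cons_of_mem he)
    have hd : d ≠ 0 := (hμ d (Multiset.mem_cons_self _ _)).ne'
    rw [Multiset.lcm_cons, Multiset.map_cons, Multiset.sum_cons]
    exact ⟨(hP_lcm_le P hd h2).trans (by linarith), Nat.lcm_ne_zero hd h2⟩

lemma excess_nonneg {Q n : ℕ} {A : Finset ℕ} (hA : A ⊆ range n) : 0 ≤ excess Q (parts n A) := by
  rw [excess_eq, sub_nonneg]
  exact (hP_lcm_le_sum _ _ fun d hd => (parts_bounds hA hd).1).1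

lemma excess_le {Q n : ℕ} {A : Finset ℕ} (hA : A ⊆ range n) :
    excess Q (parts n A) ≤
      ∑ q ∈ Ioc Q n, Λ q * (numDvd q (parts n A) * (numDvd q (parts n A) - 1)) := by
  have hb : ∀ d ∈ parts n A, 0 < d ∧ d ≤ n := fun d hd => parts_bounds hA hd
  rw [excess_eq]
  have h0 := (hP_lcm_le_sum (fun q => ¬ q ≤ Q) _ fun d hd => (hb d hd).1).2
  generalize parts n A = μ at *
  have hsum : (μ.map (hP (fun q => ¬ q ≤ Q))).sum = ∑ q ∈ Ioc Q n, Λ q * numDvd q μ := by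
    clear h0
    induction μ using Multiset.induction with
    | empty => simp [numDvd]
    | cons d μ ih =>
      rw [Multiset.map_cons, Multiset.sum_cons, ih fun e he => hb e (Multiset.mem_cons_of_mem he)]
      simp only [numDvd_cons, mul_add, sum_add_distrib]
      congr 1
      unfold hP
      obtain ⟨hd1, hd2⟩ := hb d (Multiset.mem_cons_self _ _)
      simp only [mul_ite, mul_one, mul_zero]
      rw [← sum_filter]
      congr 1
      ext q
      simp only [mem_filter, Nat.mem_divisors, mem_Ioc, not_le]
      constructor
      · rintro ⟨⟨h1, h2⟩, h3⟩
        exact ⟨⟨h3, (Nat.le_of_dvd hd1 h1).trans hd2⟩, h1⟩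
      · rintro ⟨⟨h1, h2⟩, h3⟩
        exact ⟨⟨h3, hd1.ne'⟩, h1⟩
  have hlcm : ∑ q ∈ Ioc Q n, Λ q * (if 0 < μ.countP (q ∣ ·) then 1 else 0) ≤
      hP (fun q => ¬ q ≤ Q) μ.lcm := by
    simp only [mul_ite, mul_one, mul_zero]
    rw [← sum_filter]
    unfold hP
    refine sum_le_sum_of_subset_of_nonneg ?_ fun _ _ _ => ArithmeticFunction.vonMangoldt_nonneg
    intro q hq
    simp only [mem_filter, mem_Ioc, Multiset.countP_pos] at hq
    obtain ⟨⟨h1, h2⟩, d, hd, hqd⟩ := hq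
    simp only [mem_filter, Nat.mem_divisors, not_le]
    exact ⟨⟨hqd.trans (Multiset.dvd_lcm hd), h0⟩, h1⟩
  rw [hsum]
  have : ∑ q ∈ Ioc Q n, Λ q * numDvd q μ ≤
      ∑ q ∈ Ioc Q n, Λ q * (numDvd q μ * (numDvd q μ - 1)) +
      ∑ q ∈ Ioc Q n, Λ q * (if 0 < μ.countP (q ∣ ·) then 1 else 0) := by
    rw [← sum_add_distrib]
    refine sum_le_sum fun q _ => ?_
    rw [← mul_add]
    refine mul_le_mul_of_nonneg_left ?_ ArithmeticFunction.vonMangoldt_nonneg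
    unfold numDvd
    split_ifs with h
    · nlinarith [sq_nonneg ((μ.countP (q ∣ ·) : ℝ) - 1)]
    · have : μ.countP (q ∣ ·) = 0 := by omega
      rw [this]; simp
  linarith

lemma HH_succ (n : ℕ) : HH (n + 1) = HH n + 1 / ((n : ℝ) + 1) := by
  unfold HH; rw [sum_range_succ]

lemma HH_mono {a b : ℕ} (hab : a ≤ b) : HH a ≤ HH b :=
  sum_le_sum_of_subset_of_nonneg (range_mono hab) fun _ _ _ => by positivity

lemma sum_HH (n : ℕ) : ∑ a ∈ range n, HH a = n * HH n - n := by
  induction n with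
  | zero => simp
  | succ n ih =>
    rw [sum_range_succ, ih, HH_succ]
    push_cast
    field_simp
    ring

/-- A recursive bound by averages of the preceding terms unfolds to harmonic growth. -/
lemma averaging {x : ℕ → ℝ} {c : ℝ} {n : ℕ} (h0 : x 0 = 0)
    (hx : ∀ k ≤ n, k * x k ≤ k * c + ∑ a ∈ range k, x a) : ∀ k ≤ n, x k ≤ c * HH k := by
  intro k
  induction k using Nat.strong_induction_on with
  | _ k ih =>
    intro hk
    rcases Nat.eq_zero_or_pos k with rfl | hk0
    · simp [h0, HH]
    have hk' : (0 : ℝ) < k := by exact_mod_cast hk0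
    have h1 := hx k hk
    have h2 : ∑ a ∈ range k, x a ≤ ∑ a ∈ range k, c * HH a :=
      sum_le_sum fun a ha => ih a (mem_range.1 ha) ((mem_range.1 ha).le.trans hk)
    rw [← mul_sum, sum_HH] at h2
    refine le_of_mul_le_mul_left ?_ hk'
    linarith

lemma count_dvd (q n : ℕ) :
    ∑ a ∈ range n, (if q ∣ n - a then (1 : ℝ) else 0) ≤ n / q := by
  rw [sum_range_sub n (fun d => if q ∣ d then (1 : ℝ) else 0), ← sum_filter]
  simp only [sum_const, nsmul_eq_mul, mul_one]
  rw [Nat.Ioc_filter_dvd_card_eq_div]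
  exact Nat.cast_div_le

lemma EE_numDvd_le (q n : ℕ) : EE n (fun A => numDvd q (parts n A)) ≤ 1 / q * HH n := by
  refine averaging (x := fun n => EE n (fun A => numDvd q (parts n A))) (n := n) ?_ ?_ n le_rfl
  · simp [EE_zero, parts, numDvd]
  · intro k _
    rw [mul_EE_parts k (numDvd q)]
    have : ∀ a ∈ range k, EE a (fun A => numDvd q ((k - a) ::ₘ parts a A)) =
        (if q ∣ k - a then (1 : ℝ) else 0) + EE a (fun A => numDvd q (parts a A)) := by
      intro a _
      simp only [numDvd_cons]
      rw [EE_add, EE_const]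
    rw [sum_congr rfl this, sum_add_distrib]
    have h1 := count_dvd q k
    have : (k : ℝ) * (1 / q) = k / q := by ring
    linarith

lemma EE_numDvd_sq_le (q n : ℕ) :
    EE n (fun A => numDvd q (parts n A) * (numDvd q (parts n A) - 1)) ≤
      2 * HH n ^ 2 / (q : ℝ) ^ 2 := by
  have hc : 2 * HH n ^ 2 / (q : ℝ) ^ 2 = (2 * HH n / (q : ℝ) ^ 2) * HH n := by ring
  rw [hc]
  refine averaging (x := fun n => EE n (fun A => numDvd q (parts n A) * (numDvd q (parts n A) - 1)))
    (n := n) ?_ ?_ n le_rfl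
  · simp [EE_zero, parts, numDvd]
  · intro k hk
    rw [mul_EE_parts k (fun μ => numDvd q μ * (numDvd q μ - 1))]
    have : ∀ a ∈ range k, EE a (fun A => numDvd q ((k - a) ::ₘ parts a A) *
        (numDvd q ((k - a) ::ₘ parts a A) - 1)) ≤
        (if q ∣ k - a then (1 : ℝ) else 0) * (2 * (1 / q * HH n)) +
          EE a (fun A => numDvd q (parts a A) * (numDvd q (parts a A) - 1)) := by
      intro a ha
      have hak := mem_range.1 ha
      have h1 := EE_numDvd_le q a
      have h2 : 1 / (q : ℝ) * HH a ≤ 1 / q * HH n := by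
        gcongr; exact HH_mono (by omega)
      have h3 : EE a (fun A => numDvd q ((k - a) ::ₘ parts a A) *
        (numDvd q ((k - a) ::ₘ parts a A) - 1)) =
        EE a (fun A => ((if q ∣ k - a then (1 : ℝ) else 0) * 2) * numDvd q (parts a A) +
          numDvd q (parts a A) * (numDvd q (parts a A) - 1)) := by
        refine EE_congr fun A _ => ?_
        rw [numDvd_cons]
        split_ifs <;> ring
      rw [h3, EE_add, EE_const_mul]
      split_ifs
      · linarith
      · simp
    refine (sum_le_sum this).trans ?_
    rw [sum_add_distrib, ← sum_mul]
    have h1 := count_dvd q k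
    have hH := HH_nonneg n
    have h4 : (∑ a ∈ range k, (if q ∣ k - a then (1 : ℝ) else 0)) * (2 * (1 / q * HH n)) ≤
        k / q * (2 * (1 / q * HH n)) := by gcongr
    have : (k : ℝ) * (2 * HH n / (q : ℝ) ^ 2) = k / q * (2 * (1 / q * HH n)) := by
      rcases eq_or_ne (q : ℝ) 0 with h | h
      · simp [h]
      · field_simp
    linarith

lemma EE_excess_le {Q n : ℕ} (hQ : 1 ≤ Q) (hn : 1 ≤ n) :
    EE n (fun A => excess Q (parts n A)) ≤ 2 * Real.log n * HH n ^ 2 / Q := by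
  refine (EE_mono fun A hA => excess_le hA).trans ?_
  rw [EE_sum]
  simp only [EE_const_mul]
  have hlog : 0 ≤ Real.log n := Real.log_nonneg (by exact_mod_cast hn)
  have hH := HH_nonneg n
  have hQ' : (0 : ℝ) < Q := by exact_mod_cast hQ
  calc ∑ q ∈ Ioc Q n, Λ q * EE n (fun A => numDvd q (parts n A) * (numDvd q (parts n A) - 1))
      ≤ ∑ q ∈ Ioc Q n, (2 * Real.log n * HH n ^ 2) * ((q : ℝ) ^ 2)⁻¹ := by
        refine sum_le_sum fun q hq => ?_
        obtain ⟨h1, h2⟩ := mem_Ioc.1 hq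
        have hq' : (0 : ℝ) < q := by exact_mod_cast (by omega : 0 < q)
        have h3 : Λ q ≤ Real.log n := ArithmeticFunction.vonMangoldt_le_log.trans
          (Real.log_le_log hq' (by exact_mod_cast h2))
        calc _ ≤ Λ q * (2 * HH n ^ 2 / (q : ℝ) ^ 2) :=
              mul_le_mul_of_nonneg_left (EE_numDvd_sq_le q n)
                ArithmeticFunction.vonMangoldt_nonneg
          _ ≤ Real.log n * (2 * HH n ^ 2 / (q : ℝ) ^ 2) := by gcongr
          _ = _ := by field_simp
    _ = (2 * Real.log n * HH n ^ 2) * ∑ q ∈ Ioc Q n, ((q : ℝ) ^ 2)⁻¹ := by rw [mul_sum]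
    _ ≤ (2 * Real.log n * HH n ^ 2) * (Q : ℝ)⁻¹ := by
        gcongr
        rcases le_total n Q with h | h
        · rw [Ioc_eq_empty (by omega)]; simp; 
        · refine (sum_Ioc_inv_sq_le_sub (by omega) h).trans ?_
          have : (0 : ℝ) ≤ (n : ℝ)⁻¹ := by positivity
          linarith
    _ = _ := by rw [div_eq_mul_inv]

end ErdosTuran

namespace ErdosTuran
open Finset MeasureTheory

/-! ### Gaussian integrals -/

/-- The unnormalized Gaussian density. -/
noncomputable def gd (s : ℝ) : ℝ := Real.exp (-s ^ 2 / 2)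

lemma gd_pos (s : ℝ) : 0 < gd s := Real.exp_pos _

lemma gd_le_one (s : ℝ) : gd s ≤ 1 := Real.exp_le_one_iff.2 (by nlinarith [sq_nonneg s])

lemma continuous_gd : Continuous gd := by unfold gd; fun_prop

lemma gd_eq (s : ℝ) : gd s = Real.exp (-(1 / 2) * s ^ 2) := by
  unfold gd; congr 1; ring

lemma integrable_gd : Integrable gd := by
  have := integrable_exp_neg_mul_sq (b := 1 / 2) (by norm_num)
  exact this.congr (Filter.Eventually.of_forall fun s => (gd_eq s).symm)

lemma integrable_pow_mul_gd (k : ℕ) : Integrable (fun s => s ^ k * gd s) := by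
  have := integrable_rpow_mul_exp_neg_mul_sq (b := 1 / 2) (by norm_num) (s := k)
    (by have : (0 : ℝ) ≤ k := Nat.cast_nonneg k
        linarith)
  refine this.congr (Filter.Eventually.of_forall fun s => ?_)
  simp only [Real.rpow_natCast, gd_eq]

lemma integrable_abs_pow_mul_gd (k : ℕ) : Integrable (fun s => |s| ^ k * gd s) := by
  refine (integrable_pow_mul_gd k).norm.congr (Filter.Eventually.of_forall fun s => ?_)
  simp [abs_of_pos (gd_pos s)]

lemma integral_gd_cos (x : ℝ) :
    ∫ s : ℝ, gd s * Real.cos (s * x) = Real.sqrt (2 * Real.pi) * gd x := by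
  have h1 := fourierIntegral_gaussian (b := 1 / 2) (by norm_num) (x : ℂ)
  have h2 : ∀ s : ℝ, Complex.exp (Complex.I * x * s) * Complex.exp (-(1 / 2) * (s : ℂ) ^ 2) =
      ((gd s : ℝ) : ℂ) * Complex.exp ((s * x : ℝ) * Complex.I) := by
    intro s
    rw [gd_eq, mul_comm]
    push_cast
    congr 2
    ring
  simp only [h2] at h1
  have h3 : ((Real.pi : ℂ) / (1 / 2)) ^ (1 / 2 : ℂ) = ((Real.sqrt (2 * Real.pi) : ℝ) : ℂ) := by
    rw [Real.sqrt_eq_rpow, Complex.ofReal_cpow (by positivity)]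
    push_cast
    congr 1
    ring
  have h4 : Complex.exp (-(x : ℂ) ^ 2 / (4 * (1 / 2))) = ((gd x : ℝ) : ℂ) := by
    unfold gd
    push_cast
    congr 1
    ring
  rw [h3, h4] at h1
  have hInt : Integrable (fun s : ℝ => ((gd s : ℝ) : ℂ) * Complex.exp ((s * x : ℝ) * Complex.I)) := by
    refine Integrable.mono' integrable_gd ?_ (Filter.Eventually.of_forall fun s => ?_)
    · have := continuous_gd
      exact Continuous.aestronglyMeasurable (by fun_prop)
    · rw [norm_mul, Complex.norm_exp_ofReal_mul_I, Complex.norm_real, Real.norm_eq_abs,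
        abs_of_pos (gd_pos s), mul_one]
  have h5 := congrArg Complex.re h1
  rw [← Complex.ofReal_mul, Complex.ofReal_re] at h5
  rw [← h5, ← RCLike.re_eq_complex_re, ← integral_re hInt]
  refine integral_congr_ae (Filter.Eventually.of_forall fun s => ?_)
  simp only [RCLike.re_eq_complex_re, Complex.re_ofReal_mul, Complex.exp_ofReal_mul_I_re]

lemma integral_gd : ∫ s : ℝ, gd s = Real.sqrt (2 * Real.pi) := by
  have := integral_gd_cos 0
  simpa [gd] using this

lemma hasDerivAt_gd (x : ℝ) : HasDerivAt gd (-x * gd x) x := by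
  unfold gd
  have h1 : HasDerivAt (fun x : ℝ => -x ^ 2 / 2) (-x) x := by
    have := ((hasDerivAt_pow 2 x).neg).div_const 2
    refine this.congr_deriv ?_
    simp
    ring
  refine h1.exp.congr_deriv ?_
  ring

/-- Differentiation under the integral sign, with a bound independent of the parameter. -/
lemma hasDerivAt_integral_param {F F' : ℝ → ℝ → ℝ} {bd : ℝ → ℝ} (x : ℝ)
    (hF : ∀ y, Measurable (F y)) (hF' : ∀ y, Measurable (F' y)) (hInt : Integrable (F x))
    (hb : ∀ y s, |F' y s| ≤ bd s) (hbd : Integrable bd)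
    (hd : ∀ᵐ s : ℝ, ∀ y, HasDerivAt (fun y => F y s) (F' y s) y) :
    HasDerivAt (fun y => ∫ s, F y s) (∫ s, F' x s) x := by
  refine (hasDerivAt_integral_of_dominated_loc_of_deriv_le (s := Set.univ) Filter.univ_mem
    (Filter.Eventually.of_forall fun y => (hF y).aestronglyMeasurable) hInt
    (hF' x).aestronglyMeasurable
    (Filter.Eventually.of_forall fun s y _ => hb y s) hbd ?_).2
  filter_upwards [hd] with s hs y _ using hs y

lemma abs_sin_mul_div_le (s x : ℝ) : |Real.sin (s * x) / s| ≤ |x| := by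
  rcases eq_or_ne s 0 with rfl | hs
  · simp
  rw [abs_div, div_le_iff₀ (abs_pos.2 hs), mul_comm, ← abs_mul]
  exact Real.abs_sin_le_abs

lemma integrable_gd_sin_div (x : ℝ) : Integrable (fun s => gd s * (Real.sin (s * x) / s)) := by
  refine Integrable.mono' (integrable_gd.mul_const |x|) ?_ (Filter.Eventually.of_forall fun s => ?_)
  · have := continuous_gd.measurable
    exact Measurable.aestronglyMeasurable (by fun_prop)
  · rw [Real.norm_eq_abs, abs_mul, abs_of_pos (gd_pos s)]
    exact mul_le_mul_of_nonneg_left (abs_sin_mul_div_le s x) (gd_pos s).le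

lemma integrable_pow_gd_mul {k : ℕ} {f : ℝ → ℝ} (hf : Measurable f) (hb : ∀ s, |f s| ≤ 1) :
    Integrable (fun s => s ^ k * gd s * f s) := by
  refine Integrable.mono' (integrable_abs_pow_mul_gd k) ?_
    (Filter.Eventually.of_forall fun s => ?_)
  · have := continuous_gd.measurable
    exact Measurable.aestronglyMeasurable (by fun_prop)
  · rw [Real.norm_eq_abs, abs_mul, abs_mul, abs_of_pos (gd_pos s), abs_pow]
    exact mul_le_of_le_one_right (mul_nonneg (by positivity) (gd_pos s).le) (hb s)

lemma integral_gd_sin (x : ℝ) :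
    ∫ s : ℝ, s * gd s * Real.sin (s * x) = Real.sqrt (2 * Real.pi) * (x * gd x) := by
  have hm := continuous_gd.measurable
  have h1 : HasDerivAt (fun y => ∫ s : ℝ, gd s * Real.cos (s * y))
      (∫ s : ℝ, -(s * gd s * Real.sin (s * x))) x := by
    refine hasDerivAt_integral_param (F' := fun y s => -(s * gd s * Real.sin (s * y)))
      (bd := fun s => |s| ^ 1 * gd s) x (fun y => by fun_prop) (fun y => by fun_prop) ?_ ?_
      (integrable_abs_pow_mul_gd 1) (Filter.Eventually.of_forall fun s y => ?_)
    · simpa using integrable_pow_gd_mul (k := 0) (f := fun s => Real.cos (s * x)) (by fun_prop)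
        (fun s => Real.abs_cos_le_one _)
    · intro y s
      rw [abs_neg, abs_mul, abs_mul, abs_of_pos (gd_pos s), pow_one]
      exact mul_le_of_le_one_right (mul_nonneg (by positivity) (gd_pos s).le)
        (Real.abs_sin_le_one _)
    · have := ((hasDerivAt_id y).const_mul s).cos.const_mul (gd s)
      refine this.congr_deriv ?_
      simp only [id_eq]
      ring
  have h2 : (fun y => ∫ s : ℝ, gd s * Real.cos (s * y)) =
      fun y => Real.sqrt (2 * Real.pi) * gd y := funext integral_gd_cos
  rw [h2, integral_neg] at h1
  have h3 := h1.unique ((hasDerivAt_gd x).const_mul _)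
  linarith

lemma integral_sq_gd_cos (x : ℝ) :
    ∫ s : ℝ, s ^ 2 * gd s * Real.cos (s * x) =
      Real.sqrt (2 * Real.pi) * ((1 - x ^ 2) * gd x) := by
  have hm := continuous_gd.measurable
  have h1 : HasDerivAt (fun y => ∫ s : ℝ, s * gd s * Real.sin (s * y))
      (∫ s : ℝ, s ^ 2 * gd s * Real.cos (s * x)) x := by
    refine hasDerivAt_integral_param (F' := fun y s => s ^ 2 * gd s * Real.cos (s * y))
      (bd := fun s => |s| ^ 2 * gd s) x (fun y => by fun_prop) (fun y => by fun_prop) ?_ ?_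
      (integrable_abs_pow_mul_gd 2) (Filter.Eventually.of_forall fun s y => ?_)
    · simpa using integrable_pow_gd_mul (k := 1) (f := fun s => Real.sin (s * x)) (by fun_prop)
        (fun s => Real.abs_sin_le_one _)
    · intro y s
      rw [abs_mul, abs_mul, abs_of_pos (gd_pos s), abs_pow]
      exact mul_le_of_le_one_right (mul_nonneg (by positivity) (gd_pos s).le)
        (Real.abs_cos_le_one _)
    · have := ((hasDerivAt_id y).const_mul s).sin.const_mul (s * gd s)
      refine this.congr_deriv ?_
      simp only [id_eq]
      ring
  have h2 : (fun y => ∫ s : ℝ, s * gd s * Real.sin (s * y)) =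
      fun y => Real.sqrt (2 * Real.pi) * (y * gd y) := funext integral_gd_sin
  rw [h2] at h1
  have h3 := h1.unique (((hasDerivAt_id x).mul (hasDerivAt_gd x)).const_mul _)
  rw [h3]
  simp only [id_eq]
  ring

lemma stdNormalCDF_eq (x : ℝ) :
    stdNormalCDF x = (Real.sqrt (2 * Real.pi))⁻¹ * ∫ u in Set.Iic x, gd u := rfl

lemma hasDerivAt_cdf (x : ℝ) :
    HasDerivAt stdNormalCDF ((Real.sqrt (2 * Real.pi))⁻¹ * gd x) x := by
  have h1 : stdNormalCDF = fun y => (Real.sqrt (2 * Real.pi))⁻¹ *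
      ((∫ u in (0 : ℝ)..y, gd u) + ∫ u in Set.Iic (0 : ℝ), gd u) := by
    funext y
    rw [stdNormalCDF_eq, ← intervalIntegral.integral_Iic_sub_Iic integrable_gd.integrableOn
      integrable_gd.integrableOn]
    ring
  rw [h1]
  refine HasDerivAt.const_mul _ ?_
  refine HasDerivAt.add_const _ ?_
  exact intervalIntegral.integral_hasDerivAt_right (integrable_gd.intervalIntegrable)
    (continuous_gd.stronglyMeasurableAtFilter _ _) continuous_gd.continuousAt

lemma cdf_zero : stdNormalCDF 0 = 1 / 2 := by
  have h1 : ∫ u in Set.Iic (0 : ℝ), gd u = ∫ u in Set.Ioi (0 : ℝ), gd u := by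
    have := integral_comp_neg_Iic (0 : ℝ) gd
    rw [neg_zero] at this
    rw [← this]
    simp [gd]
  have h2 : ∫ u in Set.Ioi (0 : ℝ), gd u = Real.sqrt (2 * Real.pi) / 2 := by
    have := integral_gaussian_Ioi (1 / 2)
    simp only [← gd_eq] at this
    rw [this]
    congr 2
    ring
  rw [stdNormalCDF_eq, h1, h2]
  have : Real.sqrt (2 * Real.pi) ≠ 0 := by positivity
  field_simp

lemma cdf_nonneg (x : ℝ) : 0 ≤ stdNormalCDF x := by
  rw [stdNormalCDF_eq]
  exact mul_nonneg (by positivity) (integral_nonneg fun u => (gd_pos u).le)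

lemma cdf_le_one (x : ℝ) : stdNormalCDF x ≤ 1 := by
  rw [stdNormalCDF_eq]
  have h1 : ∫ u in Set.Iic x, gd u ≤ ∫ u, gd u :=
    setIntegral_le_integral integrable_gd (Filter.Eventually.of_forall fun u => (gd_pos u).le)
  rw [integral_gd] at h1
  have : 0 < Real.sqrt (2 * Real.pi) := by positivity
  rw [inv_mul_le_iff₀ this]
  linarith

/-- Fourier inversion for the normal distribution function. -/
lemma cdf_fourier (x : ℝ) :
    stdNormalCDF x = 1 / 2 + (2 * Real.pi)⁻¹ * ∫ s : ℝ, gd s * (Real.sin (s * x) / s) := by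
  have hm := continuous_gd.measurable
  have hne : ∀ᵐ s : ℝ, s ≠ 0 := by
    rw [ae_iff]; simp
  have h1 : ∀ x, HasDerivAt (fun y => ∫ s : ℝ, gd s * (Real.sin (s * y) / s))
      (∫ s : ℝ, gd s * Real.cos (s * x)) x := by
    intro x
    refine hasDerivAt_integral_param (F' := fun y s => gd s * Real.cos (s * y))
      (bd := gd) x (fun y => by fun_prop) (fun y => by fun_prop) (integrable_gd_sin_div x) ?_
      integrable_gd ?_
    · intro y s
      rw [abs_mul, abs_of_pos (gd_pos s)]
      exact mul_le_of_le_one_right (gd_pos s).le (Real.abs_cos_le_one _)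
    · filter_upwards [hne] with s hs y
      have := (((hasDerivAt_id y).const_mul s).sin.div_const s).const_mul (gd s)
      refine this.congr_deriv ?_
      simp only [id_eq]
      field_simp
  have hpi : Real.sqrt (2 * Real.pi) ^ 2 = 2 * Real.pi := Real.sq_sqrt (by positivity)
  have hpi0 : Real.sqrt (2 * Real.pi) ≠ 0 := by positivity
  have h2 : ∀ x, HasDerivAt (fun y => stdNormalCDF y -
      (2 * Real.pi)⁻¹ * ∫ s : ℝ, gd s * (Real.sin (s * y) / s)) 0 x := by
    intro x
    have := (hasDerivAt_cdf x).sub ((h1 x).const_mul (2 * Real.pi)⁻¹)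
    refine this.congr_deriv ?_
    rw [integral_gd_cos]
    have e : (2 * Real.pi)⁻¹ * Real.sqrt (2 * Real.pi) = (Real.sqrt (2 * Real.pi))⁻¹ := by
      generalize Real.sqrt (2 * Real.pi) = r at *
      rw [← hpi]
      field_simp
    rw [← mul_assoc, e, sub_self]
  have h3 := is_const_of_deriv_eq_zero (fun x => (h2 x).differentiableAt) (fun x => (h2 x).deriv) x 0
  rw [cdf_zero] at h3
  simp only [mul_zero, Real.sin_zero, zero_div, integral_zero, sub_zero] at h3
  linarith

end ErdosTuran

namespace ErdosTuran
open Finset MeasureTheory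

/-! ### A smoothing inequality -/

/-- The Edgeworth approximation `Φ(x) + ρ (1 - x²) φ(x)`. -/
noncomputable def edge (ρ x : ℝ) : ℝ :=
  stdNormalCDF x + ρ * ((Real.sqrt (2 * Real.pi))⁻¹ * ((1 - x ^ 2) * gd x))

lemma one_le_sqrt_two_pi : 1 ≤ Real.sqrt (2 * Real.pi) :=
  Real.one_le_sqrt.2 (by nlinarith [Real.pi_gt_three])

lemma inv_sqrt_two_pi_le : (Real.sqrt (2 * Real.pi))⁻¹ ≤ 1 :=
  inv_le_one_of_one_le₀ one_le_sqrt_two_pi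

lemma quartic_mul_gd_le (x : ℝ) : (1 + x ^ 2 / 2 + x ^ 4 / 8) * gd x ≤ 1 := by
  have h1 := Real.quadratic_le_exp_of_nonneg (x := x ^ 2 / 2) (by positivity)
  have h2 : gd x = (Real.exp (x ^ 2 / 2))⁻¹ := by
    unfold gd; rw [← Real.exp_neg]; congr 1; ring
  rw [h2, ← div_eq_mul_inv, div_le_one (Real.exp_pos _)]
  nlinarith

lemma abs_edge_term_le (x : ℝ) : |(1 - x ^ 2) * gd x| ≤ 2 := by
  rw [abs_mul, abs_of_pos (gd_pos x)]
  have h1 := quartic_mul_gd_le x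
  have h2 : |1 - x ^ 2| ≤ 2 * (1 + x ^ 2 / 2 + x ^ 4 / 8) := by
    rw [abs_le]; constructor <;> nlinarith [sq_nonneg x, sq_nonneg (x ^ 2)]
  nlinarith [mul_le_mul_of_nonneg_right h2 (gd_pos x).le]

lemma hasDerivAt_edge (ρ x : ℝ) :
    HasDerivAt (edge ρ) ((Real.sqrt (2 * Real.pi))⁻¹ * gd x * (1 + ρ * (x ^ 3 - 3 * x))) x := by
  have h1 : HasDerivAt (fun x : ℝ => 1 - x ^ 2) (-(2 * x)) x := by
    have := (hasDerivAt_pow 2 x).const_sub 1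
    refine this.congr_deriv ?_
    simp
  have h2 := (hasDerivAt_cdf x).add
    (((h1.mul (hasDerivAt_gd x)).const_mul (Real.sqrt (2 * Real.pi))⁻¹).const_mul ρ)
  refine h2.congr_deriv ?_
  ring

lemma edge_lipschitz {ρ : ℝ} (h0 : 0 ≤ ρ) (h1 : ρ ≤ 1) (x y : ℝ) :
    |edge ρ x - edge ρ y| ≤ 8 * |x - y| := by
  have := Convex.norm_image_sub_le_of_norm_deriv_le (f := edge ρ) (s := Set.univ) (C := 8)
    (x := y) (y := x) (fun z _ => (hasDerivAt_edge ρ z).differentiableAt) ?_ convex_univ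
    (Set.mem_univ _) (Set.mem_univ _)
  · exact this
  intro z _
  rw [(hasDerivAt_edge ρ z).deriv, Real.norm_eq_abs, abs_mul, abs_mul, abs_of_pos (gd_pos z),
    abs_of_nonneg (inv_nonneg.2 (Real.sqrt_nonneg _))]
  have h2 := quartic_mul_gd_le z
  have h4 : |z ^ 3 - 3 * z| ≤ 7 * (1 + z ^ 2 / 2 + z ^ 4 / 8) := by
    rw [abs_le]
    constructor <;> nlinarith [sq_nonneg (z ^ 2 - z), sq_nonneg (z ^ 2 + z), sq_nonneg (z - 1),
      sq_nonneg (z + 1), sq_nonneg z, sq_nonneg (z ^ 2)]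
  have h3 : |1 + ρ * (z ^ 3 - 3 * z)| ≤ 8 * (1 + z ^ 2 / 2 + z ^ 4 / 8) := by
    have : |ρ * (z ^ 3 - 3 * z)| ≤ |z ^ 3 - 3 * z| := by
      rw [abs_mul, abs_of_nonneg h0]
      exact mul_le_of_le_one_left (abs_nonneg _) h1
    calc |1 + ρ * (z ^ 3 - 3 * z)| ≤ |1| + |ρ * (z ^ 3 - 3 * z)| := abs_add_le _ _
      _ ≤ 1 + 7 * (1 + z ^ 2 / 2 + z ^ 4 / 8) := by rw [abs_one]; linarith
      _ ≤ _ := by nlinarith [sq_nonneg z, sq_nonneg (z ^ 2)]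
  have h5 := inv_sqrt_two_pi_le
  calc (Real.sqrt (2 * Real.pi))⁻¹ * gd z * |1 + ρ * (z ^ 3 - 3 * z)|
      ≤ 1 * gd z * (8 * (1 + z ^ 2 / 2 + z ^ 4 / 8)) := by
        have := (gd_pos z).le
        gcongr
    _ ≤ 8 := by linarith

lemma integral_quadratic_gd (a b : ℝ) :
    (Real.sqrt (2 * Real.pi))⁻¹ * ∫ z : ℝ, (a + b * z ^ 2) * gd z = a + b := by
  have h1 : ∫ z : ℝ, z ^ 2 * gd z = Real.sqrt (2 * Real.pi) := by
    have := integral_sq_gd_cos 0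
    simpa [gd] using this
  have h2 : ∫ z : ℝ, (a + b * z ^ 2) * gd z =
      ∫ z : ℝ, (a * gd z + b * (z ^ 2 * gd z)) := by
    congr 1; funext z; ring
  rw [h2, integral_add (integrable_gd.const_mul a) ((integrable_pow_mul_gd 2).const_mul b),
    integral_const_mul, integral_const_mul, integral_gd, h1]
  have : Real.sqrt (2 * Real.pi) ≠ 0 := by positivity
  field_simp

lemma integrable_quadratic_gd (a b : ℝ) : Integrable (fun z : ℝ => (a + b * z ^ 2) * gd z) := by
  have := (integrable_gd.const_mul a).add ((integrable_pow_mul_gd 2).const_mul b)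
  refine this.congr (Filter.Eventually.of_forall fun z => ?_)
  simp only [Pi.add_apply]
  ring

/-- If the convolution of a monotone function with a Gaussian of width `τ` is close to a Lipschitz
function, then so is the function itself. -/
lemma desmooth {F G : ℝ → ℝ} {M τ η Δ₀ : ℝ} (hF : Monotone F) (hM : 0 ≤ M) (hτ : 0 < τ)
    (hG : ∀ x y, |G x - G y| ≤ M * |x - y|) (hΔ₀ : ∀ x, |F x - G x| ≤ Δ₀)
    (hFint : ∀ x, Integrable (fun z => F (x - τ * z) * gd z))
    (hη : ∀ x, |(Real.sqrt (2 * Real.pi))⁻¹ * (∫ z, F (x - τ * z) * gd z) - G x| ≤ η) (x : ℝ) :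
    |F x - G x| ≤ 2 * η + 12 * M * τ := by
  have hbdd : BddAbove (Set.range fun x => |F x - G x|) := ⟨Δ₀, by rintro _ ⟨x, rfl⟩; exact hΔ₀ x⟩
  set Δ := ⨆ x, |F x - G x| with hΔ
  have hle : ∀ x, |F x - G x| ≤ Δ := fun x => le_ciSup hbdd x
  have hr : 0 ≤ (Real.sqrt (2 * Real.pi))⁻¹ := by positivity
  have hz : ∀ z : ℝ, |z| ≤ 1 + z ^ 2 := fun z => by
    nlinarith [sq_abs z, sq_nonneg (|z| - 1), abs_nonneg z]
  have hMτ : 0 ≤ M * τ := mul_nonneg hM hτ.le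
  have key : ∀ x, |F x - G x| ≤ Δ / 3 + 4 / 3 * (η + 6 * (M * τ)) := by
    intro x
    set δ := F x - G x with hδ
    have hδΔ := abs_le.1 (hle x)
    rw [abs_le]
    constructor
    · have hpt : ∀ z, F (x - 2 * τ - τ * z) * gd z ≤
          ((G x + δ + 3 * (M * τ)) + ((Δ - δ) / 4 + M * τ) * z ^ 2) * gd z := by
        intro z
        refine mul_le_mul_of_nonneg_right ?_ (gd_pos z).le
        rcases le_or_gt (|z|) 2 with h | h
        · have h1 : F (x - 2 * τ - τ * z) ≤ F x := hF (by nlinarith [(abs_le.1 h).1])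
          have h2 : 0 ≤ ((Δ - δ) / 4 + M * τ) * z ^ 2 :=
            mul_nonneg (by linarith [hδΔ.2]) (sq_nonneg z)
          linarith
        · have h1 := (abs_le.1 (hle (x - 2 * τ - τ * z))).2
          have h2 := (abs_le.1 (hG (x - 2 * τ - τ * z) x)).2
          have h3 : |x - 2 * τ - τ * z - x| ≤ 2 * τ + τ * |z| := by
            have : x - 2 * τ - τ * z - x = -(2 * τ) + -(τ * z) := by ring
            rw [this]
            refine (abs_add_le _ _).trans ?_
            rw [abs_neg, abs_neg, abs_mul τ z, abs_of_pos hτ, abs_of_pos (by positivity)]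
          have h4 : M * |x - 2 * τ - τ * z - x| ≤ M * τ * (3 + z ^ 2) := by
            calc _ ≤ M * (2 * τ + τ * |z|) := by gcongr
              _ = M * τ * (2 + |z|) := by ring
              _ ≤ M * τ * (3 + z ^ 2) := by
                refine mul_le_mul_of_nonneg_left ?_ hMτ
                linarith [hz z]
          have h5 : 4 ≤ z ^ 2 := by rw [← sq_abs]; nlinarith
          nlinarith [mul_le_mul_of_nonneg_left h5 (by linarith [hδΔ.2] : 0 ≤ (Δ - δ) / 4)]
      have h1 := mul_le_mul_of_nonneg_left
        (integral_mono (hFint (x - 2 * τ)) (integrable_quadratic_gd _ _) hpt) hr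
      rw [integral_quadratic_gd] at h1
      have h2 := (abs_le.1 (hη (x - 2 * τ))).1
      have h3 := (abs_le.1 (hG (x - 2 * τ) x)).1
      have h4 : |x - 2 * τ - x| = 2 * τ := by
        rw [show x - 2 * τ - x = -(2 * τ) by ring, abs_neg, abs_of_pos (by positivity)]
      rw [h4] at h3
      linarith
    · have hpt : ∀ z, ((G x + δ - 3 * (M * τ)) + (-((δ + Δ) / 4) - M * τ) * z ^ 2) * gd z ≤
          F (x + 2 * τ - τ * z) * gd z := by
        intro z
        refine mul_le_mul_of_nonneg_right ?_ (gd_pos z).le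
        rcases le_or_gt (|z|) 2 with h | h
        · have h1 : F x ≤ F (x + 2 * τ - τ * z) := hF (by nlinarith [(abs_le.1 h).2])
          have h2 : 0 ≤ ((δ + Δ) / 4 + M * τ) * z ^ 2 :=
            mul_nonneg (by linarith [hδΔ.1]) (sq_nonneg z)
          linarith
        · have h1 := (abs_le.1 (hle (x + 2 * τ - τ * z))).1
          have h2 := (abs_le.1 (hG (x + 2 * τ - τ * z) x)).1
          have h3 : |x + 2 * τ - τ * z - x| ≤ 2 * τ + τ * |z| := by
            have : x + 2 * τ - τ * z - x = (2 * τ) + -(τ * z) := by ring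
            rw [this]
            refine (abs_add_le _ _).trans ?_
            rw [abs_neg, abs_mul τ z, abs_of_pos hτ, abs_of_pos (by positivity)]
          have h4 : M * |x + 2 * τ - τ * z - x| ≤ M * τ * (3 + z ^ 2) := by
            calc _ ≤ M * (2 * τ + τ * |z|) := by gcongr
              _ = M * τ * (2 + |z|) := by ring
              _ ≤ M * τ * (3 + z ^ 2) := by
                refine mul_le_mul_of_nonneg_left ?_ hMτ
                linarith [hz z]
          have h5 : 4 ≤ z ^ 2 := by rw [← sq_abs]; nlinarith
          nlinarith [mul_le_mul_of_nonneg_left h5 (by linarith [hδΔ.1] : 0 ≤ (δ + Δ) / 4)]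
      have h1 := mul_le_mul_of_nonneg_left
        (integral_mono (integrable_quadratic_gd _ _) (hFint (x + 2 * τ)) hpt) hr
      rw [integral_quadratic_gd] at h1
      have h2 := (abs_le.1 (hη (x + 2 * τ))).2
      have h3 := (abs_le.1 (hG (x + 2 * τ) x)).2
      have h4 : |x + 2 * τ - x| = 2 * τ := by
        rw [show x + 2 * τ - x = 2 * τ by ring, abs_of_pos (by positivity)]
      rw [h4] at h3
      linarith
  have h1 : Δ ≤ Δ / 3 + 4 / 3 * (η + 6 * (M * τ)) := ciSup_le key
  have := hle x
  linarith

lemma cdf_scaled_fourier {τ : ℝ} (hτ : 0 < τ) (y : ℝ) :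
    stdNormalCDF (y / τ) =
      1 / 2 + (2 * Real.pi)⁻¹ * ∫ s : ℝ, gd (τ * s) * (Real.sin (s * y) / s) := by
  rw [cdf_fourier]
  congr 2
  have h1 := Measure.integral_comp_mul_left (fun s => gd s * (Real.sin (s * (y / τ)) / s)) τ
  rw [abs_of_pos (inv_pos.2 hτ), smul_eq_mul, eq_inv_mul_iff_mul_eq₀ hτ.ne'] at h1
  rw [← h1, ← integral_const_mul]
  congr 1
  funext s
  have e : τ * s * (y / τ) = s * y := by field_simp
  rw [e]
  rcases eq_or_ne s 0 with rfl | hs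
  · simp
  · field_simp

lemma integrable_gd_scaled {τ : ℝ} (hτ : 0 < τ) : Integrable (fun s => gd (τ * s)) :=
  integrable_gd.comp_mul_left' hτ.ne'

lemma integrable_gd_scaled_sin {τ : ℝ} (hτ : 0 < τ) (y : ℝ) :
    Integrable (fun s => gd (τ * s) * (Real.sin (s * y) / s)) := by
  refine Integrable.mono' ((integrable_gd_scaled hτ).mul_const |y|) ?_
    (Filter.Eventually.of_forall fun s => ?_)
  · have := continuous_gd.measurable
    exact Measurable.aestronglyMeasurable (by fun_prop)
  · rw [Real.norm_eq_abs, abs_mul, abs_of_pos (gd_pos _)]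
    exact mul_le_mul_of_nonneg_left (abs_sin_mul_div_le s y) (gd_pos _).le

lemma edge_fourier (ρ x : ℝ) :
    edge ρ x = 1 / 2 + (2 * Real.pi)⁻¹ *
      ∫ s : ℝ, (gd s * (Real.sin (s * x) / s) + ρ * (s ^ 2 * gd s * Real.cos (s * x))) := by
  have hpi : Real.sqrt (2 * Real.pi) ^ 2 = 2 * Real.pi := Real.sq_sqrt (by positivity)
  have hpi0 : Real.sqrt (2 * Real.pi) ≠ 0 := by positivity
  have e : (2 * Real.pi)⁻¹ * Real.sqrt (2 * Real.pi) = (Real.sqrt (2 * Real.pi))⁻¹ := by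
    generalize Real.sqrt (2 * Real.pi) = r at *
    rw [← hpi]
    field_simp
  rw [integral_add (integrable_gd_sin_div x) ((integrable_pow_gd_mul (k := 2)
    (f := fun s => Real.cos (s * x)) (by fun_prop) (fun s => Real.abs_cos_le_one _)).const_mul ρ),
    integral_const_mul, integral_sq_gd_cos, edge, cdf_fourier, ← e]
  ring

/-- The distribution function of the finite distribution with weights `w` at the points `X`. -/
noncomputable def dist {ι : Type*} (I : Finset ι) (w X : ι → ℝ) (x : ℝ) : ℝ :=
  ∑ i ∈ I, w i * (if X i < x then 1 else 0)

/-- Its characteristic function. -/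
noncomputable def chf {ι : Type*} (I : Finset ι) (w X : ι → ℝ) (s : ℝ) : ℂ :=
  ∑ i ∈ I, (w i : ℂ) * Complex.exp ((s * X i : ℝ) * Complex.I)

lemma integral_step {τ : ℝ} (hτ : 0 < τ) (x X : ℝ) :
    (Real.sqrt (2 * Real.pi))⁻¹ * ∫ z : ℝ, (if X < x - τ * z then 1 else 0) * gd z =
      stdNormalCDF ((x - X) / τ) := by
  rw [stdNormalCDF_eq, integral_Iic_eq_integral_Iio, ← integral_indicator measurableSet_Iio]
  congr 2
  funext z
  have : X < x - τ * z ↔ z ∈ Set.Iio ((x - X) / τ) := by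
    rw [Set.mem_Iio, lt_div_iff₀ hτ]
    constructor <;> intro h <;> linarith
  by_cases h : X < x - τ * z
  · rw [if_pos h, Set.indicator_of_mem (this.1 h), one_mul]
  · rw [if_neg h, Set.indicator_of_notMem (fun h' => h (this.2 h')), zero_mul]

lemma integrable_step {τ : ℝ} (x X : ℝ) :
    Integrable (fun z : ℝ => (if X < x - τ * z then (1 : ℝ) else 0) * gd z) := by
  refine Integrable.mono' integrable_gd ?_ (Filter.Eventually.of_forall fun z => ?_)
  · have := continuous_gd.measurable
    refine Measurable.aestronglyMeasurable (Measurable.mul ?_ this)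
    exact Measurable.ite (measurableSet_lt measurable_const (by fun_prop)) measurable_const
      measurable_const
  · rw [Real.norm_eq_abs, abs_mul, abs_of_pos (gd_pos _)]
    refine mul_le_of_le_one_left (gd_pos _).le ?_
    split_ifs <;> simp

/-- An Esseen-type inequality with a Gaussian kernel. -/
lemma smoothing {ι : Type*} (I : Finset ι) (w X : ι → ℝ) (hw : ∀ i ∈ I, 0 ≤ w i)
    (hw1 : ∑ i ∈ I, w i = 1) {ρ τ : ℝ} (hρ0 : 0 ≤ ρ) (hρ1 : ρ ≤ 1) (hτ : 0 < τ)
    {b : ℝ → ℝ} (hb : Integrable b)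
    (hle : ∀ s : ℝ, s ≠ 0 → ‖(gd (τ * s) : ℂ) * chf I w X s -
      (gd s : ℂ) * (1 - (ρ * s ^ 3 : ℝ) * Complex.I)‖ ≤ |s| * b s) (x : ℝ) :
    |dist I w X x - edge ρ x| ≤ (∫ s, b s) + 96 * τ := by
  have hmono : Monotone (dist I w X) := by
    intro x y hxy
    refine sum_le_sum fun i hi => mul_le_mul_of_nonneg_left ?_ (hw i hi)
    split_ifs with h1 h2
    · exact le_rfl
    · exact absurd (h1.trans_le hxy) h2
    · exact zero_le_one
    · exact le_rfl
  have hd0 : ∀ x, 0 ≤ dist I w X x := fun x => sum_nonneg fun i hi =>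
    mul_nonneg (hw i hi) (by split_ifs <;> simp)
  have hd1 : ∀ x, dist I w X x ≤ 1 := fun x => by
    rw [← hw1]
    refine sum_le_sum fun i hi => mul_le_of_le_one_right (hw i hi) ?_
    split_ifs <;> simp
  have hintF : ∀ x, Integrable (fun z => dist I w X (x - τ * z) * gd z) := by
    intro x
    have : (fun z => dist I w X (x - τ * z) * gd z) =
        fun z => ∑ i ∈ I, w i * ((if X i < x - τ * z then (1 : ℝ) else 0) * gd z) := by
      funext z
      unfold dist
      rw [sum_mul]
      exact sum_congr rfl fun i _ => by ring
    rw [this]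
    exact integrable_finsetSum _ fun i _ => (integrable_step x (X i)).const_mul _
  have hsm : ∀ x, (Real.sqrt (2 * Real.pi))⁻¹ * (∫ z, dist I w X (x - τ * z) * gd z) =
      1 / 2 + (2 * Real.pi)⁻¹ *
        ∫ s : ℝ, ∑ i ∈ I, w i * (gd (τ * s) * (Real.sin (s * (x - X i)) / s)) := by
    intro x
    have : (fun z => dist I w X (x - τ * z) * gd z) =
        fun z => ∑ i ∈ I, w i * ((if X i < x - τ * z then (1 : ℝ) else 0) * gd z) := by
      funext z
      unfold dist
      rw [sum_mul]
      exact sum_congr rfl fun i _ => by ring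
    rw [this, integral_finsetSum _ fun i _ => (integrable_step x (X i)).const_mul _,
      integral_finsetSum _ fun i _ => (integrable_gd_scaled_sin hτ (x - X i)).const_mul _,
      mul_sum, mul_sum]
    have h1 : ∀ i ∈ I, (Real.sqrt (2 * Real.pi))⁻¹ *
        ∫ z : ℝ, w i * ((if X i < x - τ * z then (1 : ℝ) else 0) * gd z) =
        w i * (1 / 2) + (2 * Real.pi)⁻¹ *
          ∫ s : ℝ, w i * (gd (τ * s) * (Real.sin (s * (x - X i)) / s)) := by
      intro i _
      rw [integral_const_mul, integral_const_mul, mul_left_comm, integral_step hτ,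
        cdf_scaled_fourier hτ]
      ring
    rw [sum_congr rfl h1, sum_add_distrib, ← sum_mul, hw1, one_mul]
  have hη : ∀ x, |(Real.sqrt (2 * Real.pi))⁻¹ * (∫ z, dist I w X (x - τ * z) * gd z) -
      edge ρ x| ≤ (∫ s, b s) / 2 := by
    intro x
    have hFi : Integrable (fun s : ℝ =>
        ∑ i ∈ I, w i * (gd (τ * s) * (Real.sin (s * (x - X i)) / s))) :=
      integrable_finsetSum _ fun i _ => (integrable_gd_scaled_sin hτ (x - X i)).const_mul _
    have hG : Integrable (fun s : ℝ =>
        gd s * (Real.sin (s * x) / s) + ρ * (s ^ 2 * gd s * Real.cos (s * x))) :=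
      (integrable_gd_sin_div x).add ((integrable_pow_gd_mul (k := 2)
        (f := fun s => Real.cos (s * x)) (by fun_prop)
        (fun s => Real.abs_cos_le_one _)).const_mul ρ)
    rw [hsm, edge_fourier, add_sub_add_left_eq_sub, ← mul_sub, ← integral_sub hFi hG]
    have hne : ∀ᵐ s : ℝ, s ≠ 0 := by
      rw [ae_iff]; simp
    have hbound : ‖∫ s : ℝ, (∑ i ∈ I, w i * (gd (τ * s) * (Real.sin (s * (x - X i)) / s)) -
        (gd s * (Real.sin (s * x) / s) + ρ * (s ^ 2 * gd s * Real.cos (s * x))))‖ ≤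
        ∫ s, b s := by
      refine norm_integral_le_of_norm_le hb ?_
      filter_upwards [hne] with s hs
      have h1 := hle s hs
      set E := (gd (τ * s) : ℂ) * chf I w X s -
        (gd s : ℂ) * (1 - (ρ * s ^ 3 : ℝ) * Complex.I) with hE
      have hre : E.re = gd (τ * s) * ∑ i ∈ I, w i * Real.cos (s * X i) - gd s := by
        rw [hE, Complex.sub_re, Complex.re_ofReal_mul, Complex.re_ofReal_mul]
        congr 1
        · congr 1
          unfold chf
          rw [Complex.re_sum]
          refine sum_congr rfl fun i _ => ?_
          rw [Complex.re_ofReal_mul, Complex.exp_ofReal_mul_I_re]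
        · rw [Complex.sub_re, Complex.one_re, Complex.re_ofReal_mul, Complex.I_re]; ring
      have him : E.im = gd (τ * s) * ∑ i ∈ I, w i * Real.sin (s * X i) + gd s * (ρ * s ^ 3) := by
        rw [hE, Complex.sub_im, Complex.im_ofReal_mul, Complex.im_ofReal_mul]
        have e1 : (chf I w X s).im = ∑ i ∈ I, w i * Real.sin (s * X i) := by
          unfold chf
          rw [Complex.im_sum]
          refine sum_congr rfl fun i _ => ?_
          rw [Complex.im_ofReal_mul, Complex.exp_ofReal_mul_I_im]
        have e2 : (1 - ((ρ * s ^ 3 : ℝ) : ℂ) * Complex.I).im = -(ρ * s ^ 3) := by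
          rw [Complex.sub_im, Complex.one_im, Complex.im_ofReal_mul, Complex.I_im]; ring
        rw [e1, e2]
        ring
      have hkey : ∑ i ∈ I, w i * (gd (τ * s) * (Real.sin (s * (x - X i)) / s)) -
        (gd s * (Real.sin (s * x) / s) + ρ * (s ^ 2 * gd s * Real.cos (s * x))) =
        (Real.sin (s * x) * E.re - Real.cos (s * x) * E.im) / s := by
        rw [hre, him]
        have e3 : ∑ i ∈ I, w i * (gd (τ * s) * (Real.sin (s * (x - X i)) / s)) =
            gd (τ * s) / s * (Real.sin (s * x) * ∑ i ∈ I, w i * Real.cos (s * X i) -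
              Real.cos (s * x) * ∑ i ∈ I, w i * Real.sin (s * X i)) := by
          rw [mul_sum, mul_sum, ← sum_sub_distrib, mul_sum]
          refine sum_congr rfl fun i _ => ?_
          rw [mul_sub s x, Real.sin_sub]
          ring
        rw [e3]
        field_simp
        ring
      rw [hkey, Real.norm_eq_abs, abs_div, div_le_iff₀ (abs_pos.2 hs), mul_comm (b s)]
      refine le_trans ?_ h1
      refine abs_le_of_sq_le_sq ?_ (norm_nonneg _)
      rw [Complex.sq_norm, Complex.normSq_apply]
      nlinarith [Real.sin_sq_add_cos_sq (s * x),
        sq_nonneg (Real.cos (s * x) * E.re + Real.sin (s * x) * E.im)]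
    rw [abs_mul, abs_of_pos (by positivity : (0 : ℝ) < (2 * Real.pi)⁻¹)]
    rw [Real.norm_eq_abs] at hbound
    have h2 : (2 * Real.pi)⁻¹ ≤ 1 / 2 := by
      rw [inv_le_comm₀ (by positivity) (by norm_num)]
      norm_num
      linarith [Real.pi_gt_three]
    calc _ ≤ 1 / 2 * ∫ s, b s := mul_le_mul h2 hbound (abs_nonneg _) (by norm_num)
      _ = _ := by ring
  have hΔ₀ : ∀ x, |dist I w X x - edge ρ x| ≤ 4 := by
    intro x
    have h1 := hd0 x; have h2 := hd1 x; have h3 := cdf_nonneg x; have h4 := cdf_le_one x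
    have h5 : |ρ * ((Real.sqrt (2 * Real.pi))⁻¹ * ((1 - x ^ 2) * gd x))| ≤ 2 := by
      rw [abs_mul, abs_mul, abs_of_nonneg hρ0,
        abs_of_nonneg (inv_nonneg.2 (Real.sqrt_nonneg _))]
      have h7 := mul_le_mul hρ1 (mul_le_mul inv_sqrt_two_pi_le (abs_edge_term_le x)
        (abs_nonneg _) zero_le_one) (by positivity) zero_le_one
      linarith
    have h6 := abs_le.1 h5
    unfold edge
    rw [abs_le]
    constructor <;> linarith [h6.1, h6.2]
  have := desmooth hmono (by norm_num : (0 : ℝ) ≤ 8) hτ (edge_lipschitz hρ0 hρ1) hΔ₀ hintF hη x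
  linarith

end ErdosTuran

namespace ErdosTuran
open Finset MeasureTheory

/-! ### Logarithmic power sums -/

lemma pow_succ_sub_le {a b : ℝ} (ha : 0 ≤ a) (hab : a ≤ b) (k : ℕ) :
    b ^ (k + 1) - a ^ (k + 1) ≤ (k + 1) * b ^ k * (b - a) := by
  induction k with
  | zero => simp
  | succ k ih =>
    have hb : 0 ≤ b := ha.trans hab
    have h1 : a ^ (k + 1) ≤ b ^ (k + 1) := pow_le_pow_left₀ ha hab _
    have h2 := mul_le_mul_of_nonneg_left ih hb
    have h3 := mul_le_mul_of_nonneg_right h1 (sub_nonneg.2 hab)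
    push_cast
    calc b ^ (k + 1 + 1) - a ^ (k + 1 + 1)
        = b * (b ^ (k + 1) - a ^ (k + 1)) + a ^ (k + 1) * (b - a) := by ring
      _ ≤ b * ((k + 1) * b ^ k * (b - a)) + b ^ (k + 1) * (b - a) := add_le_add h2 h3
      _ = _ := by ring

lemma le_pow_succ_sub {a b : ℝ} (ha : 0 ≤ a) (hab : a ≤ b) (k : ℕ) :
    (k + 1) * a ^ k * (b - a) ≤ b ^ (k + 1) - a ^ (k + 1) := by
  induction k with
  | zero => simp
  | succ k ih =>
    have hb : 0 ≤ b := ha.trans hab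
    have h1 : a ^ (k + 1) ≤ b ^ (k + 1) := pow_le_pow_left₀ ha hab _
    have h2 := mul_le_mul_of_nonneg_left ih ha
    have h3 := mul_le_mul_of_nonneg_right h1 (sub_nonneg.2 hab)
    push_cast
    calc _ = a * ((k + 1) * a ^ k * (b - a)) + a ^ (k + 1) * (b - a) := by ring
      _ ≤ a * (b ^ (k + 1) - a ^ (k + 1)) + b ^ (k + 1) * (b - a) := add_le_add h2 h3
      _ = _ := by ring

lemma log_succ_sub_log {m : ℕ} (hm : 1 ≤ m) :
    1 / ((m : ℝ) + 1) ≤ Real.log ((m + 1 : ℕ) : ℝ) - Real.log m ∧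
      Real.log ((m + 1 : ℕ) : ℝ) - Real.log m ≤ 1 / m := by
  have hm0 : (0 : ℝ) < m := by exact_mod_cast hm
  have h1 : Real.log ((m + 1 : ℕ) : ℝ) - Real.log m = Real.log (((m : ℝ) + 1) / m) := by
    rw [Real.log_div (by positivity) hm0.ne']; push_cast; rfl
  rw [h1]
  constructor
  · have := Real.one_sub_inv_le_log_of_pos (x := ((m : ℝ) + 1) / m) (by positivity)
    refine le_trans (le_of_eq ?_) this
    field_simp
    ring
  · have := Real.log_le_sub_one_of_pos (x := ((m : ℝ) + 1) / m) (by positivity)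
    refine le_trans this (le_of_eq ?_)
    field_simp
    ring

lemma log_sum_bounds {k : ℕ} (hk : 1 ≤ k) {n : ℕ} (hn : 1 ≤ n) :
    ∑ m ∈ range n, Real.log m ^ k / (m + 1) ≤ Real.log n ^ (k + 1) / (k + 1) ∧
    Real.log n ^ (k + 1) / (k + 1) ≤
      ∑ m ∈ range n, Real.log m ^ k / (m + 1) + Real.log n ^ k * (2 - 1 / n) := by
  induction n, hn using Nat.le_induction with
  | base => 
    have h0 : k ≠ 0 := by omega
    simp [h0]
  | succ m hm ih =>
    obtain ⟨ih1, ih2⟩ := ih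
    obtain ⟨h1, h2⟩ := log_succ_sub_log hm
    have hm0 : (0 : ℝ) < m := by exact_mod_cast hm
    set a := Real.log m with ha
    set b := Real.log ((m + 1 : ℕ) : ℝ) with hb
    have ha0 : 0 ≤ a := Real.log_natCast_nonneg m
    have hab : a ≤ b := by
      have : (0 : ℝ) ≤ 1 / ((m : ℝ) + 1) := by positivity
      linarith
    have hk1 : (0 : ℝ) < k + 1 := by positivity
    have hp := pow_le_pow_left₀ ha0 hab k
    have hak : 0 ≤ a ^ k := pow_nonneg ha0 k
    rw [sum_range_succ]
    constructor
    · have h3 := le_pow_succ_sub ha0 hab k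
      have h4 : (k + 1 : ℝ) * a ^ k * (1 / (m + 1)) ≤ (k + 1) * a ^ k * (b - a) := by gcongr
      have h5 : a ^ k / (m + 1) ≤ (b ^ (k + 1) - a ^ (k + 1)) / (k + 1) := by
        rw [le_div_iff₀ hk1]
        calc _ = (k + 1 : ℝ) * a ^ k * (1 / (m + 1)) := by ring
          _ ≤ _ := h4.trans h3
      rw [sub_div] at h5
      linarith
    · have h3 := pow_succ_sub_le ha0 hab k
      have h5 : (b ^ (k + 1) - a ^ (k + 1)) / (k + 1) ≤ b ^ k * (b - a) := by
        rw [div_le_iff₀ hk1]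
        calc _ ≤ _ := h3
          _ = _ := by ring
      rw [sub_div] at h5
      have hm1 : (1 : ℝ) / m ≤ 1 := by
        rw [div_le_one hm0]; exact_mod_cast hm
      have hm2 : (1 : ℝ) / ((m : ℝ) + 1) ≤ 1 := by
        rw [div_le_one (by positivity)]; linarith
      have h6 : (b ^ k - a ^ k) * (b - a) ≤ (b ^ k - a ^ k) * (2 - 1 / (m + 1)) :=
        mul_le_mul_of_nonneg_left (by linarith) (by linarith)
      have h7 : a ^ k * (b - a) ≤ a ^ k * (1 / m) := mul_le_mul_of_nonneg_left h2 hak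
      push_cast
      have h8 : a ^ k / (m + 1) = a ^ k * (1 / (m + 1)) := by ring
      rw [h8]
      nlinarith

lemma sum_inv_sq_le (n : ℕ) : ∑ m ∈ range n, (1 / ((m : ℝ) + 1)) ^ 2 ≤ 2 := by
  have : ∀ n : ℕ, ∑ m ∈ range n, (1 / ((m : ℝ) + 1)) ^ 2 ≤ 2 - 1 / (n : ℝ) := by
    intro n
    induction n with
    | zero => norm_num
    | succ n ih =>
      rw [sum_range_succ]
      rcases Nat.eq_zero_or_pos n with rfl | hn
      · norm_num
      have hn0 : (0 : ℝ) < n := by exact_mod_cast hn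
      have : (1 / ((n : ℝ) + 1)) ^ 2 ≤ 1 / n - 1 / ((n : ℝ) + 1) := by
        rw [div_pow, div_sub_div _ _ (by positivity) (by positivity),
          div_le_div_iff₀ (by positivity) (by positivity)]
        nlinarith
      push_cast
      linarith
  have h := this n
  have : (0 : ℝ) ≤ 1 / (n : ℝ) := by positivity
  linarith

/-- `∑ Var(log m · 1_m)` over independent marks with success probabilities `1/(m+1)`. -/
noncomputable def VV (n : ℕ) : ℝ :=
  ∑ m ∈ range n, (1 / ((m : ℝ) + 1)) * (1 - 1 / ((m : ℝ) + 1)) * Real.log m ^ 2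

/-- The sum of the third cumulants of the same variables. -/
noncomputable def KK (n : ℕ) : ℝ :=
  ∑ m ∈ range n, (1 / ((m : ℝ) + 1)) * (1 - 1 / ((m : ℝ) + 1)) * (1 - 2 * (1 / ((m : ℝ) + 1))) *
    Real.log m ^ 3

lemma inv_succ_mem (m : ℕ) : 0 ≤ 1 / ((m : ℝ) + 1) ∧ 1 / ((m : ℝ) + 1) ≤ 1 := by
  refine ⟨by positivity, ?_⟩
  rw [div_le_one (by positivity)]
  have : (0 : ℝ) ≤ m := by positivity
  linarith

lemma sum_inv_sq_log_le (n k : ℕ) :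
    ∑ m ∈ range n, (1 / ((m : ℝ) + 1)) ^ 2 * Real.log m ^ k ≤ 2 * Real.log n ^ k := by
  calc _ ≤ ∑ m ∈ range n, (1 / ((m : ℝ) + 1)) ^ 2 * Real.log n ^ k := by
        refine sum_le_sum fun m hm => ?_
        have h0 : 0 ≤ Real.log m := Real.log_natCast_nonneg m
        have h1 : Real.log m ≤ Real.log n := by
          rcases Nat.eq_zero_or_pos m with rfl | hm0
          · simpa using Real.log_natCast_nonneg n
          · exact Real.log_le_log (by exact_mod_cast hm0)
              (by exact_mod_cast (mem_range.1 hm).le)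
        gcongr
    _ = (∑ m ∈ range n, (1 / ((m : ℝ) + 1)) ^ 2) * Real.log n ^ k := by rw [sum_mul]
    _ ≤ _ := mul_le_mul_of_nonneg_right (sum_inv_sq_le n)
        (pow_nonneg (Real.log_natCast_nonneg n) k)

lemma VV_bounds {n : ℕ} (hn : 1 ≤ n) :
    Real.log n ^ 3 / 3 - 4 * Real.log n ^ 2 ≤ VV n ∧ VV n ≤ Real.log n ^ 3 / 3 := by
  have h := log_sum_bounds (k := 2) (by norm_num) hn
  have h2 := sum_inv_sq_log_le n 2
  have h3 : (0 : ℝ) ≤ ∑ m ∈ range n, (1 / ((m : ℝ) + 1)) ^ 2 * Real.log m ^ 2 :=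
    sum_nonneg fun m _ => by positivity
  have h4 : VV n = ∑ m ∈ range n, Real.log m ^ 2 / (m + 1) -
      ∑ m ∈ range n, (1 / ((m : ℝ) + 1)) ^ 2 * Real.log m ^ 2 := by
    unfold VV
    rw [← sum_sub_distrib]
    exact sum_congr rfl fun m _ => by ring
  have h5 : Real.log n ^ 2 * (1 / n) ≥ 0 := by positivity
  rw [h4]
  norm_num at h
  norm_num at h5
  constructor <;> nlinarith [h.1, h.2]

lemma KK_bounds {n : ℕ} (hn : 1 ≤ n) :
    Real.log n ^ 4 / 4 - 8 * Real.log n ^ 3 ≤ KK n ∧ KK n ≤ Real.log n ^ 4 / 4 := by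
  have h := log_sum_bounds (k := 3) (by norm_num) hn
  have h2 := sum_inv_sq_log_le n 3
  have h4 : KK n ≤ ∑ m ∈ range n, Real.log m ^ 3 / (m + 1) := by
    refine sum_le_sum fun m _ => ?_
    have hl : 0 ≤ Real.log m ^ 3 := pow_nonneg (Real.log_natCast_nonneg m) 3
    obtain ⟨h0, h1⟩ := inv_succ_mem m
    rw [div_eq_mul_one_div (Real.log m ^ 3), mul_comm (Real.log m ^ 3)]
    set p := 1 / ((m : ℝ) + 1)
    refine mul_le_mul_of_nonneg_right ?_ hl
    nlinarith [mul_nonneg h0 h0, mul_nonneg (mul_nonneg h0 h0) (sub_nonneg.2 h1)]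
  have h5 : ∑ m ∈ range n, Real.log m ^ 3 / (m + 1) -
      3 * ∑ m ∈ range n, (1 / ((m : ℝ) + 1)) ^ 2 * Real.log m ^ 3 ≤ KK n := by
    rw [mul_sum, ← sum_sub_distrib]
    refine sum_le_sum fun m _ => ?_
    have hl : 0 ≤ Real.log m ^ 3 := pow_nonneg (Real.log_natCast_nonneg m) 3
    obtain ⟨h0, h1⟩ := inv_succ_mem m
    rw [div_eq_mul_one_div]
    set p := 1 / ((m : ℝ) + 1)
    nlinarith [mul_nonneg (mul_nonneg (mul_nonneg h0 h0) h0) hl]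
  have h6 : Real.log n ^ 3 * (1 / n) ≥ 0 := 
    mul_nonneg (pow_nonneg (Real.log_natCast_nonneg n) 3) (by positivity)
  norm_num at h
  norm_num at h6
  constructor <;> nlinarith [h.1, h.2]

/-! ### The characteristic function of the sum of logarithms of the marks -/

/-- The characteristic function at `x` of a centred Bernoulli variable of parameter `p`. -/
noncomputable def fac (p x : ℝ) : ℂ :=
  (p : ℂ) * Complex.exp (((1 - p) * x : ℝ) * Complex.I) +
    ((1 - p : ℝ) : ℂ) * Complex.exp ((-(p * x) : ℝ) * Complex.I)

lemma sq_norm_fac (p x : ℝ) : ‖fac p x‖ ^ 2 = 1 - 2 * (p * (1 - p)) * (1 - Real.cos x) := by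
  have hre : (fac p x).re = p * Real.cos ((1 - p) * x) + (1 - p) * Real.cos (p * x) := by
    unfold fac
    rw [Complex.add_re, Complex.re_ofReal_mul, Complex.re_ofReal_mul,
      Complex.exp_ofReal_mul_I_re, Complex.exp_ofReal_mul_I_re, Real.cos_neg]
  have him : (fac p x).im = p * Real.sin ((1 - p) * x) - (1 - p) * Real.sin (p * x) := by
    unfold fac
    rw [Complex.add_im, Complex.im_ofReal_mul, Complex.im_ofReal_mul,
      Complex.exp_ofReal_mul_I_im, Complex.exp_ofReal_mul_I_im, Real.sin_neg]
    ring
  have hx : Real.cos x = Real.cos ((1 - p) * x) * Real.cos (p * x) -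
      Real.sin ((1 - p) * x) * Real.sin (p * x) := by
    rw [← Real.cos_add]; congr 1; ring
  rw [Complex.sq_norm, Complex.normSq_apply, hre, him, hx]
  have h1 := Real.sin_sq_add_cos_sq ((1 - p) * x)
  have h2 := Real.sin_sq_add_cos_sq (p * x)
  linear_combination p ^ 2 * h1 + (1 - p) ^ 2 * h2

lemma norm_fac_le_one {p : ℝ} (h0 : 0 ≤ p) (h1 : p ≤ 1) (x : ℝ) : ‖fac p x‖ ≤ 1 := by
  have h := sq_norm_fac p x
  have h2 : 0 ≤ 2 * (p * (1 - p)) * (1 - Real.cos x) :=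
    mul_nonneg (by nlinarith) (by linarith [Real.cos_le_one x])
  exact abs_le_one_iff_mul_self_le_one.2 (by nlinarith) |> (le_abs_self _).trans

lemma norm_fac_le_exp {p : ℝ} (h0 : 0 ≤ p) (h1 : p ≤ 1) {x : ℝ} (hx : |x| ≤ 1) :
    ‖fac p x‖ ≤ Real.exp (-(p * (1 - p) * x ^ 2) / 5) := by
  have hpi := Real.pi_gt_three
  have hpi2 := Real.pi_lt_d2
  have hc := Real.cos_le_one_sub_mul_cos_sq (x := x) (by linarith)
  have h5 : (1 : ℝ) / 5 ≤ 2 / Real.pi ^ 2 := by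
    rw [div_le_div_iff₀ (by norm_num) (by positivity)]
    nlinarith
  have h6 : x ^ 2 / 5 ≤ 1 - Real.cos x := by
    nlinarith [mul_le_mul_of_nonneg_right h5 (sq_nonneg x)]
  have h7 : 0 ≤ p * (1 - p) := mul_nonneg h0 (by linarith)
  have h8 := Real.add_one_le_exp (-(2 * (p * (1 - p) * x ^ 2) / 5))
  refine (sq_le_sq₀ (norm_nonneg _) (Real.exp_pos _).le).1 ?_
  rw [sq_norm_fac, ← Real.exp_nat_mul]
  have h9 : ((2 : ℕ) : ℝ) * (-(p * (1 - p) * x ^ 2) / 5) = -(2 * (p * (1 - p) * x ^ 2) / 5) := by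
    push_cast; ring
  rw [h9]
  nlinarith [mul_le_mul_of_nonneg_left h6 h7]

/-- The exponential with the same first three cumulants as a centred Bernoulli variable. -/
noncomputable def ebd (p x : ℝ) : ℂ :=
  Complex.exp (((-(p * (1 - p) * x ^ 2 / 2) : ℝ) : ℂ) -
    ((p * (1 - p) * (1 - 2 * p) * x ^ 3 / 6 : ℝ) : ℂ) * Complex.I)

lemma norm_ebd_le_one {p : ℝ} (h0 : 0 ≤ p) (h1 : p ≤ 1) (x : ℝ) : ‖ebd p x‖ ≤ 1 := by
  unfold ebd
  rw [Complex.norm_exp, Real.exp_le_one_iff, Complex.sub_re, Complex.ofReal_re,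
    Complex.re_ofReal_mul, Complex.I_re]
  have : 0 ≤ p * (1 - p) * x ^ 2 / 2 := by
    have : 0 ≤ 1 - p := by linarith
    positivity
  linarith

lemma norm_exp_taylor {y : ℝ} (hy : |y| ≤ 1) :
    ‖Complex.exp ((y : ℂ) * Complex.I) - (1 + y * Complex.I - y ^ 2 / 2 -
      y ^ 3 / 6 * Complex.I)‖ ≤ y ^ 4 / 10 := by
  have hn : ‖(y : ℂ) * Complex.I‖ = |y| := by simp
  have h := Complex.exp_bound (x := (y : ℂ) * Complex.I) (by rw [hn]; exact hy)
    (n := 4) (by norm_num)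
  have he : ∑ m ∈ range 4, ((y : ℂ) * Complex.I) ^ m / (m.factorial : ℂ) =
      1 + y * Complex.I - y ^ 2 / 2 - y ^ 3 / 6 * Complex.I := by
    simp only [sum_range_succ, sum_range_zero, Nat.factorial]
    push_cast
    have h2 : Complex.I ^ 2 = -1 := Complex.I_sq
    have h3 : Complex.I ^ 3 = -Complex.I := Complex.I_pow_three
    rw [mul_pow _ _ 2, mul_pow _ _ 3, h2, h3]
    ring
  rw [he, hn] at h
  refine h.trans ?_
  have : |y| ^ 4 = y ^ 4 := by rw [← abs_pow]; exact abs_of_nonneg (by positivity)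
  rw [this]
  have : 0 ≤ y ^ 4 := by positivity
  norm_num [Nat.factorial]
  linarith

lemma norm_fac_sub_ebd {p : ℝ} (h0 : 0 ≤ p) (h1 : p ≤ 1) {x : ℝ} (hx : |x| ≤ 1) :
    ‖fac p x - ebd p x‖ ≤ p * x ^ 4 := by
  have hq : 0 ≤ 1 - p := by linarith
  have hx4 : 0 ≤ x ^ 4 := by positivity
  have hA := norm_exp_taylor (y := (1 - p) * x) (by
    rw [abs_mul, abs_of_nonneg hq]; nlinarith [abs_nonneg x])
  have hB := norm_exp_taylor (y := -(p * x)) (by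
    rw [abs_neg, abs_mul, abs_of_nonneg h0]; nlinarith [abs_nonneg x])
  set z : ℂ := ((-(p * (1 - p) * x ^ 2 / 2) : ℝ) : ℂ) -
    ((p * (1 - p) * (1 - 2 * p) * x ^ 3 / 6 : ℝ) : ℂ) * Complex.I with hz
  have hzn : ‖z‖ ≤ 2 / 3 * p * x ^ 2 := by
    have e1 : ‖((-(p * (1 - p) * x ^ 2 / 2) : ℝ) : ℂ)‖ ≤ p * x ^ 2 / 2 := by
      rw [Complex.norm_real, norm_neg, Real.norm_eq_abs, abs_of_nonneg (by positivity)]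
      have : p * (1 - p) ≤ p := by nlinarith
      gcongr
    have e2 : ‖((p * (1 - p) * (1 - 2 * p) * x ^ 3 / 6 : ℝ) : ℂ) * Complex.I‖ ≤
        p * x ^ 2 / 6 := by
      rw [norm_mul, Complex.norm_I, mul_one, Complex.norm_real, Real.norm_eq_abs, abs_div,
        abs_mul, abs_mul, abs_mul, abs_of_nonneg h0, abs_of_nonneg hq,
        abs_of_pos (by norm_num : (0 : ℝ) < 6)]
      have f1 : |1 - 2 * p| ≤ 1 := abs_le.2 ⟨by linarith, by linarith⟩
      have f2 : |x ^ 3| ≤ x ^ 2 := by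
        rw [abs_pow, ← sq_abs x]
        exact pow_le_pow_of_le_one (abs_nonneg _) hx (by norm_num)
      have f3 : p * (1 - p) * |1 - 2 * p| ≤ p := by
        calc p * (1 - p) * |1 - 2 * p| ≤ p * 1 * 1 := by gcongr; linarith
          _ = p := by ring
      gcongr
    calc ‖z‖ ≤ _ := norm_sub_le _ _
      _ ≤ p * x ^ 2 / 2 + p * x ^ 2 / 6 := add_le_add e1 e2
      _ = _ := by ring
  have hx2 : x ^ 2 ≤ 1 := by rw [← sq_abs]; nlinarith [abs_nonneg x]
  have hpx : p * x ^ 2 ≤ 1 := by nlinarith [sq_nonneg x]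
  have hC := Complex.norm_exp_sub_one_sub_id_le (x := z) (by nlinarith)
  have hC2 : ‖z‖ ^ 2 ≤ 4 / 9 * p * x ^ 4 := by
    calc ‖z‖ ^ 2 ≤ (2 / 3 * p * x ^ 2) ^ 2 := pow_le_pow_left₀ (norm_nonneg _) hzn 2
      _ = 4 / 9 * (p * p) * x ^ 4 := by ring
      _ ≤ 4 / 9 * p * x ^ 4 := by
        have : p * p ≤ p := by nlinarith
        gcongr
  have hsplit : fac p x - ebd p x =
      (p : ℂ) * (Complex.exp ((((1 - p) * x : ℝ) : ℂ) * Complex.I) -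
        (1 + (((1 - p) * x : ℝ) : ℂ) * Complex.I - (((1 - p) * x : ℝ) : ℂ) ^ 2 / 2 -
          (((1 - p) * x : ℝ) : ℂ) ^ 3 / 6 * Complex.I)) +
      ((1 - p : ℝ) : ℂ) * (Complex.exp (((-(p * x) : ℝ) : ℂ) * Complex.I) -
        (1 + ((-(p * x) : ℝ) : ℂ) * Complex.I - ((-(p * x) : ℝ) : ℂ) ^ 2 / 2 -
          ((-(p * x) : ℝ) : ℂ) ^ 3 / 6 * Complex.I)) -
      (Complex.exp z - 1 - z) := by
    unfold fac ebd
    rw [← hz, hz]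
    push_cast
    ring
  rw [hsplit]
  have n1 : ‖(p : ℂ)‖ = p := by rw [Complex.norm_real, Real.norm_eq_abs, abs_of_nonneg h0]
  have n2 : ‖((1 - p : ℝ) : ℂ)‖ = 1 - p := by
    rw [Complex.norm_real, Real.norm_eq_abs, abs_of_nonneg hq]
  refine (norm_sub_le _ _).trans ((add_le_add (norm_add_le _ _) le_rfl).trans ?_)
  rw [norm_mul, norm_mul, n1, n2]
  have g1 := mul_le_mul_of_nonneg_left hA h0
  have g2 := mul_le_mul_of_nonneg_left hB hq
  have g3 : p * (((1 - p) * x) ^ 4 / 10) ≤ p * (x ^ 4 / 10) := by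
    rw [mul_pow]
    have : (1 - p) ^ 4 ≤ 1 := pow_le_one₀ hq (by linarith)
    have : (1 - p) ^ 4 * x ^ 4 ≤ 1 * x ^ 4 := by gcongr
    gcongr
    linarith
  have g4 : (1 - p) * ((-(p * x)) ^ 4 / 10) ≤ p * (x ^ 4 / 10) := by
    have e : (1 - p) * ((-(p * x)) ^ 4 / 10) = ((1 - p) * p ^ 3) * (p * (x ^ 4 / 10)) := by ring
    rw [e]
    refine mul_le_of_le_one_left (by positivity) ?_
    have : p ^ 3 ≤ 1 := pow_le_one₀ h0 h1
    calc (1 - p) * p ^ 3 ≤ 1 * 1 := by gcongr; linarith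
      _ = 1 := by norm_num
  nlinarith [mul_nonneg h0 hx4]

lemma norm_prod_sub_prod_le (a b : ℕ → ℂ) (ha : ∀ m, ‖a m‖ ≤ 1) (hb : ∀ m, ‖b m‖ ≤ 1) (n : ℕ) :
    ‖∏ m ∈ range n, a m - ∏ m ∈ range n, b m‖ ≤ ∑ m ∈ range n, ‖a m - b m‖ := by
  induction n with
  | zero => simp
  | succ n ih =>
    rw [prod_range_succ, prod_range_succ, sum_range_succ]
    have e : (∏ m ∈ range n, a m) * a n - (∏ m ∈ range n, b m) * b n =
        (∏ m ∈ range n, a m - ∏ m ∈ range n, b m) * a n +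
          (∏ m ∈ range n, b m) * (a n - b n) := by ring
    rw [e]
    refine (norm_add_le _ _).trans (add_le_add ?_ ?_)
    · rw [norm_mul]
      exact (mul_le_of_le_one_right (norm_nonneg _) (ha n)).trans ih
    · rw [norm_mul]
      refine mul_le_of_le_one_left (norm_nonneg _) ?_
      rw [norm_prod]
      exact prod_le_one (fun m _ => norm_nonneg _) fun m _ => hb m

lemma norm_exp_sub_exp_le {z w : ℂ} (hz : z.re ≤ 0) (hw : w.re ≤ 0) :
    ‖Complex.exp z - Complex.exp w‖ ≤ ‖z - w‖ := by
  have hconv : Convex ℝ {z : ℂ | z.re ≤ 0} := convex_halfSpace_re_le 0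
  have := hconv.norm_image_sub_le_of_norm_hasDerivWithin_le (f := Complex.exp)
    (f' := Complex.exp) (C := 1) (x := w) (y := z)
    (fun y _ => (Complex.hasDerivAt_exp y).hasDerivWithinAt)
    (fun y hy => by
      rw [Complex.norm_exp, Real.exp_le_one_iff]; exact hy) hw hz
  simpa using this

end ErdosTuran

namespace ErdosTuran
open Finset MeasureTheory

/-- The mean of `markSum` is accumulated one mark at a time. -/
lemma EE_markSum_succ (n : ℕ) :
    EE (n + 1) markSum = EE n markSum + 1 / ((n : ℝ) + 1) * Real.log n := by
  rw [EE_succ]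
  have h : EE n (fun A => markSum (insert n A)) = EE n markSum + Real.log n := by
    rw [EE_congr (g := fun A => markSum A + Real.log n), EE_add, EE_const]
    intro A hA
    unfold markSum
    rw [sum_insert (fun h => by simpa using hA h), add_comm]
  rw [h]
  have : (n : ℝ) + 1 ≠ 0 := by positivity
  field_simp
  ring

lemma chf_eq_prod (θ : ℝ) (n : ℕ) :
    ∑ A ∈ (range n).powerset, wt n A •
      Complex.exp ((θ * (markSum A - EE n markSum) : ℝ) * Complex.I) =
    ∏ m ∈ range n, fac (1 / ((m : ℝ) + 1)) (θ * Real.log m) := by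
  induction n with
  | zero => simp [wt, markSum, EE]
  | succ n ih =>
    rw [prod_range_succ, ← ih, sum_wt_succ, EE_markSum_succ]
    have hn : (n : ℝ) + 1 ≠ 0 := by positivity
    set p : ℝ := 1 / ((n : ℝ) + 1) with hp
    have hq : (n : ℝ) / (n + 1) = 1 - p := by rw [hp]; field_simp; ring
    have e1 : ∀ A ∈ (range n).powerset, wt n A •
        Complex.exp ((θ * (markSum A - (EE n markSum + p * Real.log n)) : ℝ) * Complex.I) =
        (wt n A • Complex.exp ((θ * (markSum A - EE n markSum) : ℝ) * Complex.I)) *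
          Complex.exp ((-(p * (θ * Real.log n)) : ℝ) * Complex.I) := by
      intro A _
      rw [smul_mul_assoc, ← Complex.exp_add]
      congr 2
      push_cast
      ring
    have e2 : ∀ A ∈ (range n).powerset, wt n A •
        Complex.exp ((θ * (markSum (insert n A) - (EE n markSum + p * Real.log n)) : ℝ) *
          Complex.I) =
        (wt n A • Complex.exp ((θ * (markSum A - EE n markSum) : ℝ) * Complex.I)) *
          Complex.exp (((1 - p) * (θ * Real.log n) : ℝ) * Complex.I) := by
      intro A hA
      rw [smul_mul_assoc, ← Complex.exp_add]
      have : markSum (insert n A) = Real.log n + markSum A := by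
        unfold markSum
        rw [sum_insert (fun h => by simpa using mem_powerset.1 hA h)]
      rw [this]
      congr 2
      push_cast
      ring
    rw [sum_congr rfl e1, sum_congr rfl e2, ← sum_mul, ← sum_mul, hq]
    unfold fac
    rw [Complex.real_smul, Complex.real_smul]
    ring

/-- The characteristic function of the centred `markSum`, as a product over the marks. -/
noncomputable def psi (n : ℕ) (θ : ℝ) : ℂ :=
  ∏ m ∈ range n, fac (1 / ((m : ℝ) + 1)) (θ * Real.log m)

lemma norm_psi_le_one (n : ℕ) (θ : ℝ) : ‖psi n θ‖ ≤ 1 := by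
  unfold psi
  rw [norm_prod]
  exact prod_le_one (fun m _ => norm_nonneg _) fun m _ =>
    norm_fac_le_one (inv_succ_mem m).1 (inv_succ_mem m).2 _

lemma log_le_log_of_lt {m n : ℕ} (h : m < n) : Real.log m ≤ Real.log n := by
  rcases Nat.eq_zero_or_pos m with rfl | hm0
  · simpa using Real.log_natCast_nonneg n
  · exact Real.log_le_log (by exact_mod_cast hm0) (by exact_mod_cast h.le)

/-- Decay of the characteristic function: only the marks `m ≤ e^ℓ`, on which the argument
`θ log m` is at most one, are used. -/
lemma norm_psi_le_exp {n : ℕ} {θ ℓ : ℝ} (hℓ : 48 ≤ ℓ) (hn : 1 ≤ n) (hℓn : ℓ ≤ Real.log n)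
    (hθ : |θ| * ℓ ≤ 1) : ‖psi n θ‖ ≤ Real.exp (-(θ ^ 2 * ℓ ^ 3 / 240)) := by
  set N := ⌊Real.exp ℓ⌋₊ with hN
  have hexp1 : 1 ≤ Real.exp ℓ := Real.one_le_exp (by linarith)
  have hN1 : 1 ≤ N := by
    rw [hN, Nat.one_le_floor_iff]; exact hexp1
  have hNle : (N : ℝ) ≤ Real.exp ℓ := Nat.floor_le (by positivity)
  have hNn : N ≤ n := by
    have h1 : Real.exp ℓ ≤ n := by
      rw [← Real.le_log_iff_exp_le (by exact_mod_cast hn)]; exact hℓn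
    exact_mod_cast hNle.trans h1
  have hN0 : (0 : ℝ) < N := by exact_mod_cast hN1
  have hlogN : Real.log N ≤ ℓ := (Real.log_le_iff_le_exp hN0).2 hNle
  have hlogN2 : ℓ - 1 ≤ Real.log N := by
    rw [Real.le_log_iff_exp_le hN0, Real.exp_sub, div_le_iff₀ (Real.exp_pos _)]
    have h1 := Nat.lt_floor_add_one (Real.exp ℓ)
    have h2 : (2 : ℝ) ≤ Real.exp 1 := by have := Real.add_one_le_exp (1 : ℝ); linarith
    have h3 : (1 : ℝ) ≤ N := by exact_mod_cast hN1
    rw [← hN] at h1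
    nlinarith
  unfold psi
  rw [norm_prod]
  have step1 : ∏ m ∈ range n, ‖fac (1 / ((m : ℝ) + 1)) (θ * Real.log m)‖ ≤
      ∏ m ∈ range N, ‖fac (1 / ((m : ℝ) + 1)) (θ * Real.log m)‖ := by
    exact prod_anti_set_of_le_one (fun m => norm_nonneg _)
      (fun m => norm_fac_le_one (inv_succ_mem m).1 (inv_succ_mem m).2 _)
      (range_subset_range.2 hNn)
  have step2 : ∏ m ∈ range N, ‖fac (1 / ((m : ℝ) + 1)) (θ * Real.log m)‖ ≤
      ∏ m ∈ range N, Real.exp (-(1 / ((m : ℝ) + 1) * (1 - 1 / ((m : ℝ) + 1)) *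
        (θ * Real.log m) ^ 2) / 5) := by
    refine prod_le_prod (fun m _ => norm_nonneg _) fun m hm => ?_
    refine norm_fac_le_exp (inv_succ_mem m).1 (inv_succ_mem m).2 ?_
    rw [abs_mul, abs_of_nonneg (Real.log_natCast_nonneg m)]
    have := log_le_log_of_lt (mem_range.1 hm)
    exact (mul_le_mul_of_nonneg_left (this.trans hlogN) (abs_nonneg θ)).trans hθ
  refine step1.trans (step2.trans ?_)
  rw [← Real.exp_sum, Real.exp_le_exp]
  have e : ∑ m ∈ range N, -(1 / ((m : ℝ) + 1) * (1 - 1 / ((m : ℝ) + 1)) *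
        (θ * Real.log m) ^ 2) / 5 = -(θ ^ 2 * VV N / 5) := by
    unfold VV
    rw [mul_sum, sum_div, ← sum_neg_distrib]
    exact sum_congr rfl fun m _ => by ring
  rw [e, neg_le_neg_iff]
  have hV := (VV_bounds hN1).1
  set y := Real.log N
  have hy : ℓ / 2 ≤ y := by linarith
  have h1 : ℓ / 12 ≤ y / 3 - 4 := by linarith
  have h2 : (ℓ / 2) ^ 2 * (ℓ / 12) ≤ y ^ 2 * (y / 3 - 4) := by gcongr
  have h3 : ℓ ^ 3 / 48 ≤ VV N := by nlinarith
  calc θ ^ 2 * ℓ ^ 3 / 240 = θ ^ 2 * (ℓ ^ 3 / 48) / 5 := by ring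
    _ ≤ _ := by gcongr

/-- Comparison of the characteristic function with the exponential of its first three
cumulants. -/
lemma norm_psi_sub_le {n : ℕ} {θ : ℝ} (hθ : |θ| * Real.log n ≤ 1) :
    ‖psi n θ - Complex.exp (((-(θ ^ 2 * VV n / 2) : ℝ) : ℂ) -
      ((θ ^ 3 * KK n / 6 : ℝ) : ℂ) * Complex.I)‖ ≤ θ ^ 4 * Real.log n ^ 4 * HH n := by
  have he : Complex.exp (((-(θ ^ 2 * VV n / 2) : ℝ) : ℂ) -
      ((θ ^ 3 * KK n / 6 : ℝ) : ℂ) * Complex.I) =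
      ∏ m ∈ range n, ebd (1 / ((m : ℝ) + 1)) (θ * Real.log m) := by
    unfold ebd
    rw [← Complex.exp_sum, sum_sub_distrib, ← sum_mul, ← Complex.ofReal_sum,
      ← Complex.ofReal_sum]
    congr 4
    · unfold VV
      rw [mul_sum, sum_div, ← sum_neg_distrib]
      exact sum_congr rfl fun m _ => by ring
    · unfold KK
      rw [mul_sum, sum_div]
      exact sum_congr rfl fun m _ => by ring
  rw [he]
  unfold psi
  refine (norm_prod_sub_prod_le _ _
    (fun m => norm_fac_le_one (inv_succ_mem m).1 (inv_succ_mem m).2 _)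
    (fun m => norm_ebd_le_one (inv_succ_mem m).1 (inv_succ_mem m).2 _) n).trans ?_
  unfold HH
  rw [mul_sum]
  refine sum_le_sum fun m hm => ?_
  have h0 := Real.log_natCast_nonneg m
  have h1 := log_le_log_of_lt (mem_range.1 hm)
  have h2 : |θ * Real.log m| ≤ 1 := by
    rw [abs_mul, abs_of_nonneg h0]
    exact (mul_le_mul_of_nonneg_left h1 (abs_nonneg θ)).trans hθ
  refine (norm_fac_sub_ebd (inv_succ_mem m).1 (inv_succ_mem m).2 h2).trans ?_
  have h3 : Real.log m ^ 4 ≤ Real.log n ^ 4 := pow_le_pow_left₀ h0 h1 4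
  have h4 : (θ * Real.log m) ^ 4 ≤ θ ^ 4 * Real.log n ^ 4 := by
    rw [mul_pow]; gcongr
  have h5 := mul_le_mul_of_nonneg_left h4 (inv_succ_mem m).1
  linarith

end ErdosTuran

namespace ErdosTuran
open Finset MeasureTheory

/-! ### Expansion of the distribution function of the sum of logarithms

The size of `n` is measured by `u` with `log n = u ^ 36`, so that every scale that occurs is
a natural power of `u`. -/

lemma exists_gd_decay (k : ℕ) : ∃ C : ℝ, 0 < C ∧ ∀ y : ℝ, |y| ^ k * gd y ≤ C := by
  refine ⟨1 + 2 ^ k * k.factorial, by positivity, fun y => ?_⟩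
  have hg : gd y = (Real.exp (y ^ 2 / 2))⁻¹ := by
    unfold gd; rw [← Real.exp_neg]; congr 1; ring
  have h1 := Real.pow_div_factorial_le_exp (y ^ 2 / 2) (by positivity) k
  rw [div_le_iff₀ (by positivity), div_pow, div_le_iff₀ (by positivity)] at h1
  have h2 : |y| ^ k ≤ 1 + (y ^ 2) ^ k := by
    rw [← sq_abs y, ← pow_mul, mul_comm 2 k, pow_mul]
    nlinarith [sq_nonneg (|y| ^ k - 1), pow_nonneg (abs_nonneg y) k]
  have he := Real.exp_pos (y ^ 2 / 2)
  have he1 : 1 ≤ Real.exp (y ^ 2 / 2) := Real.one_le_exp (by positivity)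
  rw [hg, ← div_eq_mul_inv, div_le_iff₀ he]
  nlinarith

lemma exists_exp_decay (k : ℕ) :
    ∃ C : ℝ, 0 < C ∧ ∀ y : ℝ, |y| ^ k * Real.exp (-(|y| / 480)) ≤ C := by
  refine ⟨480 ^ k * k.factorial, by positivity, fun y => ?_⟩
  have h1 := Real.pow_div_factorial_le_exp (|y| / 480) (by positivity) k
  rw [div_le_iff₀ (by positivity), div_pow, div_le_iff₀ (by positivity)] at h1
  rw [Real.exp_neg, ← div_eq_mul_inv, div_le_iff₀ (Real.exp_pos _)]
  linarith

lemma sqrt_three_bounds : 1 ≤ Real.sqrt 3 ∧ Real.sqrt 3 ≤ 2 ∧ Real.sqrt 3 ^ 2 = 3 := by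
  refine ⟨?_, ?_, Real.sq_sqrt (by norm_num)⟩
  · rw [Real.one_le_sqrt]; norm_num
  · rw [Real.sqrt_le_left (by norm_num)]; norm_num

/-- The two-term approximation to the characteristic function. -/
noncomputable def gapx (ρ s : ℝ) : ℂ := (gd s : ℂ) * (1 - (ρ * s ^ 3 : ℝ) * Complex.I)

lemma norm_gapx_le {ρ : ℝ} (h0 : 0 ≤ ρ) (h1 : ρ ≤ 1) (s : ℝ) :
    ‖gapx ρ s‖ ≤ gd s * (1 + |s| ^ 3) := by
  unfold gapx
  rw [norm_mul, Complex.norm_real, Real.norm_eq_abs, abs_of_pos (gd_pos s)]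
  refine mul_le_mul_of_nonneg_left ?_ (gd_pos s).le
  refine (norm_sub_le _ _).trans ?_
  rw [norm_one, norm_mul, Complex.norm_I, mul_one, Complex.norm_real, Real.norm_eq_abs, abs_mul,
    abs_of_nonneg h0, abs_pow]
  have := mul_le_of_le_one_left (pow_nonneg (abs_nonneg s) 3) h1
  linarith

/-- The approximation on the central range `|s| ≤ u²`. -/
lemma psi_small {n : ℕ} {u s : ℝ} (hn : 1 ≤ n) (hu : 2 ≤ u) (hL : Real.log n = u ^ 36)
    (hs : |s| ≤ u ^ 2) :
    ‖psi n (Real.sqrt 3 * s / u ^ 54) - gapx (Real.sqrt 3 / 8 / u ^ 18) s‖ ≤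
      |s| * (33 / u ^ 26) := by
  obtain ⟨hr1, hr2, hr3⟩ := sqrt_three_bounds
  set r := Real.sqrt 3
  have hu0 : 0 < u := by linarith
  have hu1 : 1 ≤ u := by linarith
  set θ := r * s / u ^ 54 with hθ
  set ρ := r / 8 / u ^ 18 with hρ
  set t := |s| with ht
  have ht0 : 0 ≤ t := abs_nonneg s
  have hst : s ^ 2 = t ^ 2 := (sq_abs s).symm
  have hθabs : |θ| = r * t / u ^ 54 := by
    rw [hθ, abs_div, abs_mul, abs_of_pos (by linarith : 0 < r),
      abs_of_pos (by positivity : 0 < u ^ 54)]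
  have hθL : |θ| * Real.log n ≤ 1 := by
    rw [hθabs, hL]
    have : r * t / u ^ 54 * u ^ 36 = r * t / u ^ 18 := by field_simp
    rw [this, div_le_one (by positivity)]
    calc r * t ≤ u * u ^ 2 := by gcongr; linarith
      _ = u ^ 3 := by ring
      _ ≤ u ^ 18 := pow_le_pow_right₀ hu1 (by norm_num)
  -- third order cumulant approximation
  have hA := norm_psi_sub_le hθL
  set z₁ : ℂ := ((-(θ ^ 2 * VV n / 2) : ℝ) : ℂ) - ((θ ^ 3 * KK n / 6 : ℝ) : ℂ) * Complex.I
    with hz₁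
  set z₀ : ℂ := ((-(s ^ 2 / 2) : ℝ) : ℂ) - ((ρ * s ^ 3 : ℝ) : ℂ) * Complex.I with hz₀
  have hA' : ‖psi n θ - Complex.exp z₁‖ ≤ 18 * t ^ 4 / u ^ 36 := by
    refine hA.trans ?_
    have hH : HH n ≤ 2 * u ^ 36 := by
      have h1 := HH_le n
      have h2 : (1 : ℝ) ≤ u ^ 36 := one_le_pow₀ hu1
      rw [hL] at h1
      linarith
    have e1 : θ ^ 4 * Real.log n ^ 4 = 9 * t ^ 4 / u ^ 72 := by
      rw [hL, hθ, div_pow, mul_pow]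
      have : r ^ 4 = 9 := by rw [show r ^ 4 = (r ^ 2) ^ 2 by ring, hr3]; norm_num
      have h4 : s ^ 4 = t ^ 4 := by rw [show s ^ 4 = (s ^ 2) ^ 2 by ring, hst]; ring
      rw [this, h4]
      field_simp
    rw [e1]
    calc 9 * t ^ 4 / u ^ 72 * HH n ≤ 9 * t ^ 4 / u ^ 72 * (2 * u ^ 36) := by gcongr
      _ = 18 * t ^ 4 / u ^ 36 := by field_simp; ring
  -- the first three cumulants
  have hV := VV_bounds hn
  have hK := KK_bounds hn
  rw [hL] at hV hK
  have hθ2 : θ ^ 2 = 3 * s ^ 2 / u ^ 108 := by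
    rw [hθ, div_pow, mul_pow, hr3]; ring
  have hθ3 : θ ^ 3 = 3 * r * s ^ 3 / u ^ 162 := by
    rw [hθ, div_pow, mul_pow, show r ^ 3 = r ^ 2 * r by ring, hr3]; ring
  have hB : ‖z₁ - z₀‖ ≤ 6 * t ^ 2 / u ^ 36 + 8 * t ^ 3 / u ^ 36 := by
    have e : z₁ - z₀ = ((-(θ ^ 2 * VV n - s ^ 2) / 2 : ℝ) : ℂ) -
        ((θ ^ 3 * KK n / 6 - ρ * s ^ 3 : ℝ) : ℂ) * Complex.I := by
      rw [hz₁, hz₀]; push_cast; ring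
    rw [e]
    refine (norm_sub_le _ _).trans (add_le_add ?_ ?_)
    · rw [Complex.norm_real, Real.norm_eq_abs]
      have e2 : -(θ ^ 2 * VV n - s ^ 2) / 2 =
          3 * s ^ 2 / u ^ 108 / 2 * ((u ^ 36) ^ 3 / 3 - VV n) := by
        rw [hθ2]; field_simp; ring
      have h3 : 0 ≤ (u ^ 36) ^ 3 / 3 - VV n := by linarith [hV.2]
      rw [e2, abs_of_nonneg (by positivity), hst]
      calc 3 * t ^ 2 / u ^ 108 / 2 * ((u ^ 36) ^ 3 / 3 - VV n)
          ≤ 3 * t ^ 2 / u ^ 108 / 2 * (4 * (u ^ 36) ^ 2) := by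
            gcongr; linarith [hV.1]
        _ = 6 * t ^ 2 / u ^ 36 := by field_simp; ring
    · rw [norm_mul, Complex.norm_I, mul_one, Complex.norm_real, Real.norm_eq_abs]
      have e2 : θ ^ 3 * KK n / 6 - ρ * s ^ 3 =
          -(r * s ^ 3 / u ^ 162 / 2 * ((u ^ 36) ^ 4 / 4 - KK n)) := by
        rw [hθ3, hρ]; field_simp; ring
      have h3 : 0 ≤ (u ^ 36) ^ 4 / 4 - KK n := by linarith [hK.2]
      rw [e2, abs_neg, abs_mul, abs_of_nonneg h3, abs_div, abs_div, abs_mul, abs_pow,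
        abs_of_pos (by linarith : 0 < r), abs_of_pos (by positivity : 0 < u ^ 162),
        abs_of_pos (by norm_num : (0 : ℝ) < 2), ← ht]
      calc r * t ^ 3 / u ^ 162 / 2 * ((u ^ 36) ^ 4 / 4 - KK n)
          ≤ 2 * t ^ 3 / u ^ 162 / 2 * (8 * (u ^ 36) ^ 3) := by
            gcongr; linarith [hK.1]
        _ = 8 * t ^ 3 / u ^ 54 := by field_simp
        _ ≤ 8 * t ^ 3 / u ^ 36 := by
            gcongr
            norm_num
  have hVn : 0 ≤ VV n := sum_nonneg fun m _ => by
    have := inv_succ_mem m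
    have h2 : 0 ≤ 1 - 1 / ((m : ℝ) + 1) := by linarith [this.2]
    exact mul_nonneg (mul_nonneg this.1 h2) (sq_nonneg _)
  have hB' : ‖Complex.exp z₁ - Complex.exp z₀‖ ≤ 6 * t ^ 2 / u ^ 36 + 8 * t ^ 3 / u ^ 36 := by
    refine (norm_exp_sub_exp_le ?_ ?_).trans hB
    · rw [hz₁, Complex.sub_re, Complex.ofReal_re, Complex.re_ofReal_mul, Complex.I_re]
      have : 0 ≤ θ ^ 2 * VV n / 2 := by positivity
      linarith
    · rw [hz₀, Complex.sub_re, Complex.ofReal_re, Complex.re_ofReal_mul, Complex.I_re]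
      have : 0 ≤ s ^ 2 / 2 := by positivity
      linarith
  -- linearisation of the oscillating factor
  have hρs : |ρ * s ^ 3| ≤ t ^ 3 / u ^ 18 := by
    rw [abs_mul, abs_pow, ← ht, hρ, abs_of_nonneg (by positivity)]
    calc r / 8 / u ^ 18 * t ^ 3 ≤ 1 / u ^ 18 * t ^ 3 := by gcongr; linarith
      _ = _ := by ring
  have hC : ‖Complex.exp z₀ - gapx ρ s‖ ≤ t ^ 6 / u ^ 36 := by
    have e : Complex.exp z₀ - gapx ρ s = (gd s : ℂ) *
        (Complex.exp (-((ρ * s ^ 3 : ℝ) * Complex.I)) - 1 - -((ρ * s ^ 3 : ℝ) * Complex.I)) := by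
      have : Complex.exp z₀ = (gd s : ℂ) * Complex.exp (-((ρ * s ^ 3 : ℝ) * Complex.I)) := by
        unfold gd
        rw [Complex.ofReal_exp, ← Complex.exp_add, hz₀]
        congr 1
        push_cast
        ring
      rw [this]
      unfold gapx
      ring
    have hn2 : ‖-(((ρ * s ^ 3 : ℝ) : ℂ) * Complex.I)‖ = |ρ * s ^ 3| := by
      rw [norm_neg, norm_mul, Complex.norm_I, mul_one, Complex.norm_real, Real.norm_eq_abs]
    rw [e, norm_mul, Complex.norm_real, Real.norm_eq_abs, abs_of_pos (gd_pos s)]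
    refine (mul_le_of_le_one_left (norm_nonneg _) (gd_le_one s)).trans ?_
    refine (Complex.norm_exp_sub_one_sub_id_le ?_).trans ?_
    · rw [hn2]
      refine hρs.trans ?_
      rw [div_le_one (by positivity)]
      calc t ^ 3 ≤ (u ^ 2) ^ 3 := by gcongr
        _ = u ^ 6 := by ring
        _ ≤ u ^ 18 := pow_le_pow_right₀ hu1 (by norm_num)
    · rw [hn2]
      calc |ρ * s ^ 3| ^ 2 ≤ (t ^ 3 / u ^ 18) ^ 2 := pow_le_pow_left₀ (abs_nonneg _) hρs 2
        _ = _ := by ring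
  have htot : ‖psi n θ - gapx ρ s‖ ≤ 18 * t ^ 4 / u ^ 36 +
      (6 * t ^ 2 / u ^ 36 + 8 * t ^ 3 / u ^ 36) + t ^ 6 / u ^ 36 := by
    have : psi n θ - gapx ρ s = (psi n θ - Complex.exp z₁) +
        (Complex.exp z₁ - Complex.exp z₀) + (Complex.exp z₀ - gapx ρ s) := by ring
    rw [this]
    exact (norm_add_le _ _).trans (add_le_add ((norm_add_le _ _).trans (add_le_add hA' hB')) hC)
  refine htot.trans ?_
  have p1 : t ≤ u ^ 10 := hs.trans (pow_le_pow_right₀ hu1 (by norm_num))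
  have p2 : t ^ 2 ≤ u ^ 10 := by
    calc t ^ 2 ≤ (u ^ 2) ^ 2 := by gcongr
      _ = u ^ 4 := by ring
      _ ≤ _ := pow_le_pow_right₀ hu1 (by norm_num)
  have p3 : t ^ 3 ≤ u ^ 10 := by
    calc t ^ 3 ≤ (u ^ 2) ^ 3 := by gcongr
      _ = u ^ 6 := by ring
      _ ≤ _ := pow_le_pow_right₀ hu1 (by norm_num)
  have p5 : t ^ 5 ≤ u ^ 10 := by
    calc t ^ 5 ≤ (u ^ 2) ^ 5 := by gcongr
      _ = u ^ 10 := by ring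
  calc _ = t * ((18 * t ^ 3 + 6 * t + 8 * t ^ 2 + t ^ 5) / u ^ 36) := by ring
    _ ≤ t * (33 * u ^ 10 / u ^ 36) := by gcongr; linarith
    _ = _ := by field_simp

/-- Decay of the characteristic function on the intermediate range `u² ≤ |s| ≤ u²⁷`. -/
lemma psi_mid {n : ℕ} {u s : ℝ} (hn : 1 ≤ n) (hu : 2 ≤ u) (hL : Real.log n = u ^ 36)
    (hs1 : 1 ≤ |s|) (hs : |s| ≤ u ^ 27) :
    ‖psi n (Real.sqrt 3 * s / u ^ 54)‖ ≤ Real.exp (-(|s| / 480)) := by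
  obtain ⟨hr1, hr2, hr3⟩ := sqrt_three_bounds
  set r := Real.sqrt 3
  have hu0 : 0 < u := by linarith
  have hu1 : 1 ≤ u := by linarith
  set θ := r * s / u ^ 54 with hθ
  set t := |s| with ht
  have hst : s ^ 2 = t ^ 2 := (sq_abs s).symm
  have ht0 : 0 < t := by linarith
  have hθabs : |θ| = r * t / u ^ 54 := by
    rw [hθ, abs_div, abs_mul, abs_of_pos (by linarith : 0 < r),
      abs_of_pos (by positivity : 0 < u ^ 54)]
  have hθ2 : θ ^ 2 = 3 * t ^ 2 / u ^ 108 := by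
    rw [hθ, div_pow, mul_pow, hr3, hst]; ring
  rcases le_total (r * t) (u ^ 18) with h | h
  · have h48 : (48 : ℝ) ≤ u ^ 36 := by
      calc (48 : ℝ) ≤ 2 ^ 36 := by norm_num
        _ ≤ u ^ 36 := by gcongr
    refine (norm_psi_le_exp h48 hn hL.ge ?_).trans ?_
    · rw [hθabs]
      have : r * t / u ^ 54 * u ^ 36 = r * t / u ^ 18 := by field_simp
      rw [this, div_le_one (by positivity)]
      exact h
    · rw [Real.exp_le_exp, neg_le_neg_iff, hθ2]
      have : 3 * t ^ 2 / u ^ 108 * (u ^ 36) ^ 3 / 240 = t ^ 2 / 80 := by field_simp; ring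
      rw [this]
      nlinarith
  · set ℓ := u ^ 54 / (r * t) with hℓ
    have hrt : 0 < r * t := by positivity
    have hℓ2 : u ^ 27 / 2 ≤ ℓ := by
      rw [hℓ, div_le_div_iff₀ (by norm_num) hrt]
      calc u ^ 27 * (r * t) ≤ u ^ 27 * (2 * u ^ 27) := by gcongr
        _ = _ := by ring
    have h48 : (48 : ℝ) ≤ ℓ := by
      have : (2 : ℝ) ^ 27 ≤ u ^ 27 := by gcongr
      norm_num at this
      linarith
    refine (norm_psi_le_exp h48 hn ?_ ?_).trans ?_
    · rw [hL, hℓ, div_le_iff₀ hrt]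
      calc u ^ 54 = u ^ 36 * u ^ 18 := by ring
        _ ≤ _ := by gcongr
    · rw [hθabs, hℓ]
      refine le_of_eq ?_
      field_simp
    · rw [Real.exp_le_exp, neg_le_neg_iff]
      have h1 : θ ^ 2 * ℓ ^ 3 = ℓ := by
        rw [hθ2, hℓ, ← hr3]; field_simp
      rw [h1]
      have : t / 2 ≤ ℓ := by linarith
      linarith

end ErdosTuran

namespace ErdosTuran
open Finset MeasureTheory

lemma one_sub_gd_le (y : ℝ) : |gd y - 1| ≤ y ^ 2 := by
  have h1 := gd_le_one y
  have h2 := Real.add_one_le_exp (-y ^ 2 / 2)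
  have h3 : gd y = Real.exp (-y ^ 2 / 2) := rfl
  rw [abs_sub_comm, abs_of_nonneg (by linarith), h3]
  nlinarith [sq_nonneg y]

/-- The integrable majorant used in the smoothing inequality. -/
noncomputable def majorant (C u s : ℝ) : ℝ :=
  C / u ^ 24 * (1 + s ^ 2)⁻¹ + Set.indicator (Set.Icc (-u ^ 2) (u ^ 2)) (fun _ => 33 / u ^ 26) s

lemma integrable_majorant (C u : ℝ) : Integrable (majorant C u) := by
  refine (integrable_inv_one_add_sq.const_mul _).add ?_
  rw [integrable_indicator_iff measurableSet_Icc]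
  exact integrableOn_const (by simp)

lemma integral_majorant {u : ℝ} (hu : 0 < u) (C : ℝ) :
    ∫ s, majorant C u s = (C * Real.pi + 66) / u ^ 24 := by
  unfold majorant
  rw [integral_add (integrable_inv_one_add_sq.const_mul _)
    (by rw [integrable_indicator_iff measurableSet_Icc]; exact integrableOn_const (by simp)),
    integral_const_mul, integral_univ_inv_one_add_sq, integral_indicator measurableSet_Icc,
    setIntegral_const]
  have : (0 : ℝ) ≤ u ^ 2 - -u ^ 2 := by nlinarith
  rw [Real.volume_real_Icc_of_le (by nlinarith), smul_eq_mul]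
  field_simp
  ring

lemma chf_bound : ∃ C : ℝ, 0 < C ∧ ∀ (n : ℕ) (u : ℝ), 1 ≤ n → 2 ≤ u → Real.log n = u ^ 36 →
    ∀ s : ℝ, s ≠ 0 → ‖(gd ((1 / u ^ 24) * s) : ℂ) * psi n (Real.sqrt 3 * s / u ^ 54) -
      gapx (Real.sqrt 3 / 8 / u ^ 18) s‖ ≤ |s| * majorant C u s := by
  obtain ⟨D₁, hD₁, d₁⟩ := exists_gd_decay 1
  obtain ⟨D₃, hD₃, d₃⟩ := exists_gd_decay 3
  obtain ⟨D₄, hD₄, d₄⟩ := exists_gd_decay 4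
  obtain ⟨D₆, hD₆, d₆⟩ := exists_gd_decay 6
  obtain ⟨D, hD, d⟩ := exists_gd_decay 17
  obtain ⟨E, hE, e⟩ := exists_exp_decay 14
  obtain ⟨F, hF, f⟩ := exists_gd_decay 26
  refine ⟨D₁ + D₃ + D₄ + D₆ + 4 * D + 2 * E + 2 * F, by positivity, ?_⟩
  intro n u hn hu hL s hs
  obtain ⟨hr1, hr2, hr3⟩ := sqrt_three_bounds
  have hu0 : 0 < u := by linarith
  have hu1 : 1 ≤ u := by linarith
  have ht0 : 0 < |s| := abs_pos.2 hs
  set ψ := psi n (Real.sqrt 3 * s / u ^ 54) with hψ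
  set ρ := Real.sqrt 3 / 8 / u ^ 18 with hρ
  have hρ0 : 0 ≤ ρ := by positivity
  have hρ1 : ρ ≤ 1 := by
    rw [hρ, div_le_one (by positivity)]
    have : (1 : ℝ) ≤ u ^ 18 := one_le_pow₀ hu1
    linarith
  have hg := norm_gapx_le hρ0 hρ1 s
  have hst : s ^ 2 = |s| ^ 2 := (sq_abs s).symm
  have hgp := gd_pos s
  have hgτ : ‖(gd ((1 / u ^ 24) * s) : ℂ)‖ = gd ((1 / u ^ 24) * s) := by
    rw [Complex.norm_real, Real.norm_eq_abs, abs_of_pos (gd_pos _)]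
  unfold majorant
  rw [hst]
  rcases le_or_gt |s| (u ^ 2) with h | h
  · have hmem : s ∈ Set.Icc (-u ^ 2) (u ^ 2) := abs_le.1 h
    rw [Set.indicator_of_mem hmem, mul_add]
    have e1 : (gd ((1 / u ^ 24) * s) : ℂ) * ψ - gapx ρ s =
        ((gd ((1 / u ^ 24) * s) - 1 : ℝ) : ℂ) * gapx ρ s +
          (gd ((1 / u ^ 24) * s) : ℂ) * (ψ - gapx ρ s) := by push_cast; ring
    rw [e1]
    refine (norm_add_le _ _).trans (add_le_add ?_ ?_)
    · rw [norm_mul, Complex.norm_real, Real.norm_eq_abs]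
      have h1 := one_sub_gd_le ((1 / u ^ 24) * s)
      have h2 : ((1 / u ^ 24) * s) ^ 2 ≤ 1 / u ^ 24 * |s| ^ 2 := by
        rw [mul_pow, hst]
        have : (1 / u ^ 24) ^ 2 ≤ 1 / u ^ 24 := by
          have h3 : 1 / u ^ 24 ≤ 1 := by
            rw [div_le_one (by positivity)]; exact one_le_pow₀ hu1
          have h4 : 0 ≤ 1 / u ^ 24 := by positivity
          nlinarith
        gcongr
      set t := |s| with ht
      calc _ ≤ 1 / u ^ 24 * t ^ 2 * (gd s * (1 + t ^ 3)) :=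
            mul_le_mul (h1.trans h2) hg (norm_nonneg _) (by positivity)
        _ = t * (1 / u ^ 24 * (1 + t ^ 2)⁻¹ * ((t + t ^ 4) * (1 + t ^ 2) * gd s)) := by
            field_simp
        _ ≤ t * (1 / u ^ 24 * (1 + t ^ 2)⁻¹ *
              (D₁ + D₃ + D₄ + D₆ + 4 * D + 2 * E + 2 * F)) := by
            gcongr
            have a1 := d₁ s
            have a3 := d₃ s
            have a4 := d₄ s
            have a6 := d₆ s
            rw [← ht] at a1 a3 a4 a6
            nlinarith
        _ = _ := by ring
    · rw [norm_mul, hgτ]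
      exact (mul_le_of_le_one_left (norm_nonneg _) (gd_le_one _)).trans (psi_small hn hu hL h)
  · have hnm : s ∉ Set.Icc (-u ^ 2) (u ^ 2) := fun hm => absurd (abs_le.2 hm) (not_le.2 h)
    rw [Set.indicator_of_notMem hnm, add_zero]
    have hs1 : 1 ≤ |s| := (one_le_pow₀ hu1).trans h.le
    have hpsi : gd ((1 / u ^ 24) * s) * ‖ψ‖ ≤
        |s| * ((2 * E + 2 * F) / u ^ 24 * (1 + |s| ^ 2)⁻¹) := by
      rcases le_total |s| (u ^ 27) with h27 | h27
      · have hm := psi_mid hn hu hL hs1 h27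
        have he := e s
        set t := |s| with ht
        have h12 : u ^ 24 ≤ t ^ 12 := by
          calc u ^ 24 = (u ^ 2) ^ 12 := by ring
            _ ≤ t ^ 12 := by gcongr
        calc gd ((1 / u ^ 24) * s) * ‖ψ‖ ≤ 1 * Real.exp (-(t / 480)) :=
              mul_le_mul (gd_le_one _) hm (norm_nonneg _) zero_le_one
          _ = (u ^ 24 * (1 + t ^ 2) * Real.exp (-(t / 480))) / u ^ 24 * (1 + t ^ 2)⁻¹ := by
              field_simp
          _ ≤ (2 * E) / u ^ 24 * (1 + t ^ 2)⁻¹ := by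
              refine mul_le_mul_of_nonneg_right (div_le_div_of_nonneg_right ?_ (by positivity))
                (by positivity)
              calc u ^ 24 * (1 + t ^ 2) * Real.exp (-(t / 480))
                  ≤ t ^ 12 * (t ^ 2 + t ^ 2) * Real.exp (-(t / 480)) := by
                    gcongr; exact one_le_pow₀ hs1
                _ = 2 * (t ^ 14 * Real.exp (-(t / 480))) := by ring
                _ ≤ 2 * E := by linarith
          _ ≤ (2 * E + 2 * F) / u ^ 24 * (1 + t ^ 2)⁻¹ := by gcongr; linarith
          _ ≤ _ := le_mul_of_one_le_left (by positivity) hs1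
      · have hf := f ((1 / u ^ 24) * s)
        rw [abs_mul, abs_of_pos (by positivity : 0 < 1 / u ^ 24)] at hf
        have hg0 := gd_pos ((1 / u ^ 24) * s)
        set G := gd ((1 / u ^ 24) * s) with hG
        set t := |s| with ht
        have h24 : u ^ 648 ≤ t ^ 24 := by
          calc u ^ 648 = (u ^ 27) ^ 24 := by ring
            _ ≤ t ^ 24 := by gcongr
        have h2 : t ^ 26 * G ≤ F * u ^ 624 := by
          have : (1 / u ^ 24 * t) ^ 26 * G = t ^ 26 * G / u ^ 624 := by
            field_simp
          rwa [this, div_le_iff₀ (by positivity)] at hf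
        have h3 : u ^ 24 * (1 + t ^ 2) * G ≤ 2 * F := by
          have h4 : u ^ 24 * (1 + t ^ 2) * G * t ^ 24 ≤ 2 * F * t ^ 24 := by
            calc u ^ 24 * (1 + t ^ 2) * G * t ^ 24
                ≤ u ^ 24 * (t ^ 2 + t ^ 2) * G * t ^ 24 := by gcongr; exact one_le_pow₀ hs1
              _ = 2 * u ^ 24 * (t ^ 26 * G) := by ring
              _ ≤ 2 * u ^ 24 * (F * u ^ 624) := by gcongr
              _ = 2 * F * u ^ 648 := by ring
              _ ≤ _ := by gcongr
          exact le_of_mul_le_mul_right h4 (by positivity)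
        calc G * ‖ψ‖ ≤ G := mul_le_of_le_one_right hg0.le (norm_psi_le_one _ _)
          _ = (u ^ 24 * (1 + t ^ 2) * G) / u ^ 24 * (1 + t ^ 2)⁻¹ := by
              field_simp
          _ ≤ (2 * E + 2 * F) / u ^ 24 * (1 + t ^ 2)⁻¹ := by gcongr; linarith
          _ ≤ _ := le_mul_of_one_le_left (by positivity) hs1
    have hgx : ‖gapx ρ s‖ ≤ |s| * (4 * D / u ^ 24 * (1 + |s| ^ 2)⁻¹) := by
      have hd := d s
      set t := |s| with ht
      have h12 : u ^ 24 ≤ t ^ 12 := by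
        calc u ^ 24 = (u ^ 2) ^ 12 := by ring
          _ ≤ t ^ 12 := by gcongr
      calc ‖gapx ρ s‖ ≤ gd s * (1 + t ^ 3) := hg
        _ = (u ^ 24 * (1 + t ^ 2) * (gd s * (1 + t ^ 3))) / u ^ 24 * (1 + t ^ 2)⁻¹ := by
            field_simp
        _ ≤ (4 * D) / u ^ 24 * (1 + t ^ 2)⁻¹ := by
            refine mul_le_mul_of_nonneg_right (div_le_div_of_nonneg_right ?_ (by positivity))
                (by positivity)
            calc u ^ 24 * (1 + t ^ 2) * (gd s * (1 + t ^ 3))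
                ≤ t ^ 12 * (t ^ 2 + t ^ 2) * (gd s * (t ^ 3 + t ^ 3)) := by
                  gcongr
                  · exact one_le_pow₀ hs1
                  · exact one_le_pow₀ hs1
              _ = 4 * (t ^ 17 * gd s) := by ring
              _ ≤ 4 * D := by linarith
        _ ≤ _ := le_mul_of_one_le_left (by positivity) hs1
    refine (norm_sub_le _ _).trans ?_
    rw [norm_mul, hgτ]
    refine (add_le_add hpsi hgx).trans ?_
    rw [← mul_add, ← add_mul, ← add_div]
    refine mul_le_mul_of_nonneg_left (mul_le_mul_of_nonneg_right
      (div_le_div_of_nonneg_right ?_ (by positivity)) (by positivity)) ht0.le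
    linarith

/-- The Edgeworth expansion of `markSum`, with error `O((log n)^{-2/3})`. -/
lemma markSum_expansion : ∃ C : ℝ, 0 < C ∧ ∀ (n : ℕ) (u : ℝ), 1 ≤ n → 2 ≤ u →
    Real.log n = u ^ 36 → ∀ x : ℝ,
      |EE n (fun A => if (markSum A - EE n markSum) / ((Real.sqrt 3)⁻¹ * u ^ 54) < x
          then (1 : ℝ) else 0) - edge (Real.sqrt 3 / 8 / u ^ 18) x| ≤ C / u ^ 24 := by
  obtain ⟨C, hC, hb⟩ := chf_bound
  refine ⟨C * Real.pi + 66 + 96, by positivity, ?_⟩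
  intro n u hn hu hL x
  obtain ⟨hr1, hr2, hr3⟩ := sqrt_three_bounds
  have hu0 : 0 < u := by linarith
  have hu1 : 1 ≤ u := by linarith
  have hρ1 : Real.sqrt 3 / 8 / u ^ 18 ≤ 1 := by
    rw [div_le_one (by positivity)]
    have : (1 : ℝ) ≤ u ^ 18 := one_le_pow₀ hu1
    linarith
  have h := smoothing (range n).powerset (wt n)
    (fun A => (markSum A - EE n markSum) / ((Real.sqrt 3)⁻¹ * u ^ 54))
    (fun A _ => wt_nonneg n A) (sum_wt n) (by positivity) hρ1
    (by positivity : 0 < 1 / u ^ 24) (integrable_majorant C u) (fun s hs => by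
      have h1 := hb n u hn hu hL s hs
      have h2 : chf (range n).powerset (wt n)
          (fun A => (markSum A - EE n markSum) / ((Real.sqrt 3)⁻¹ * u ^ 54)) s =
          psi n (Real.sqrt 3 * s / u ^ 54) := by
        unfold psi chf
        rw [← chf_eq_prod]
        refine sum_congr rfl fun A _ => ?_
        rw [Complex.real_smul]
        congr 4
        have : Real.sqrt 3 ≠ 0 := by positivity
        field_simp
      rw [h2]
      exact h1) x
  rw [integral_majorant hu0] at h
  refine h.trans (le_of_eq ?_)
  ring

end ErdosTuran

namespace ErdosTuran
open Finset MeasureTheory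

/-! ### Passage from the sum of logarithms to the order -/

lemma EE_sub_mean_sq (n : ℕ) (f : Finset ℕ → ℝ) :
    EE n (fun A => (f A - EE n f) ^ 2) = EE n (fun A => f A ^ 2) - EE n f ^ 2 := by
  set c := EE n f with hc
  have h1 : EE n (fun A => (f A - c) ^ 2) =
      EE n (fun A => (f A ^ 2 + (-2 * c) * f A) + c ^ 2) :=
    EE_congr fun A _ => by ring
  rw [h1, EE_add, EE_add, EE_const, EE_const_mul]
  rw [← hc]
  ring

/-- Comparison of the distribution functions of a variable `T` and of `X`, when `T - X` is a
centred error with small variance minus a small nonnegative error. -/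
lemma compare_dist {n : ℕ} {T X d e : Finset ℕ → ℝ} {B η V W : ℝ} (hB : 0 < B) (hη : 0 < η)
    (hT : ∀ A ⊆ range n, T A = X A + d A - e A) (he : ∀ A ⊆ range n, 0 ≤ e A)
    (hV : EE n (fun A => d A ^ 2) - EE n d ^ 2 ≤ V) (hW : EE n e ≤ W) (hWη : W ≤ η * B)
    {φ : ℝ → ℝ} {K δ : ℝ} (hφ : ∀ x y, |φ x - φ y| ≤ K * |x - y|)
    (hX : ∀ x, |EE n (fun A => if (X A - EE n X) / B < x then (1 : ℝ) else 0) - φ x| ≤ δ)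
    (x : ℝ) :
    |EE n (fun A => if (T A - EE n T) / B < x then (1 : ℝ) else 0) - φ x| ≤
      δ + K * (2 * η) + V / (η * B) ^ 2 + W / (η * B) := by
  have hηB : 0 < η * B := mul_pos hη hB
  have hET : EE n T = EE n X + EE n d - EE n e := by
    rw [EE_congr hT, EE_sub, EE_add]
  have hEe : 0 ≤ EE n e := EE_nonneg he
  set bad : Finset ℕ → ℝ := fun A =>
    (1 / (η * B) ^ 2) * (d A - EE n d) ^ 2 + (1 / (η * B)) * e A with hbad
  have hbad0 : ∀ A ⊆ range n, 0 ≤ bad A := fun A hA => by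
    have := he A hA
    positivity
  have hEbad : EE n bad ≤ V / (η * B) ^ 2 + W / (η * B) := by
    rw [hbad, EE_add, EE_const_mul, EE_const_mul, EE_sub_mean_sq, one_div_mul_eq_div,
      one_div_mul_eq_div]
    gcongr
  -- off the bad event the two centred variables differ by at most `2ηB`
  have hgood : ∀ A ⊆ range n, bad A < 1 →
      |(T A - EE n T) / B - (X A - EE n X) / B| ≤ 2 * η := by
    intro A hA hlt
    have he0 := he A hA
    have h1 : (1 / (η * B) ^ 2) * (d A - EE n d) ^ 2 < 1 := by
      have : 0 ≤ (1 / (η * B)) * e A := by positivity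
      simp only [hbad] at hlt
      linarith
    have h2 : (1 / (η * B)) * e A < 1 := by
      have : 0 ≤ (1 / (η * B) ^ 2) * (d A - EE n d) ^ 2 := by positivity
      simp only [hbad] at hlt
      linarith
    rw [one_div_mul_eq_div, div_lt_one (by positivity)] at h1 h2
    have h3 := abs_lt_of_sq_lt_sq h1 hηB.le
    rw [← sub_div, abs_div, abs_of_pos hB, div_le_iff₀ hB, hT A hA, hET, abs_le]
    rw [abs_lt] at h3
    constructor <;> linarith [h3.1, h3.2]
  have hup : EE n (fun A => if (T A - EE n T) / B < x then (1 : ℝ) else 0) ≤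
      EE n (fun A => if (X A - EE n X) / B < x + 2 * η then (1 : ℝ) else 0) + EE n bad := by
    rw [← EE_add]
    refine EE_mono fun A hA => ?_
    have hb := hbad0 A hA
    rcases lt_or_ge (bad A) 1 with h | h
    · have hg := abs_le.1 (hgood A hA h)
      split_ifs with h1 h2
      · linarith
      · exact absurd (by linarith [hg.1]) h2
      · linarith
      · linarith
    · split_ifs <;> linarith
  have hlo : EE n (fun A => if (X A - EE n X) / B < x - 2 * η then (1 : ℝ) else 0) ≤
      EE n (fun A => if (T A - EE n T) / B < x then (1 : ℝ) else 0) + EE n bad := by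
    rw [← EE_add]
    refine EE_mono fun A hA => ?_
    have hb := hbad0 A hA
    rcases lt_or_ge (bad A) 1 with h | h
    · have hg := abs_le.1 (hgood A hA h)
      split_ifs with h1 h2
      · linarith
      · exact absurd (by linarith [hg.2]) h2
      · linarith
      · linarith
    · split_ifs <;> linarith
  have a1 := abs_le.1 (hX (x + 2 * η))
  have a2 := abs_le.1 (hX (x - 2 * η))
  have b1 := hφ (x + 2 * η) x
  have b2 := hφ (x - 2 * η) x
  rw [show x + 2 * η - x = 2 * η by ring, abs_of_pos (by positivity : 0 < 2 * η)] at b1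
  rw [show x - 2 * η - x = -(2 * η) by ring, abs_neg, abs_of_pos (by positivity : 0 < 2 * η)]
    at b2
  rw [abs_le] at b1 b2
  rw [abs_le]
  constructor <;> linarith [a1.1, a1.2, a2.1, a2.2, b1.1, b1.2, b2.1, b2.2]

/-- The expansion for the order, for large `n`. -/
lemma order_expansion_large : ∃ C : ℝ, 0 < C ∧ ∀ (n : ℕ) (u : ℝ), 1 ≤ n → 2 ≤ u →
    Real.log n = u ^ 36 → ∀ x : ℝ,
      |EE n (fun A => if (Real.log (parts n A).lcm - EE n (fun A => Real.log (parts n A).lcm)) /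
          ((Real.sqrt 3)⁻¹ * u ^ 54) < x then (1 : ℝ) else 0) -
        edge (Real.sqrt 3 / 8 / u ^ 18) x| ≤
      C * (Real.log (Real.log n) / Real.log n) ^ ((2 : ℝ) / 3) := by
  obtain ⟨C, hC, hexp⟩ := markSum_expansion
  refine ⟨C + 16 + 28800 + 16, by positivity, ?_⟩
  intro n u hn hu hL x
  obtain ⟨hr1, hr2, hr3⟩ := sqrt_three_bounds
  have hu0 : 0 < u := by linarith
  have hu1 : 1 ≤ u := by linarith
  set L := Real.log n with hLdef
  have hLbig : 2 ^ 36 ≤ L := by rw [hL]; gcongr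
  have hL1 : 1 ≤ L := by linarith [show (1 : ℝ) ≤ 2 ^ 36 by norm_num]
  have hL0 : 0 < L := by linarith
  set lam := Real.log L with hlam
  have hlam1 : 1 ≤ lam := by
    rw [hlam, Real.le_log_iff_exp_le hL0]
    have := Real.exp_one_lt_d9
    norm_num at hLbig
    linarith
  set η := (lam / L) ^ ((2 : ℝ) / 3) with hη
  have hη0 : 0 < η := Real.rpow_pos_of_pos (by positivity) _
  have hη3 : η ^ 3 = (lam / L) ^ 2 := by
    rw [hη, ← Real.rpow_natCast, ← Real.rpow_mul (by positivity), ← Real.rpow_natCast]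
    norm_num
  have hηu : 1 / u ^ 24 ≤ η := by
    have h1 : 1 / u ^ 24 = (1 / L) ^ ((2 : ℝ) / 3) := by
      rw [hL, ← one_div_pow, ← one_div_pow, ← Real.rpow_natCast, ← Real.rpow_natCast,
        ← Real.rpow_mul (by positivity)]
      norm_num
    rw [h1, hη]
    gcongr
  set B := (Real.sqrt 3)⁻¹ * u ^ 54 with hB
  have hB0 : 0 < B := by positivity
  have hB2 : B ^ 2 = L ^ 3 / 3 := by
    rw [hB, mul_pow, inv_pow, hr3, hL]; ring
  have hBlow : u ^ 54 / 2 ≤ B := by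
    rw [hB, div_eq_mul_inv, mul_comm]
    gcongr
  -- `Q` is just large enough for the mean of `excess`, at most `2 L (2 L)² / Q`, to be bounded.
  set Q := ⌈L ^ 3⌉₊ with hQ
  have hQL : L ^ 3 ≤ Q := Nat.le_ceil _
  have hL31 : 1 ≤ L ^ 3 := one_le_pow₀ hL1
  have hQ1 : 1 ≤ Q := by
    have : (1 : ℝ) ≤ Q := hL31.trans hQL
    exact_mod_cast this
  have hQ0 : (0 : ℝ) < Q := by exact_mod_cast hQ1
  have hlogQ0 : 0 ≤ Real.log Q := Real.log_natCast_nonneg Q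
  have hlogQ : Real.log Q ≤ 4 * lam := by
    have h1 : (Q : ℝ) ≤ L ^ 4 := by
      have h2 := (Nat.ceil_lt_add_one (by positivity : 0 ≤ L ^ 3)).le
      rw [← hQ] at h2
      have h3 : (2 : ℝ) ≤ L := by norm_num at hLbig; linarith
      calc (Q : ℝ) ≤ L ^ 3 + L ^ 3 := by linarith
        _ = 2 * L ^ 3 := by ring
        _ ≤ L * L ^ 3 := by gcongr
        _ = L ^ 4 := by ring
    calc Real.log Q ≤ Real.log (L ^ 4) := Real.log_le_log hQ0 h1
      _ = 4 * lam := by rw [Real.log_pow]; norm_num [hlam]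
  have hH : HH n ≤ 2 * L := by
    have := HH_le n
    linarith
  have hV : EE n (fun A => disc Q n A ^ 2) - EE n (disc Q n) ^ 2 ≤ 9600 * lam ^ 2 * L := by
    refine (variance_disc_le Q hQ1 n).trans ?_
    have h1 : Real.log Q ^ 2 ≤ (4 * lam) ^ 2 := pow_le_pow_left₀ hlogQ0 hlogQ 2
    have h2 : 1 ≤ lam ^ 2 := one_le_pow₀ hlam1
    have h3 : 32 + 6 * Real.log Q ^ 2 ≤ 128 * lam ^ 2 := by nlinarith
    have h4 : HH n + 1 ≤ 3 * L := by linarith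
    have h5 := HH_nonneg n
    calc 25 * (32 + 6 * Real.log Q ^ 2) * (HH n + 1) ≤ 25 * (128 * lam ^ 2) * (3 * L) := by
          gcongr
      _ = _ := by ring
  have hW : EE n (fun A => excess Q (parts n A)) ≤ 8 := by
    refine (EE_excess_le hQ1 hn).trans ?_
    rw [div_le_iff₀ hQ0, ← hLdef]
    have h5 := HH_nonneg n
    calc 2 * L * HH n ^ 2 ≤ 2 * L * (2 * L) ^ 2 := by gcongr
      _ = 8 * L ^ 3 := by ring
      _ ≤ 8 * Q := by gcongr
  have hηB : u ^ 30 / 2 ≤ η * B := by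
    calc u ^ 30 / 2 = 1 / u ^ 24 * (u ^ 54 / 2) := by field_simp
      _ ≤ η * B := by gcongr
  have hWη : 8 ≤ η * B := by
    have h1 : (2 : ℝ) ^ 30 ≤ u ^ 30 := by gcongr
    norm_num at h1
    linarith
  have hρ1 : Real.sqrt 3 / 8 / u ^ 18 ≤ 1 := by
    rw [div_le_one (by positivity)]
    have : (1 : ℝ) ≤ u ^ 18 := one_le_pow₀ hu1
    linarith
  have hmain := compare_dist (n := n) (T := fun A => Real.log (parts n A).lcm) (X := markSum)
    (d := disc Q n) (e := fun A => excess Q (parts n A)) hB0 hη0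
    (fun A hA => by unfold disc excess; ring)
    (fun A hA => excess_nonneg hA) hV hW hWη
    (edge_lipschitz (ρ := Real.sqrt 3 / 8 / u ^ 18) (by positivity) hρ1)
    (hexp n u hn hu hL) x
  refine hmain.trans ?_
  have t1 : C / u ^ 24 ≤ C * η := by
    calc C / u ^ 24 = C * (1 / u ^ 24) := by ring
      _ ≤ _ := by gcongr
  have t2 : 9600 * lam ^ 2 * L / (η * B) ^ 2 = 28800 * η := by
    have h1 : lam ^ 2 = η ^ 3 * L ^ 2 := by
      rw [hη3]; field_simp
    rw [mul_pow, hB2, h1]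
    field_simp
    norm_num
  have t3 : 8 / (η * B) ≤ 16 * η := by
    rw [div_le_iff₀ (by positivity)]
    have h1 : (1 : ℝ) ≤ u ^ 6 := one_le_pow₀ hu1
    calc (8 : ℝ) ≤ 8 * u ^ 6 := by linarith
      _ = 16 * (1 / u ^ 24) * (u ^ 30 / 2) := by field_simp; ring
      _ ≤ 16 * η * (η * B) := by gcongr
  rw [t2]
  linarith

lemma edge_abs_le {ρ : ℝ} (h0 : 0 ≤ ρ) (h1 : ρ ≤ 1) {P : ℝ} (hP0 : 0 ≤ P) (hP1 : P ≤ 1) (x : ℝ) :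
    |P - edge ρ x| ≤ 4 := by
  have h3 := cdf_nonneg x
  have h4 := cdf_le_one x
  have h5 : |ρ * ((Real.sqrt (2 * Real.pi))⁻¹ * ((1 - x ^ 2) * gd x))| ≤ 2 := by
    rw [abs_mul, abs_mul, abs_of_nonneg h0,
      abs_of_nonneg (inv_nonneg.2 (Real.sqrt_nonneg _))]
    have h7 := mul_le_mul h1 (mul_le_mul inv_sqrt_two_pi_le (abs_edge_term_le x)
      (abs_nonneg _) zero_le_one) (by positivity) zero_le_one
    linarith
  have h6 := abs_le.1 h5
  unfold edge
  rw [abs_le]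
  constructor <;> linarith [h6.1, h6.2]

lemma sub_edge (P L x : ℝ) :
    P - stdNormalCDF x - (3 : ℝ) ^ ((3 : ℝ) / 2) / (24 * Real.sqrt (2 * Real.pi)) *
      ((1 - x ^ 2) * Real.exp (-x ^ 2 / 2)) / Real.sqrt L =
    P - edge (Real.sqrt 3 / 8 / Real.sqrt L) x := by
  have h3 : (3 : ℝ) ^ ((3 : ℝ) / 2) = 3 * Real.sqrt 3 := by
    rw [show (3 : ℝ) / 2 = 1 + 1 / 2 by norm_num, Real.rpow_add (by norm_num), Real.rpow_one,
      Real.sqrt_eq_rpow]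
  unfold edge gd
  rw [h3, sub_sub]
  congr 2
  rw [div_eq_mul_inv _ (24 * Real.sqrt (2 * Real.pi)), mul_inv]
  ring

end ErdosTuran

open ErdosTuran

/-- Erdős–Turán law on `S_n` with an asymptotic expansion term and remainder
`O(((log log n)/(log n))^{2/3})`, for the uniform measure on `S_n`. -/
theorem erdos_turan_expansion_symmetric_group :
    ∃ C : ℝ, 0 < C ∧
      ∀ n : ℕ, 3 ≤ n →
        (let mean : ℝ :=
            (∑ σ : Equiv.Perm (Fin n), Real.log (orderOf σ)) / (n.factorial : ℝ);
         ∀ x : ℝ,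
          |(∑ σ : Equiv.Perm (Fin n),
                if (Real.log (orderOf σ) - mean) /
                    ((Real.sqrt 3)⁻¹ * Real.log n ^ ((3 : ℝ) / 2)) < x
                then (1 : ℝ) else 0) / (n.factorial : ℝ)
              - stdNormalCDF x
              - (3 : ℝ) ^ ((3 : ℝ) / 2) / (24 * Real.sqrt (2 * Real.pi)) *
                  ((1 - x ^ 2) * Real.exp (-x ^ 2 / 2)) / Real.sqrt (Real.log n)|
            ≤ C * (Real.log (Real.log n) / Real.log n) ^ ((2 : ℝ) / 3)) := by
  obtain ⟨C, hC, hmain⟩ := order_expansion_large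
  have hlog3 : 1 < Real.log 3 := by
    rw [Real.lt_log_iff_exp_lt (by norm_num)]
    linarith [Real.exp_one_lt_d9]
  have hll3 : 0 < Real.log (Real.log 3) := Real.log_pos hlog3
  set ε₀ : ℝ := (Real.log (Real.log 3) / 2 ^ 36) ^ ((2 : ℝ) / 3) with hε₀
  have hε₀pos : 0 < ε₀ := Real.rpow_pos_of_pos (by positivity) _
  refine ⟨C + 4 / ε₀, by positivity, ?_⟩
  intro n hn mean x
  have hL3 : Real.log 3 ≤ Real.log n :=
    Real.log_le_log (by norm_num) (by exact_mod_cast hn)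
  have hL1 : 1 < Real.log n := hlog3.trans_le hL3
  have hn1 : 1 ≤ n := by omega
  have hmean : mean = EE n (fun A => Real.log (parts n A).lcm) :=
    perm_average n (fun k => Real.log k)
  rw [sub_edge, perm_average n (fun k => if (Real.log k - mean) /
    ((Real.sqrt 3)⁻¹ * Real.log n ^ ((3 : ℝ) / 2)) < x then (1 : ℝ) else 0), hmean]
  have hrate : 0 ≤ (Real.log (Real.log n) / Real.log n) ^ ((2 : ℝ) / 3) :=
    Real.rpow_nonneg (div_nonneg (Real.log_nonneg hL1.le) (by linarith)) _
  rcases le_or_gt (2 ^ 36) (Real.log n) with hbig | hsmall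
  · set u : ℝ := Real.log n ^ ((1 : ℝ) / 36) with hu
    have hL0 : 0 ≤ Real.log n := by linarith
    have hu36 : Real.log n = u ^ 36 := by
      rw [hu, ← Real.rpow_natCast, ← Real.rpow_mul hL0]; norm_num
    have hu0 : 0 ≤ u := Real.rpow_nonneg hL0 _
    have hu2 : 2 ≤ u := by
      rw [hu36] at hbig
      exact le_of_pow_le_pow_left₀ (by norm_num) hu0 hbig
    have h54 : Real.log n ^ ((3 : ℝ) / 2) = u ^ 54 := by
      rw [hu, ← Real.rpow_natCast, ← Real.rpow_mul hL0]; norm_num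
    have h18 : Real.sqrt (Real.log n) = u ^ 18 := by
      rw [hu36, show u ^ 36 = (u ^ 18) ^ 2 by ring, Real.sqrt_sq (by positivity)]
    rw [h54, h18]
    refine (hmain n u hn1 hu2 hu36 x).trans ?_
    have : 0 ≤ 4 / ε₀ := by positivity
    exact mul_le_mul_of_nonneg_right (by linarith) hrate
  · -- bounded `n`: both sides are of order one
    have hs1 : 1 ≤ Real.sqrt (Real.log n) := Real.one_le_sqrt.2 hL1.le
    obtain ⟨hr1, hr2, hr3⟩ := sqrt_three_bounds
    have hρ1 : Real.sqrt 3 / 8 / Real.sqrt (Real.log n) ≤ 1 := by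
      rw [div_le_one (by positivity)]
      linarith
    refine (edge_abs_le (by positivity) hρ1 (EE_nonneg fun A _ => ?_) ?_ x).trans ?_
    · split_ifs <;> norm_num
    · refine (EE_mono (g := fun _ => 1) fun A _ => ?_).trans (EE_const n 1).le
      split_ifs <;> norm_num
    · have h1 : ε₀ ≤ (Real.log (Real.log n) / Real.log n) ^ ((2 : ℝ) / 3) := by
        rw [hε₀]
        have h2 : Real.log (Real.log 3) ≤ Real.log (Real.log n) :=
          Real.log_le_log (by linarith) hL3
        have h3 : 0 < Real.log n := by linarith
        refine Real.rpow_le_rpow (by positivity) ?_ (by norm_num)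
        exact div_le_div₀ (hll3.le.trans h2) h2 h3 hsmall.le
      calc (4 : ℝ) = 4 / ε₀ * ε₀ := by field_simp
        _ ≤ (C + 4 / ε₀) * (Real.log (Real.log n) / Real.log n) ^ ((2 : ℝ) / 3) := by
          gcongr
          linarith
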